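/- arXiv:math/0401246 — 2 statements merged into one kernel-verified Lean document; each statement's English description precedes it below -/
import Mathlib

section
/- Given modular data (I, 0, *, N, s), there exists a root of unity ξ ∈ ℂ (i.e. ξ^n = 1 for some integer n ≥ 1) such that every entry s_{ij} lies in the subfield ℚ(ξ) of ℂ; that is, all entries of the S-matrix lie in a cyclotomic field. -/
/-!
The entries of the S-matrix generate a finite abelian extension of `ℚ`, so they are cyclotomic by
the Kronecker–Weber theorem.

*The field of entries.* By the Verlinde formula each column `j` gives a character `χ_j(i) = s i j
/ s 0 j` of the fusion ring, with algebraic integer values, and `s ^ 2 = (δ_{i, j*})` gives `(s 0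
j) ^ 2 * ∑ k, χ_j(k) χ_j(k*) = 1`. An embedding `ψ` of the field of entries into `ℂ` permutes the
characters, so `ψ (s i j) = ± s i j'` with a sign and an index `j'` depending only on `j`. Hence
the field is normal over `ℚ`. Since `s` is symmetric, one of two automorphisms may be let act on
the row index and the other on the column index, so they commute.

*Kronecker–Weber.* Let `E` be an abelian number field, `m = 2 * |discr E| * [E : ℚ]`, `n = m ^ 3`
and `L = E(ζ)` with `ζ` a primitive `n`-th root of unity. It suffices to show `[L : ℚ] ≤ φ(n)`,
because then `L = ℚ(ζ)`. By Minkowski's discriminant bound the inertia groups, one for each prime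
number, generate the Galois group of `L`. They are trivial at primes not dividing `n`, so inertia
has to be bounded at each `p ∣ n`, in terms of `φ(p ^ e)` with `e = v_p(n)`.

* As the Galois group is abelian, a Frobenius commutes with inertia. This forces the tame
  character `σ ↦ σ π / π` to have values in the `(p - 1)`-st roots of unity, hence subgroups of
  inertia of order prime to `p` have at most `p - 1` elements.
* For odd `p`, inertia has no quotient `(ℤ/p)²`. In an extension with such an inertia group `I`
  and a uniformizer `π`, the Frobenius makes the coefficients of `(σ - 1) π` at `π ^ 2` satisfy an
  equation of degree `p`, so some `σ ≠ 1` acts trivially modulo `π ^ 3`. For `τ ∈ I` outside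
  `⟨σ⟩`, let `ϖ` be the `τ`-norm of `π`. Then `σ - 1` raises valuations on the fixed field of `τ`
  by at least twice that of `ϖ`, so the `σ`-trace of `ϖ`, which lies in the base, has the
  valuation of `p * ϖ`, and this is not a multiple of the ramification index `p ^ 2`. Therefore
  the `p`-part of inertia is cyclic, and by the choice of `n` its exponent divides `p ^ (e - 1)`,
  so inertia has at most `φ(p ^ e)` elements.
* For `p = 2` inertia is a `2`-group of exponent dividing `2 ^ (e - 2)`, but not cyclic in
  general. Let `H` be generated by complex conjugation and the inertia groups at odd primes. A
  subgroup of index two containing `H` cuts out a real quadratic field unramified outside `2`,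
  which is `ℚ(√2)`. So one element of inertia at `2` moving `√2` generates, together with `H`, the
  whole Galois group, and complex conjugation and this element contribute at most `2 * 2 ^ (e - 2)
  = φ(2 ^ e)`.
-/

open scoped BigOperators

/-- Modular data: a fusion ring given by structure constants `N` on a finite index set
`I` with unit index `one` and duality involution `star`, together with a complex
S-matrix `s` which is symmetric, compatible with duality, has nonvanishing first row,
squares to the duality permutation, satisfies the Verlinde formula, and whose column
ratios exhaust the characters of the fusion ring. -/
structure ModularData (I : Type) [Fintype I] [DecidableEq I] where
  one : I
  star : I → I
  N : I → I → I → ℕ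
  s : I → I → ℂ
  star_involutive : Function.Involutive star
  star_one : star one = one
  assoc : ∀ i j l m, ∑ k, N i j k * N k l m = ∑ k, N j l k * N i k m
  one_mul' : ∀ i j, N one i j = (if i = j then 1 else 0)
  mul_one' : ∀ i j, N i one j = (if i = j then 1 else 0)
  dual : ∀ i j, N i j one = (if j = star i then 1 else 0)
  s_symm : ∀ i j, s i j = s j i
  s_star : ∀ i j, s i j = s (star i) (star j)
  s_one_ne_zero : ∀ i, s one i ≠ 0
  s_mul_s : ∀ i j, ∑ k, s i k * s k j = (if j = star i then 1 else 0)
  verlinde : ∀ i j r, s one r * ∑ k, (N i j k : ℂ) * s k r = s i r * s j r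
  char_column : ∀ f : I → ℂ, f one = 1 →
    (∀ i j, f i * f j = ∑ k, (N i j k : ℂ) * f k) →
    ∃ j, ∀ i, f i = s i j / s one j

namespace KroneckerWeber

/-! ### Binomial expansions of norms and traces -/

section Iterates

variable {A : Type*}

@[to_additive]
lemma prod_iterate_eq_prod_div_iterate [CommGroup A] (f : A →* A) (n : ℕ) (x : A) :
    ∏ j ∈ Finset.range n, f^[j] x =
      ∏ k ∈ Finset.range n, (fun y => f y / y)^[k] x ^ n.choose (k + 1) := by
  induction n generalizing x with
  | zero => rfl
  | succ n ih =>
    have hdiv : ∀ k, (fun y => f y / y)^[k] (f x) =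
        (fun y => f y / y)^[k + 1] x * (fun y => f y / y)^[k] x := fun k => by
      induction k with
      | zero => simp
      | succ k ihk =>
        rw [Function.iterate_succ_apply', ihk, Function.iterate_succ_apply' _ (k + 1),
          Function.iterate_succ_apply' _ k, map_mul, mul_div_mul_comm]
    have hleft : ∏ j ∈ Finset.range (n + 1), f^[j] x = (∏ j ∈ Finset.range n, f^[j] (f x)) * x := by
      rw [Finset.prod_range_succ']; rfl
    rw [hleft, ih]
    simp only [hdiv, mul_pow, Finset.prod_mul_distrib, Nat.choose_succ_succ' n, pow_add]
    rw [Finset.prod_range_succ' (fun k => (fun y => f y / y)^[k] x ^ n.choose k),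
      Finset.prod_range_succ (fun k => (fun y => f y / y)^[k] x ^ n.choose (k + 1)),
      Nat.choose_succ_self]
    simp only [Nat.choose_zero_right, pow_one, pow_zero, mul_one, Function.iterate_zero, id_eq]
    exact mul_right_comm _ _ _

end Iterates

section Valuation

variable {K Γ₀ : Type*} [Field K] [LinearOrderedCommGroupWithZero Γ₀] (v : Valuation K Γ₀)

lemma map_add_pow_sub_pow_le {p : ℕ} (hp : p.Prime) {b c : K} (hb : v b ≤ 1) (hc : v c ≤ 1) :
    v ((b + c) ^ p - b ^ p) ≤ max (v c ^ p) (v p * v c) := by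
  obtain ⟨r, hr⟩ := exists_add_pow_prime_eq hp (⟨b, hb⟩ : v.integer) ⟨c, hc⟩
  have hr' : (b + c) ^ p - b ^ p = c ^ p + p * c * (b * r) := by
    have h := congrArg (Subtype.val : v.integer → K) hr
    push_cast at h
    rw [h]; ring
  rw [hr']
  refine (v.map_add _ _).trans (max_le_max (by rw [map_pow]) ?_)
  rw [map_mul, map_mul]
  exact mul_le_of_le_one_right' (by rw [map_mul]; exact mul_le_one' hb r.2)

/-- The group of `1`-units of level `γ`: the units of the valuation ring congruent to `1` up to `γ`.
For the discrete valuation `v` and `γ = exp (-n)` this is the `n`-th unit group `U⁽ⁿ⁾`. -/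
def oneUnits (γ : Γ₀) : Subgroup Kˣ where
  carrier := {u | v u = 1 ∧ v (u - 1) ≤ γ}
  one_mem' := by simp
  mul_mem' := by
    rintro a b ⟨ha, ha'⟩ ⟨hb, hb'⟩
    refine ⟨by rw [Units.val_mul, map_mul, ha, hb, one_mul], ?_⟩
    rw [Units.val_mul, show (a * b - 1 : K) = a * (b - 1) + (a - 1) by ring]
    exact v.map_add_le (by rwa [map_mul, ha, one_mul]) ha'
  inv_mem' := by
    rintro a ⟨ha, ha'⟩
    have hinv : v ((a⁻¹ : Kˣ) : K) = 1 := by rw [Units.val_inv_eq_inv_val, map_inv₀, ha, inv_one]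
    refine ⟨hinv, ?_⟩
    rw [show ((a⁻¹ : Kˣ) - 1 : K) = (a⁻¹ : Kˣ) * -(a - 1) by
        rw [neg_sub, mul_sub, Units.inv_mul, mul_one],
      map_mul, hinv, one_mul, Valuation.map_neg]
    exact ha'

variable {v}

lemma mem_oneUnits {γ : Γ₀} {u : Kˣ} : u ∈ oneUnits v γ ↔ v u = 1 ∧ v (u - 1) ≤ γ := Iff.rfl

lemma oneUnits_mono {γ δ : Γ₀} (h : γ ≤ δ) : oneUnits v γ ≤ oneUnits v δ :=
  fun _ hu => ⟨hu.1, hu.2.trans h⟩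

lemma pow_prime_mem_oneUnits {p : ℕ} (hp : p.Prime) {γ : Γ₀} {u : Kˣ} (hu : u ∈ oneUnits v γ) :
    u ^ p ∈ oneUnits v (max (γ ^ p) (v p * γ)) := by
  refine ⟨((oneUnits v γ).pow_mem hu p).1, ?_⟩
  have hle : v ((u : K) - 1) ≤ 1 := v.map_sub_le hu.1.le v.map_one.le
  have h := map_add_pow_sub_pow_le v hp v.map_one.le hle
  rw [add_sub_cancel, one_pow] at h
  rw [Units.val_pow_eq_pow_val]
  exact h.trans (max_le_max (pow_le_pow_left' hu.2 p) (mul_le_mul_right hu.2 _))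

end Valuation

/-! ### Displacement of elements by automorphisms of a valued field -/

section Displacement

variable {G K Γ₀ : Type*} [Group G] [Field K] [MulSemiringAction G K]
  [LinearOrderedCommGroupWithZero Γ₀] {v : Valuation K Γ₀} {σ : G} {F : Subfield K} {γ δ : Γ₀}

variable (v σ F δ) in
/-- `σ` moves every element of `F` by at most the factor `δ`. For `F = ⊤` and `δ = exp (-s)` this
says that `σ` lies in the `s`-th ramification group; a smaller `F` is used to filter the Galois
group of a subextension without restricting automorphisms to it. -/
def DisplacementLE : Prop := ∀ x ∈ F, v (σ • x - x) ≤ δ * v x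

variable (v σ) in
/-- `σ` belongs to the inertia group of `v`. -/
structure IsInertial : Prop where
  map_smul : ∀ x : K, v (σ • x) = v x
  sub_lt_one : ∀ x : K, v x ≤ 1 → v (σ • x - x) < 1

variable (K σ) in
/-- The action of `σ` on the multiplicative group of the field. -/
def unitsMap : Kˣ →* Kˣ := Units.map (MulSemiringAction.toRingHom G K σ : K →* K)

lemma coe_unitsMap (u : Kˣ) : (unitsMap K σ u : K) = σ • (u : K) := rfl

lemma coe_unitsMap_div_sub_one (u : Kˣ) :
    ((unitsMap K σ u / u : Kˣ) : K) - 1 = (σ • (u : K) - u) / u := by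
  rw [Units.val_div_eq_div_val, coe_unitsMap, sub_div, div_self u.ne_zero]

lemma coe_iterate_unitsMap (u : Kˣ) (j : ℕ) : ((unitsMap K σ)^[j] u : K) = σ ^ j • (u : K) := by
  induction j with
  | zero => rw [Function.iterate_zero_apply, pow_zero, one_smul]
  | succ j ih => rw [Function.iterate_succ_apply', coe_unitsMap, ih, pow_succ', mul_smul]

lemma unitsMap_div_mem_oneUnits (hv : ∀ x : K, v (σ • x) = v x) (hσ : DisplacementLE v σ ⊤ δ)
    {u : Kˣ} (hu : u ∈ oneUnits v γ) : unitsMap K σ u / u ∈ oneUnits v (δ * γ) := by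
  refine ⟨by rw [Units.val_div_eq_div_val, map_div₀, coe_unitsMap, hv, hu.1, div_one], ?_⟩
  rw [coe_unitsMap_div_sub_one, map_div₀, hu.1, div_one,
    show σ • (u : K) - u = σ • ((u : K) - 1) - ((u : K) - 1) by rw [smul_sub, smul_one]; ring]
  exact (hσ _ trivial).trans (mul_le_mul_right hu.2 δ)

lemma iterate_unitsMap_div_mem_oneUnits (hv : ∀ x : K, v (σ • x) = v x)
    (hσ : DisplacementLE v σ ⊤ δ) {u : Kˣ} (hu : u ∈ oneUnits v γ) (k : ℕ) :
    (fun y => unitsMap K σ y / y)^[k] u ∈ oneUnits v (δ ^ k * γ) := by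
  induction k with
  | zero => rwa [Function.iterate_zero_apply, pow_zero, one_mul]
  | succ k ih =>
    rw [Function.iterate_succ_apply', pow_succ', mul_assoc]
    exact unitsMap_div_mem_oneUnits hv hσ ih

lemma val_prod_smul_sub_one_le {p : ℕ} (hp : p.Prime) (hv : ∀ x : K, v (σ • x) = v x)
    (hσ : DisplacementLE v σ ⊤ δ) (hδ : δ ≤ 1) {u : Kˣ} (hu : u ∈ oneUnits v γ) :
    v (∏ j ∈ Finset.range p, σ ^ j • (u : K) - 1) ≤
      max (max (γ ^ p) (v p * γ)) (δ ^ (p - 1) * γ) := by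
  have hmem : ∏ j ∈ Finset.range p, (unitsMap K σ)^[j] u ∈
      oneUnits v (max (max (γ ^ p) (v p * γ)) (δ ^ (p - 1) * γ)) := by
    rw [prod_iterate_eq_prod_div_iterate]
    refine Subgroup.prod_mem _ fun k hk => ?_
    have hk' := iterate_unitsMap_div_mem_oneUnits hv hσ hu k
    rcases eq_or_ne (k + 1) p with rfl | hkp
    · rw [Nat.choose_self, pow_one]
      exact oneUnits_mono (le_max_right _ _) hk'
    · obtain ⟨m, hm⟩ := hp.dvd_choose_self k.succ_ne_zero
        (lt_of_le_of_ne (Finset.mem_range.1 hk) hkp)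
      have hkγ : δ ^ k * γ ≤ γ := mul_le_of_le_one_left' (pow_le_one' hδ k)
      rw [hm, pow_mul]
      exact oneUnits_mono (le_max_left _ _)
        (Subgroup.pow_mem _ (pow_prime_mem_oneUnits hp (oneUnits_mono hkγ hk')) m)
  simpa only [Units.coe_prod, coe_iterate_unitsMap] using hmem.2

lemma val_iterate_smul_sub_le (hF : ∀ x ∈ F, σ • x ∈ F) (hσ : DisplacementLE v σ F δ) {x : K}
    (hx : x ∈ F) (k : ℕ) :
    (fun y : K => σ • y - y)^[k] x ∈ F ∧ v ((fun y : K => σ • y - y)^[k] x) ≤ δ ^ k * v x := by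
  induction k with
  | zero => exact ⟨hx, by rw [pow_zero, one_mul, Function.iterate_zero_apply]⟩
  | succ k ih =>
    rw [Function.iterate_succ_apply', pow_succ', mul_assoc]
    exact ⟨F.sub_mem (hF _ ih.1) ih.1, (hσ _ ih.1).trans (mul_le_mul_right ih.2 δ)⟩

lemma val_sum_smul_sub_le {p : ℕ} (hp : p.Prime) (hF : ∀ x ∈ F, σ • x ∈ F)
    (hσ : DisplacementLE v σ F δ) (hδ : δ ≤ 1) {x : K} (hx : x ∈ F) :
    v (∑ j ∈ Finset.range p, σ ^ j • x - p * x) ≤ max (v p * δ) (δ ^ (p - 1)) * v x := by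
  have hsum : ∑ j ∈ Finset.range p, σ ^ j • x - p * x = ∑ k ∈ Finset.range (p - 1),
      p.choose (k + 2) • (fun y : K => σ • y - y)^[k + 1] x := by
    have h := sum_iterate_eq_sum_sub_iterate (DistribSMul.toAddMonoidHom K σ) p x
    simp only [DistribSMul.toAddMonoidHom_apply] at h
    have hiter : ∀ j, (DistribSMul.toAddMonoidHom K σ)^[j] x = σ ^ j • x := fun j => by
      rw [← smul_iterate_apply]; rfl
    simp only [hiter] at h
    obtain ⟨q, rfl⟩ := Nat.exists_eq_succ_of_ne_zero hp.ne_zero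
    rw [h, Finset.sum_range_succ']
    simp
  rw [hsum]
  refine v.map_sum_le fun k hk => ?_
  have hk' := (val_iterate_smul_sub_le hF hσ hx (k + 1)).2
  rw [nsmul_eq_mul, map_mul]
  rcases eq_or_ne (k + 2) p with rfl | hkp
  · rw [Nat.choose_self, Nat.cast_one, map_one, one_mul]
    exact hk'.trans (mul_le_mul_left (le_max_right _ _) _)
  · have hlt : k + 2 < p := by have := Finset.mem_range.1 hk; omega
    obtain ⟨m, hm⟩ := hp.dvd_choose_self (k + 1).succ_ne_zero hlt
    have hm1 : v (m : K) ≤ 1 := natCast_mem v.integer m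
    rw [hm, Nat.cast_mul, map_mul]
    calc v p * v m * _ ≤ v p * 1 * (δ ^ (k + 1) * v x) := by gcongr
      _ ≤ v p * 1 * (δ ^ 1 * v x) := by
        gcongr v p * 1 * (?_ * v x)
        exact pow_le_pow_right_of_le_one' hδ (by omega)
      _ = v p * δ * v x := by rw [mul_one, pow_one, mul_assoc]
      _ ≤ _ := mul_le_mul_left (le_max_left _ _) _

end Displacement

section Uniformizer

variable {G K Γ₀ : Type*} [Group G] [Field K] [MulSemiringAction G K]
  [LinearOrderedCommGroupWithZero Γ₀] {v : Valuation K Γ₀} {σ : G} {F : Subfield K} {δ : Γ₀} {ϖ : K}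

variable (v F ϖ) in
/-- `ϖ` is a uniformizer of the restriction of `v` to the subfield `F`, which is then discrete. -/
structure IsUniformizer : Prop where
  mem : ϖ ∈ F
  ne_zero : ϖ ≠ 0
  lt_one : v ϖ < 1
  exists_zpow : ∀ x ∈ F, x ≠ 0 → ∃ n : ℤ, v x = v ϖ ^ n

lemma IsUniformizer.val_le_of_lt_one (hϖ : IsUniformizer v F ϖ) {x : K} (hx : x ∈ F)
    (hlt : v x < 1) : v x ≤ v ϖ := by
  rcases eq_or_ne x 0 with rfl | hx0
  · rw [map_zero]; exact zero_le
  have hpos : 0 < v ϖ := zero_lt_iff.2 ((v.ne_zero_iff).2 hϖ.ne_zero)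
  obtain ⟨n, hn⟩ := hϖ.exists_zpow x hx hx0
  rw [hn] at hlt ⊢
  have hn1 : 1 ≤ n := by
    by_contra! h
    exact hlt.not_ge (one_le_zpow_of_nonpos₀ hpos hϖ.lt_one.le (by omega))
  simpa using zpow_le_zpow_right_of_le_one₀ hpos hϖ.lt_one.le hn1

lemma IsUniformizer.val_le_pow_succ_of_lt_pow (hϖ : IsUniformizer v F ϖ) {x : K} (hx : x ∈ F)
    {k : ℕ} (hlt : v x < v ϖ ^ k) : v x ≤ v ϖ ^ (k + 1) := by
  have hpos : 0 < v ϖ ^ k := pow_pos (zero_lt_iff.2 ((v.ne_zero_iff).2 hϖ.ne_zero)) k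
  have h := hϖ.val_le_of_lt_one (F.div_mem hx (pow_mem hϖ.mem k))
    (by rwa [map_div₀, map_pow, div_lt_one₀ hpos])
  rwa [map_div₀, map_pow, div_le_iff₀ hpos, ← pow_succ'] at h

lemma unitsMap_div_mem_oneUnits_iff (hv : ∀ x : K, v (σ • x) = v x) {u : Kˣ} :
    unitsMap K σ u / u ∈ oneUnits v δ ↔ v (σ • (u : K) - u) ≤ δ * v u := by
  have hu : v (u : K) ≠ 0 := (v.ne_zero_iff).2 u.ne_zero
  rw [mem_oneUnits, coe_unitsMap_div_sub_one, Units.val_div_eq_div_val, map_div₀, coe_unitsMap, hv,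
    div_self hu, map_div₀, div_le_iff₀ (zero_lt_iff.2 hu)]
  exact and_iff_right rfl

lemma IsUniformizer.displacementLE (hϖ : IsUniformizer v F ϖ) (hv : ∀ x : K, v (σ • x) = v x)
    (hunit : ∀ x ∈ F, v x = 1 → v (σ • x - x) ≤ δ) (hσϖ : v (σ • ϖ - ϖ) ≤ δ * v ϖ) :
    DisplacementLE v σ F δ := by
  intro x hx
  rcases eq_or_ne x 0 with rfl | hx0
  · simp
  obtain ⟨n, hn⟩ := hϖ.exists_zpow x hx hx0
  let π : Kˣ := Units.mk0 ϖ hϖ.ne_zero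
  let u : Kˣ := Units.mk0 x hx0 / π ^ n
  have hvu : v (u : K) = 1 := by
    simp only [u, π, Units.val_div_eq_div_val, Units.val_mk0, Units.val_zpow_eq_zpow_val, map_div₀,
      map_zpow₀, hn]
    exact div_self (zpow_ne_zero _ ((v.ne_zero_iff).2 hϖ.ne_zero))
  have huF : (u : K) ∈ F := by
    simpa [u, π] using F.div_mem hx (zpow_mem hϖ.mem n)
  let H : Subgroup Kˣ := (oneUnits v δ).comap (unitsMap K σ / MonoidHom.id Kˣ)
  have hπ : π ∈ H := (unitsMap_div_mem_oneUnits_iff hv).2 hσϖ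
  have hu : u ∈ H := (unitsMap_div_mem_oneUnits_iff hv).2 (by
    rw [hvu, mul_one]; exact hunit _ huF hvu)
  have hmem : Units.mk0 x hx0 ∈ H := by
    have h := H.mul_mem hu (H.zpow_mem hπ n)
    rwa [div_mul_cancel] at h
  exact (unitsMap_div_mem_oneUnits_iff hv).1 hmem

end Uniformizer

section Frobenius

variable {G K Γ₀ : Type*} [Group G] [Field K] [MulSemiringAction G K]
  [LinearOrderedCommGroupWithZero Γ₀] {v : Valuation K Γ₀} {σ : G} {F : Subfield K} {δ : Γ₀} {ϖ : K}
  {p : ℕ} {φ : K ≃+* K}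

variable (v p φ) in
/-- `φ` is a Frobenius automorphism at `v`: it preserves `v` and induces `x ↦ x ^ p` on the residue
field. -/
structure IsFrobenius : Prop where
  map_apply : ∀ x : K, v (φ x) = v x
  sub_pow_lt_one : ∀ x : K, v x ≤ 1 → v (φ x - x ^ p) < 1

/-- An integer `a` of `F` is congruent to the `p`-th power `b ^ p` of `b = φ⁻¹ a` modulo the
uniformizer, and `σ (b ^ p) - b ^ p` gains a factor `ϖ` over `σ b - b`. -/
lemma IsUniformizer.val_smul_sub_le_sq (hϖ : IsUniformizer v F ϖ) (hp : p.Prime)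
    (hpϖ : v (p : K) ≤ v ϖ) (hσ : IsInertial v σ) (hφ : IsFrobenius v p φ)
    (hFσ : ∀ x ∈ F, σ • x ∈ F) (hFφ : ∀ x ∈ F, φ.symm x ∈ F) (hσϖ : v (σ • ϖ - ϖ) ≤ v ϖ ^ 2)
    {a : K} (ha : a ∈ F) (hva : v a ≤ 1) : v (σ • a - a) ≤ v ϖ ^ 2 := by
  have hdisp : ∀ x ∈ F, v x ≤ 1 → v (σ • x - x) ≤ v ϖ := fun x hx hvx =>
    hϖ.val_le_of_lt_one (F.sub_mem (hFσ x hx) hx) (hσ.sub_lt_one x hvx)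
  obtain ⟨b, hb⟩ : ∃ b, b = φ.symm a := ⟨_, rfl⟩
  have hbF : b ∈ F := hb ▸ hFφ a ha
  have hvb : v b ≤ 1 := by rw [← hφ.map_apply, hb, φ.apply_symm_apply]; exact hva
  have hab : v (a - b ^ p) ≤ v ϖ :=
    hϖ.val_le_of_lt_one (F.sub_mem ha (pow_mem hbF p))
      (by simpa only [hb, φ.apply_symm_apply] using hφ.sub_pow_lt_one b hvb)
  obtain ⟨c, hc⟩ : ∃ c, c = (a - b ^ p) / ϖ := ⟨_, rfl⟩
  have hcF : c ∈ F := hc ▸ F.div_mem (F.sub_mem ha (pow_mem hbF p)) hϖ.mem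
  have hvc : v c ≤ 1 := by rw [hc, map_div₀]; exact div_le_one_of_le₀ hab zero_le
  have hbp : v (σ • b ^ p - b ^ p) ≤ v ϖ ^ 2 := by
    have hd := hdisp b hbF hvb
    have h := map_add_pow_sub_pow_le v hp hvb (hd.trans hϖ.lt_one.le)
    rw [add_sub_cancel, ← smul_pow'] at h
    refine h.trans (max_le ?_ ?_)
    · exact (pow_le_pow_left' hd p).trans (pow_le_pow_right_of_le_one' hϖ.lt_one.le hp.two_le)
    · rw [sq]; exact mul_le_mul' hpϖ hd
  have hϖc : v (σ • (ϖ * c) - ϖ * c) ≤ v ϖ ^ 2 := by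
    rw [show σ • (ϖ * c) - ϖ * c = (σ • ϖ - ϖ) * σ • c + ϖ * (σ • c - c) by rw [smul_mul']; ring]
    refine v.map_add_le ?_ ?_
    · rw [map_mul, hσ.map_smul]; exact mul_le_of_le_of_le_one hσϖ hvc
    · rw [map_mul, sq]; exact mul_le_mul_right (hdisp c hcF hvc) _
  have hsplit : σ • a - a = (σ • b ^ p - b ^ p) + (σ • (ϖ * c) - ϖ * c) := by
    have ha' : a = b ^ p + ϖ * c := by rw [hc, mul_div_cancel₀ _ hϖ.ne_zero]; ring
    nth_rewrite 1 2 [ha']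
    rw [smul_add]; ring
  rw [hsplit]
  exact v.map_add_le hbp hϖc

end Frobenius

/-! ### Tame inertia -/

section Residue

variable {K Γ₀ : Type*} [Field K] [LinearOrderedCommGroupWithZero Γ₀] {v : Valuation K Γ₀}

lemma residue_eq_residue_iff {x y : v.valuationSubring} :
    IsLocalRing.residue v.valuationSubring x = IsLocalRing.residue v.valuationSubring y ↔
      v ((x : K) - y) < 1 := by
  rw [← sub_eq_zero, ← map_sub, IsLocalRing.residue_eq_zero_iff, Valuation.mem_maximalIdeal_iff K v]
  rfl

lemma val_natCast_eq_one_of_coprime {p m : ℕ} (hp : v (p : K) < 1) (hm : m.Coprime p) :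
    v (m : K) = 1 := by
  refine le_antisymm (natCast_mem v.integer m) (not_lt.1 fun hlt => ?_)
  have hint : ∀ n : ℤ, v (n : K) ≤ 1 := fun n => intCast_mem v.integer n
  have hbez : (m.gcdA p : K) * m + (m.gcdB p : K) * p = 1 := by
    have h := congrArg (Int.cast : ℤ → K) (Nat.gcd_eq_gcd_ab m p)
    rw [hm.gcd_eq_one] at h
    push_cast at h
    rw [h]; ring
  refine (v.map_add_lt (x := (m.gcdA p : K) * m) (y := (m.gcdB p : K) * p) (g := 1) ?_ ?_).ne ?_
  · rw [map_mul]; exact (mul_le_of_le_one_left' (hint _)).trans_lt hlt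
  · rw [map_mul]; exact (mul_le_of_le_one_left' (hint _)).trans_lt hp
  · rw [hbez, map_one]

end Residue

section Inertia

variable {I K Γ₀ : Type*} [Group I] [Field K] [MulSemiringAction I K]
  [LinearOrderedCommGroupWithZero Γ₀] {v : Valuation K Γ₀} {π : K} {p : ℕ} {φ : K ≃+* K}

/-- The tame character `σ ↦ σ π / π` of the inertia group, with values in the residue field. -/
noncomputable def tameCharacter (hI : ∀ σ : I, IsInertial v σ) (hπ : π ≠ 0) :
    I →* IsLocalRing.ResidueField v.valuationSubring where
  toFun σ := IsLocalRing.residue _ ⟨σ • π / π, by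
    rw [Valuation.mem_valuationSubring_iff, map_div₀, (hI σ).map_smul]; exact div_self_le_one _⟩
  map_one' := by
    rw [← map_one (IsLocalRing.residue v.valuationSubring), residue_eq_residue_iff]
    simp [div_self hπ]
  map_mul' σ τ := by
    have hval : v (τ • π / π) ≤ 1 := by
      rw [map_div₀, (hI τ).map_smul]; exact div_self_le_one _
    have hσ : v (σ • π / π) ≤ 1 := by
      rw [map_div₀, (hI σ).map_smul]; exact div_self_le_one _
    rw [← map_mul, residue_eq_residue_iff]
    have h : (σ * τ) • π / π - σ • π / π * (τ • π / π) =
        σ • π / π * (σ • (τ • π / π) - τ • π / π) := by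
      rw [smul_div₀', mul_smul]
      field_simp [hπ, smul_ne_zero_iff_ne σ |>.2 hπ]
    change v ((σ * τ) • π / π - σ • π / π * (τ • π / π)) < 1
    rw [h, map_mul]
    exact (mul_le_of_le_one_left' hσ).trans_lt ((hI σ).sub_lt_one _ hval)

lemma tameCharacter_eq_one_iff (hI : ∀ σ : I, IsInertial v σ) (hπ : π ≠ 0) {σ : I} :
    tameCharacter hI hπ σ = 1 ↔ v (σ • π - π) < v π := by
  rw [← map_one (IsLocalRing.residue v.valuationSubring)]
  change IsLocalRing.residue v.valuationSubring _ = _ ↔ _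
  rw [residue_eq_residue_iff]
  change v (σ • π / π - 1) < 1 ↔ _
  rw [← div_self hπ, ← sub_div, map_div₀,
    div_lt_one₀ (zero_lt_iff.2 ((v.ne_zero_iff).2 hπ))]

/-- Applying `σ` to `φ π = w π` shows that the residue of `σ π / π` is fixed by the Frobenius, so it
lies in the prime field. -/
lemma tameCharacter_pow_eq_one (hI : ∀ σ : I, IsInertial v σ) (hπ : π ≠ 0) (hp : p ≠ 0)
    (hφ : IsFrobenius v p φ) (hcomm : ∀ (σ : I) (x : K), φ (σ • x) = σ • φ x) (σ : I) :
    tameCharacter hI hπ σ ^ (p - 1) = 1 := by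
  have hσπ : σ • π ≠ 0 := (smul_ne_zero_iff_ne σ).2 hπ
  have hw : v (φ π / π) = 1 := by
    rw [map_div₀, hφ.map_apply, div_self ((v.ne_zero_iff).2 hπ)]
  have hu : v (σ • π / π) = 1 := by
    rw [map_div₀, (hI σ).map_smul, div_self ((v.ne_zero_iff).2 hπ)]
  have hφu : φ (σ • π / π) = σ • π / π * (σ • (φ π / π) / (φ π / π)) := by
    rw [map_div₀, hcomm, smul_div₀']
    field_simp [hπ, hσπ, (map_ne_zero φ).2 hπ]
  have hsub : v (φ (σ • π / π) - σ • π / π) < 1 := by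
    have hw0 : φ π / π ≠ 0 := div_ne_zero ((map_ne_zero φ).2 hπ) hπ
    rw [hφu, ← mul_sub_one, div_sub_one hw0, map_mul, hu, one_mul, map_div₀, hw, div_one]
    exact (hI σ).sub_lt_one _ hw.le
  have hfix : tameCharacter hI hπ σ ^ p = tameCharacter hI hπ σ := by
    change IsLocalRing.residue v.valuationSubring _ ^ p = IsLocalRing.residue _ _
    rw [← map_pow, residue_eq_residue_iff]
    have h := v.map_sub_lt hsub (hφ.sub_pow_lt_one _ hu.le)
    rwa [sub_sub_sub_cancel_left] at h
  have hne : tameCharacter hI hπ σ ≠ 0 := ((Group.isUnit σ).map _).ne_zero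
  exact mul_right_cancel₀ hne (by rw [pow_sub_one_mul hp, hfix, one_mul])

lemma IsUniformizer.displacementLE_of_tameCharacter_eq_one (hπ : IsUniformizer v ⊤ π)
    (hI : ∀ σ : I, IsInertial v σ) {σ : I} (hσ : tameCharacter hI hπ.ne_zero σ = 1) :
    DisplacementLE v σ ⊤ (v π) := by
  refine hπ.displacementLE (hI σ).map_smul
    (fun x _ hx => hπ.val_le_of_lt_one trivial ((hI σ).sub_lt_one x hx.le)) ?_
  have hpos : 0 < v π := zero_lt_iff.2 ((v.ne_zero_iff).2 hπ.ne_zero)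
  rw [tameCharacter_eq_one_iff] at hσ
  rw [← div_le_iff₀ hpos, ← map_div₀]
  exact hπ.val_le_of_lt_one trivial (by rwa [map_div₀, div_lt_one₀ hpos])

/-- For `y = σ x - x` and `n` the order of `σ`, the sum of the `σ ^ j y` vanishes but is congruent
to `n y`. -/
lemma DisplacementLE.eq_one_of_coprime_orderOf [FaithfulSMul I K] {σ : I} {δ : Γ₀}
    (hσ : DisplacementLE v σ ⊤ δ) (hδ : δ < 1) (hv : ∀ x : K, v (σ • x) = v x)
    (hp : v (p : K) < 1) (hcop : (orderOf σ).Coprime p) : σ = 1 := by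
  have hpow : ∀ j (y : K), v (σ ^ j • y - y) ≤ δ * v y := fun j y => by
    induction j with
    | zero => simp
    | succ j ih =>
      rw [show σ ^ (j + 1) • y - y = σ • (σ ^ j • y - y) + (σ • y - y) by
        rw [pow_succ', mul_smul, smul_sub]; ring]
      exact v.map_add_le (by rwa [hv]) (hσ y trivial)
  refine FaithfulSMul.eq_of_smul_eq_smul (α := K) fun x => ?_
  rw [one_smul, ← sub_eq_zero]
  obtain ⟨y, hy⟩ : ∃ y, y = σ • x - x := ⟨_, rfl⟩
  have hsum : ∑ j ∈ Finset.range (orderOf σ), σ ^ j • y = 0 := by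
    simp_rw [hy, smul_sub, ← mul_smul, ← pow_succ]
    rw [Finset.sum_range_sub fun j => σ ^ j • x]
    simp [pow_orderOf_eq_one]
  have hle : v y ≤ δ * v y := by
    have h : v (∑ j ∈ Finset.range (orderOf σ), (σ ^ j • y - y)) ≤ δ * v y :=
      v.map_sum_le fun j _ => hpow j y
    rwa [Finset.sum_sub_distrib, hsum, zero_sub, Valuation.map_neg, Finset.sum_const,
      Finset.card_range, nsmul_eq_mul, map_mul, val_natCast_eq_one_of_coprime hp hcop,
      one_mul] at h
  rw [← hy, ← v.zero_iff]
  by_contra hne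
  exact hle.not_gt (mul_lt_of_lt_one_left (zero_lt_iff.2 hne) hδ)

theorem card_inertia_dvd_sub_one [Finite I] [FaithfulSMul I K] (hp : p ≠ 0)
    (hI : ∀ σ : I, IsInertial v σ) (hπ : IsUniformizer v ⊤ π) (hpv : v (p : K) < 1)
    (hφ : IsFrobenius v p φ) (hcomm : ∀ (σ : I) (x : K), φ (σ • x) = σ • φ x)
    (hcop : (Nat.card I).Coprime p) : Nat.card I ∣ p - 1 := by
  have hinj : Function.Injective (tameCharacter hI hπ.ne_zero) :=
    (injective_iff_map_eq_one _).2 fun σ hσ =>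
      (hπ.displacementLE_of_tameCharacter_eq_one hI hσ).eq_one_of_coprime_orderOf hπ.lt_one
        (hI σ).map_smul hpv (hcop.coprime_dvd_left (orderOf_dvd_natCard σ))
  have := isCyclic_of_injective_ringHom _ hinj
  rw [← IsCyclic.exponent_eq_card]
  refine Monoid.exponent_dvd_of_forall_pow_eq_one fun σ => hinj ?_
  rw [map_pow, map_one]
  exact tameCharacter_pow_eq_one hI hπ.ne_zero hp hφ hcomm σ

end Inertia

/-! ### Wild inertia -/

section WildInertia

variable {I K Γ₀ : Type*} [Group I] [Field K] [MulSemiringAction I K]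
  [LinearOrderedCommGroupWithZero Γ₀] {v : Valuation K Γ₀} {π : K} {p : ℕ} {φ : K ≃+* K}

lemma tameCharacter_eq_one_of_coprime (hI : ∀ σ : I, IsInertial v σ) (hπ : π ≠ 0) (hp : p ≠ 0)
    (hφ : IsFrobenius v p φ) (hcomm : ∀ (σ : I) (x : K), φ (σ • x) = σ • φ x) {σ : I}
    (hcop : (orderOf σ).Coprime (p - 1)) : tameCharacter hI hπ σ = 1 := by
  have hord : tameCharacter hI hπ σ ^ orderOf σ = 1 := by
    rw [← map_pow, pow_orderOf_eq_one, map_one]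
  have h := pow_gcd_eq_one.2 ⟨hord, tameCharacter_pow_eq_one hI hπ hp hφ hcomm σ⟩
  rwa [hcop.gcd_eq_one, pow_one] at h

lemma val_smul_sub_div_sq_le_one {G : Type*} [Group G] [MulSemiringAction G K] {σ : G}
    (h : v (σ • π - π) ≤ v π ^ 2) : v ((σ • π - π) / π ^ 2) ≤ 1 := by
  rw [map_div₀, map_pow]; exact div_le_one_of_le₀ h zero_le

lemma val_smul_mul_sub_div_sq_lt_one (hI : ∀ σ : I, IsInertial v σ) (hπ : π ≠ 0) (hπ1 : v π < 1)
    (hIπ : ∀ σ : I, v (σ • π - π) ≤ v π ^ 2) (σ τ : I) :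
    v (((σ * τ) • π - π) / π ^ 2 - ((σ • π - π) / π ^ 2 + (τ • π - π) / π ^ 2)) < 1 := by
  obtain ⟨d, hd⟩ : ∃ d, d = (τ • π - π) / π ^ 2 := ⟨_, rfl⟩
  have hvd : v d ≤ 1 := hd ▸ val_smul_sub_div_sq_le_one (hIπ τ)
  have hτπ : τ • π = π + d * π ^ 2 := by rw [hd, div_mul_cancel₀ _ (pow_ne_zero 2 hπ)]; ring
  have hsplit : ((σ * τ) • π - π) / π ^ 2 - ((σ • π - π) / π ^ 2 + d) =
      (σ • d - d) + σ • d * ((σ • π / π + 1) * ((σ • π - π) / π)) := by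
    rw [mul_smul, hτπ, smul_add, smul_mul', smul_pow']
    field_simp
    ring
  have hπ0 : v π ≠ 0 := (v.ne_zero_iff).2 hπ
  have hu : v (σ • π / π + 1) ≤ 1 :=
    v.map_add_le (by rw [map_div₀, (hI σ).map_smul, div_self hπ0]) v.map_one.le
  have hlt : v ((σ • π - π) / π) < 1 := by
    rw [map_div₀, div_lt_one₀ (zero_lt_iff.2 hπ0)]
    exact (hIπ σ).trans_lt (by rw [sq]; exact mul_lt_of_lt_one_left (zero_lt_iff.2 hπ0) hπ1)
  rw [← hd, hsplit]
  refine v.map_add_lt ((hI σ).sub_lt_one d hvd) ?_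
  rw [map_mul, map_mul, (hI σ).map_smul]
  exact (mul_le_of_le_one_left' hvd).trans_lt ((mul_le_of_le_one_left' hu).trans_lt hlt)

/-- The first wild character `σ ↦ (σ π - π) / π ^ 2` of an inertia group all of whose elements fix
`π` modulo `π ^ 2`, with values in the additive group of the residue field. -/
noncomputable def wildCharacter (hI : ∀ σ : I, IsInertial v σ) (hπ : π ≠ 0) (hπ1 : v π < 1)
    (hIπ : ∀ σ : I, v (σ • π - π) ≤ v π ^ 2) :
    I →* Multiplicative (IsLocalRing.ResidueField v.valuationSubring) where
  toFun σ := .ofAdd (IsLocalRing.residue v.valuationSubring ⟨(σ • π - π) / π ^ 2,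
    val_smul_sub_div_sq_le_one (hIπ σ)⟩)
  map_one' := by
    refine congrArg Multiplicative.ofAdd ((residue_eq_residue_iff (y := 0)).2 ?_)
    simp
  map_mul' σ τ := congrArg Multiplicative.ofAdd
    (residue_eq_residue_iff.2 (val_smul_mul_sub_div_sq_lt_one hI hπ hπ1 hIπ σ τ))

lemma wildCharacter_eq_one_iff (hI : ∀ σ : I, IsInertial v σ) (hπ : π ≠ 0) (hπ1 : v π < 1)
    (hIπ : ∀ σ : I, v (σ • π - π) ≤ v π ^ 2) {σ : I} :
    wildCharacter hI hπ hπ1 hIπ σ = 1 ↔ v (σ • π - π) < v π ^ 2 := by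
  have hpos : 0 < v π ^ 2 := pow_pos (zero_lt_iff.2 ((v.ne_zero_iff).2 hπ)) 2
  refine (residue_eq_residue_iff (y := 0)).trans ?_
  change v ((σ • π - π) / π ^ 2 - 0) < 1 ↔ _
  rw [sub_zero, map_div₀, map_pow, div_lt_one₀ hpos]

/-- Writing `φ π = w π` and applying `φ` to `(σ π - π) / π ^ 2` shows that the residue `a` of the
latter satisfies `w a ^ p = a`, an equation of degree `p`. -/
lemma residue_mul_wildCharacter_pow (hI : ∀ σ : I, IsInertial v σ) (hπ : IsUniformizer v ⊤ π)
    (hp : p.Prime) (hpπ : v (p : K) ≤ v π) (hφ : IsFrobenius v p φ)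
    (hcomm : ∀ (σ : I) (x : K), φ (σ • x) = σ • φ x) (hIπ : ∀ σ : I, v (σ • π - π) ≤ v π ^ 2)
    (hw : v (φ π / π) ≤ 1) (σ : I) :
    IsLocalRing.residue v.valuationSubring ⟨φ π / π, hw⟩ *
      (wildCharacter hI hπ.ne_zero hπ.lt_one hIπ σ).toAdd ^ p =
      (wildCharacter hI hπ.ne_zero hπ.lt_one hIπ σ).toAdd := by
  obtain ⟨w, hw'⟩ : ∃ w, w = φ π / π := ⟨_, rfl⟩
  obtain ⟨d, hd⟩ : ∃ d, d = (σ • π - π) / π ^ 2 := ⟨_, rfl⟩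
  have hπ0 : v π ≠ 0 := (v.ne_zero_iff).2 hπ.ne_zero
  have hvw : v w = 1 := by rw [hw', map_div₀, hφ.map_apply, div_self hπ0]
  have hw0 : w ≠ 0 := (v.ne_zero_iff).1 (hvw ▸ one_ne_zero)
  have hvd : v d ≤ 1 := hd ▸ val_smul_sub_div_sq_le_one (hIπ σ)
  have hφπ : φ π = w * π := by rw [hw', div_mul_cancel₀ _ hπ.ne_zero]
  have hσw : v ((σ • w - w) / π) < 1 := by
    rw [map_div₀, div_lt_one₀ (zero_lt_iff.2 hπ0)]
    refine (hπ.val_smul_sub_le_sq hp hpπ (hI σ) hφ (fun _ _ => trivial) (fun _ _ => trivial)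
      (hIπ σ) trivial hvw.le).trans_lt ?_
    rw [sq]; exact mul_lt_of_lt_one_left (zero_lt_iff.2 hπ0) hπ.lt_one
  have hφd : w * φ d - d = (σ • w - w) / π * (σ • π / π) / w := by
    have h : φ d = (σ • (w * π) - w * π) / (w * π) ^ 2 := by
      rw [hd, map_div₀, map_sub, hcomm, map_pow, hφπ]
    have hπ' := hπ.ne_zero
    rw [h, hd, smul_mul']
    field_simp
    ring
  have hfrob : v (w * φ d - w * d ^ p) < 1 := by
    rw [← mul_sub, map_mul, hvw, one_mul]; exact hφ.sub_pow_lt_one d hvd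
  have hfix : v (w * φ d - d) < 1 := by
    rw [hφd, map_div₀, map_mul, map_div₀ v (σ • π), (hI σ).map_smul, div_self hπ0, mul_one, hvw,
      div_one]
    exact hσw
  have h := v.map_sub_lt hfix hfrob
  rw [sub_sub_sub_cancel_left, hw', hd] at h
  change _ * IsLocalRing.residue v.valuationSubring _ ^ p = IsLocalRing.residue _ _
  rw [← map_pow, ← map_mul, residue_eq_residue_iff]
  exact h

lemma exists_ne_one_val_smul_sub_lt_sq [Finite I] (hI : ∀ σ : I, IsInertial v σ)
    (hπ : IsUniformizer v ⊤ π) (hp : p.Prime) (hpπ : v (p : K) ≤ v π) (hφ : IsFrobenius v p φ)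
    (hcomm : ∀ (σ : I) (x : K), φ (σ • x) = σ • φ x) (hIπ : ∀ σ : I, v (σ • π - π) ≤ v π ^ 2)
    (hcard : p < Nat.card I) : ∃ σ : I, σ ≠ 1 ∧ v (σ • π - π) < v π ^ 2 := by
  classical
  by_contra! hdeep
  have := Fintype.ofFinite I
  have hinj : Function.Injective (wildCharacter hI hπ.ne_zero hπ.lt_one hIπ) :=
    (injective_iff_map_eq_one _).2 fun σ hσ => by
      rw [wildCharacter_eq_one_iff] at hσ
      by_contra hne
      exact (hdeep σ hne).not_gt hσ
  have hw : v (φ π / π) ≤ 1 := by rw [map_div₀, hφ.map_apply]; exact div_self_le_one _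
  let f : Polynomial (IsLocalRing.ResidueField v.valuationSubring) :=
    .C (IsLocalRing.residue v.valuationSubring ⟨φ π / π, hw⟩) * .X ^ p - .X
  have hf : f ≠ 0 := fun h => by
    have h1 := congrArg (Polynomial.coeff · 1) h
    simp [f, Polynomial.coeff_X_pow, hp.ne_one.symm] at h1
  have hdeg : f.natDegree ≤ p :=
    (Polynomial.natDegree_sub_le _ _).trans
      (max_le (Polynomial.natDegree_C_mul_X_pow_le _ p) (Polynomial.natDegree_X_le.trans hp.one_le))
  have hroots : (Finset.univ.image (Multiplicative.toAdd ∘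
      wildCharacter hI hπ.ne_zero hπ.lt_one hIπ)).val ⊆ f.roots := fun a ha => by
    obtain ⟨σ, -, rfl⟩ := Finset.mem_image.1 ha
    simp [hf, f, residue_mul_wildCharacter_pow hI hπ hp hpπ hφ hcomm hIπ hw σ]
  have hle := (Polynomial.card_le_degree_of_subset_roots hroots).trans hdeg
  rw [Finset.card_image_of_injective _ (Multiplicative.toAdd.injective.comp hinj),
    Finset.card_univ, ← Nat.card_eq_fintype_card] at hle
  exact hle.not_gt hcard

end WildInertia

section CyclicSums

@[to_additive]
lemma prod_range_succ_apply_eq {A : Type*} [CommMonoid A] {f : ℕ → A} {n : ℕ} (hf : f n = f 0) :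
    ∏ j ∈ Finset.range n, f (j + 1) = ∏ j ∈ Finset.range n, f j := by
  cases n with
  | zero => rfl
  | succ n => rw [Finset.prod_range_succ, hf, ← Finset.prod_range_succ']

variable {G K : Type*} [Group G] [Field K] [MulSemiringAction G K] {σ : G} {n : ℕ}

lemma smul_prod_range_pow_smul (hσ : σ ^ n = 1) (x : K) :
    σ • ∏ j ∈ Finset.range n, σ ^ j • x = ∏ j ∈ Finset.range n, σ ^ j • x := by
  simp_rw [Finset.smul_prod', ← mul_smul, ← pow_succ']
  exact prod_range_succ_apply_eq (f := fun j => σ ^ j • x) (by rw [hσ, pow_zero])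

lemma smul_sum_range_pow_smul (hσ : σ ^ n = 1) (x : K) :
    σ • ∑ j ∈ Finset.range n, σ ^ j • x = ∑ j ∈ Finset.range n, σ ^ j • x := by
  simp_rw [Finset.smul_sum, ← mul_smul, ← pow_succ']
  exact sum_range_succ_apply_eq (f := fun j => σ ^ j • x) (by rw [hσ, pow_zero])

lemma val_prod_range_pow_smul {Γ₀ : Type*} [LinearOrderedCommGroupWithZero Γ₀] {v : Valuation K Γ₀}
    (hv : ∀ x : K, v (σ • x) = v x) (x : K) :
    v (∏ j ∈ Finset.range n, σ ^ j • x) = v x ^ n := by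
  have hpow : ∀ j, v (σ ^ j • x) = v x := fun j => by
    induction j with
    | zero => rw [pow_zero, one_smul]
    | succ j ih => rw [pow_succ', mul_smul, hv, ih]
  rw [map_prod, Finset.prod_congr rfl fun j _ => hpow j, Finset.prod_const, Finset.card_range]

lemma smul_mem_fixedBy_of_commute {σ τ : G} (hcomm : Commute σ τ) {x : K}
    (hx : x ∈ FixedBy.subfield K τ) : σ • x ∈ FixedBy.subfield K τ := by
  change τ • σ • x = σ • x
  rw [← mul_smul, ← hcomm.eq, mul_smul, show τ • x = x from hx]

end CyclicSums

section PrimeSquare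

variable {I : Type*} [Group I] {p : ℕ}

lemma exists_notMem_zpowers (hp : p.Prime) (hcard : Nat.card I = p ^ 2) {σ : I} (hσ : σ ^ p = 1) :
    ∃ τ : I, τ ∉ Subgroup.zpowers σ := by
  by_contra! h
  have hle : Nat.card (Subgroup.zpowers σ) ≤ p := by
    rw [Nat.card_zpowers]; exact orderOf_le_of_pow_eq_one hp.pos hσ
  rw [(Subgroup.eq_top_iff' _).2 h, Subgroup.card_top, hcard] at hle
  nlinarith [hp.two_le]

variable [Finite I]

lemma eq_top_of_notMem_zpowers (hp : p.Prime) (hcard : Nat.card I = p ^ 2) {σ τ : I} (hσ : σ ≠ 1)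
    (hτ : τ ∉ Subgroup.zpowers σ) {H : Subgroup I} (hσH : σ ∈ H) (hτH : τ ∈ H) : H = ⊤ := by
  have hlt : Subgroup.zpowers σ < H :=
    lt_of_le_of_ne (Subgroup.zpowers_le.2 hσH) fun h => hτ (h ▸ hτH)
  obtain ⟨k, hk, hH⟩ := (Nat.dvd_prime_pow hp).1 (hcard ▸ H.card_subgroup_dvd_card)
  obtain ⟨l, -, hZ⟩ := (Nat.dvd_prime_pow hp).1
    (hcard ▸ (Subgroup.zpowers σ).card_subgroup_dvd_card)
  have hl : l ≠ 0 := fun h0 => by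
    rw [h0, pow_zero, Subgroup.card_eq_one, Subgroup.zpowers_eq_bot] at hZ
    exact hσ hZ
  have hlk : l < k := (Nat.pow_lt_pow_iff_right hp.one_lt).1 (hZ ▸ hH ▸ Set.ncard_lt_ncard hlt)
  exact H.eq_top_of_card_eq (by rw [hH, hcard, show k = 2 by omega])

end PrimeSquare

section WildInertia

variable {I K Γ₀ : Type*} [Group I] [Finite I] [Field K] [MulSemiringAction I K]
  [LinearOrderedCommGroupWithZero Γ₀] {v : Valuation K Γ₀} {π : K} {p : ℕ} {σ τ : I}

lemma mem_fixedPoints_of_smul_eq (hp : p.Prime) (hcard : Nat.card I = p ^ 2) (hσ : σ ≠ 1)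
    (hτ : τ ∉ Subgroup.zpowers σ) {x : K} (hσx : σ • x = x) (hτx : τ • x = x) :
    x ∈ FixedPoints.subfield I K := fun ρ => by
  have h := eq_top_of_notMem_zpowers hp hcard hσ hτ (H := MulAction.stabilizer I x) hσx hτx
  exact MulAction.mem_stabilizer_iff.1 (h ▸ Subgroup.mem_top ρ)

/-- An element `x` fixed by `τ` has norm over `σ` fixed by all of `I`, hence of valuation a power
of `v p = v π ^ p ^ 2`. -/
lemma IsUniformizer.prod_pow_smul (hπ : IsUniformizer v ⊤ π) (hp : p.Prime)
    (hcard : Nat.card I = p ^ 2) (hpow : ∀ ρ : I, ρ ^ p = 1) (hcomm : Commute σ τ) (hσ : σ ≠ 1)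
    (hτ : τ ∉ Subgroup.zpowers σ) (hv : ∀ (ρ : I) (x : K), v (ρ • x) = v x)
    (hpI : IsUniformizer v (FixedPoints.subfield I K) (p : K)) (hpπ : v (p : K) = v π ^ p ^ 2) :
    IsUniformizer v (FixedBy.subfield K τ) (∏ j ∈ Finset.range p, τ ^ j • π) := by
  have hπ0 : v π ≠ 0 := (v.ne_zero_iff).2 hπ.ne_zero
  refine ⟨smul_prod_range_pow_smul (hpow τ) π, ?_, ?_, fun x hx hx0 => ?_⟩
  · rw [← v.ne_zero_iff, val_prod_range_pow_smul (hv _)]; exact pow_ne_zero _ hπ0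
  · rw [val_prod_range_pow_smul (hv _)]; exact pow_lt_one' hπ.lt_one hp.ne_zero
  obtain ⟨n, hn⟩ := hπ.exists_zpow x trivial hx0
  have hNτ : ∏ j ∈ Finset.range p, σ ^ j • x ∈ FixedBy.subfield K τ :=
    Subfield.prod_mem _ fun j _ => smul_mem_fixedBy_of_commute (hcomm.pow_left j) hx
  have hN : ∏ j ∈ Finset.range p, σ ^ j • x ∈ FixedPoints.subfield I K :=
    mem_fixedPoints_of_smul_eq hp hcard hσ hτ (smul_prod_range_pow_smul (hpow σ) x) hNτ
  have hN0 : ∏ j ∈ Finset.range p, σ ^ j • x ≠ 0 := by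
    rw [← v.ne_zero_iff, val_prod_range_pow_smul (hv _)]
    exact pow_ne_zero _ ((v.ne_zero_iff).2 hx0)
  obtain ⟨m, hm⟩ := hpI.exists_zpow _ hN hN0
  rw [val_prod_range_pow_smul (hv σ), hn, hpπ, ← zpow_natCast, ← zpow_natCast, ← zpow_mul,
    ← zpow_mul] at hm
  have hnm := zpow_right_injective₀ (zero_lt_iff.2 hπ0) hπ.lt_one.ne hm
  have hnp : n = p * m := by
    have hp0 : (p : ℤ) ≠ 0 := Nat.cast_ne_zero.2 hp.ne_zero
    refine mul_right_cancel₀ hp0 (hnm.trans ?_)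
    push_cast; ring
  exact ⟨m, by rw [hn, val_prod_range_pow_smul (hv τ), hnp, zpow_mul, zpow_natCast]⟩

end WildInertia

section WildTheorem

variable {I K Γ₀ : Type*} [Group I] [Field K] [MulSemiringAction I K]
  [LinearOrderedCommGroupWithZero Γ₀] {v : Valuation K Γ₀} {π ϖ : K} {p : ℕ} {φ : K ≃+* K}
  {σ τ : I} {F : Subfield K}

lemma val_smul_prod_sub_le_pow_three (hp : p.Prime) (hI : ∀ σ : I, IsInertial v σ)
    (hπ : IsUniformizer v ⊤ π) (hpπ : v (p : K) = v π ^ p ^ 2) (hcomm : Commute σ τ)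
    (hτ : DisplacementLE v τ ⊤ (v π)) (hσπ : v (σ • π - π) ≤ v π ^ 3)
    (hϖ : IsUniformizer v (FixedBy.subfield K τ) (∏ j ∈ Finset.range p, τ ^ j • π)) :
    v (σ • ∏ j ∈ Finset.range p, τ ^ j • π - ∏ j ∈ Finset.range p, τ ^ j • π) ≤
      v (∏ j ∈ Finset.range p, τ ^ j • π) ^ 3 := by
  obtain ⟨ϖ, hϖ'⟩ : ∃ ϖ, ϖ = ∏ j ∈ Finset.range p, τ ^ j • π := ⟨_, rfl⟩
  rw [← hϖ'] at hϖ ⊢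
  have hπ0 : v π ≠ 0 := (v.ne_zero_iff).2 hπ.ne_zero
  have hvϖ : v ϖ = v π ^ p := hϖ' ▸ val_prod_range_pow_smul (hI τ).map_smul π
  obtain ⟨u, hu⟩ : ∃ u : Kˣ, (u : K) = σ • π / π :=
    ⟨Units.mk0 _ (div_ne_zero ((smul_ne_zero_iff_ne σ).2 hπ.ne_zero) hπ.ne_zero), rfl⟩
  have hmem : u ∈ oneUnits v (v π ^ 2) := by
    refine ⟨by rw [hu, map_div₀, (hI σ).map_smul, div_self hπ0], ?_⟩
    rw [hu, div_sub_one hπ.ne_zero, map_div₀, div_le_iff₀ (zero_lt_iff.2 hπ0), ← pow_succ]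
    exact hσπ
  have hnorm : σ • ϖ / ϖ = ∏ j ∈ Finset.range p, τ ^ j • (u : K) := by
    rw [hϖ', hu, Finset.smul_prod', ← Finset.prod_div_distrib]
    refine Finset.prod_congr rfl fun j _ => ?_
    rw [smul_div₀', ← mul_smul, ← mul_smul, (hcomm.pow_right j).eq]
  have hlt : v (σ • ϖ / ϖ - 1) < v ϖ := by
    rw [hnorm, hvϖ]
    refine (val_prod_smul_sub_one_le hp (hI τ).map_smul hτ hπ.lt_one.le hmem).trans_lt ?_
    have hpow : ∀ {n}, p < n → v π ^ n < v π ^ p := fun h =>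
      pow_lt_pow_right_of_lt_one₀ (zero_lt_iff.2 hπ0) hπ.lt_one h
    have h2 := hp.two_le
    refine max_lt (max_lt ?_ ?_) ?_
    · rw [← pow_mul]; exact hpow (by omega)
    · rw [hpπ, ← pow_add]; exact hpow (by nlinarith)
    · rw [← pow_add]; exact hpow (by omega)
  have hϖ0 : 0 < v ϖ := zero_lt_iff.2 ((v.ne_zero_iff).2 hϖ.ne_zero)
  refine hϖ.val_le_pow_succ_of_lt_pow
    (Subfield.sub_mem _ (smul_mem_fixedBy_of_commute hcomm hϖ.mem) hϖ.mem) ?_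
  rwa [div_sub_one hϖ.ne_zero, map_div₀, div_lt_iff₀ hϖ0, ← sq] at hlt

lemma val_sum_pow_smul_eq (hp : p.Prime) (hp2 : p ≠ 2) (hσ : IsInertial v σ)
    (hσF : ∀ x ∈ F, σ • x ∈ F) (hϖ : IsUniformizer v F ϖ) (hpϖ : v (p : K) = v ϖ ^ p)
    (hφ : IsFrobenius v p φ) (hFφ : ∀ x ∈ F, φ.symm x ∈ F) (hσϖ : v (σ • ϖ - ϖ) ≤ v ϖ ^ 3) :
    v (∑ j ∈ Finset.range p, σ ^ j • ϖ) = v (p * ϖ) := by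
  have hϖ0 : 0 < v ϖ := zero_lt_iff.2 ((v.ne_zero_iff).2 hϖ.ne_zero)
  have hdisp : DisplacementLE v σ F (v ϖ ^ 2) :=
    hϖ.displacementLE hσ.map_smul
      (fun x hx hvx => hϖ.val_smul_sub_le_sq hp
        (hpϖ.trans_le (pow_le_of_le_one zero_le hϖ.lt_one.le hp.ne_zero)) hσ hφ hσF hFφ
        (hσϖ.trans (pow_le_pow_right_of_le_one' hϖ.lt_one.le (by norm_num))) hx hvx.le)
      (hσϖ.trans_eq (pow_succ _ 2))
  have hlt : max (v (p : K) * v ϖ ^ 2) ((v ϖ ^ 2) ^ (p - 1)) < v (p : K) := by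
    have hp3 : 2 < p := lt_of_le_of_ne hp.two_le hp2.symm
    rw [hpϖ, ← pow_add, ← pow_mul]
    exact max_lt (pow_lt_pow_right_of_lt_one₀ hϖ0 hϖ.lt_one (by omega))
      (pow_lt_pow_right_of_lt_one₀ hϖ0 hϖ.lt_one (by omega))
  refine v.map_eq_of_sub_lt ?_
  rw [map_mul]
  refine (val_sum_smul_sub_le hp hσF hdisp (pow_le_one' hϖ.lt_one.le 2) hϖ.mem).trans_lt ?_
  exact mul_lt_mul_of_pos_right hlt hϖ0

lemma val_ne_pow_of_mem (hp : p.Prime) (hπ0 : π ≠ 0) (hπ1 : v π < 1)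
    (hpF : IsUniformizer v F (p : K)) (hpπ : v (p : K) = v π ^ p ^ 2) {x : K} (hx : x ∈ F) :
    v x ≠ v π ^ (p ^ 2 + p) := by
  intro hvx
  have hvπ : v π ≠ 0 := (v.ne_zero_iff).2 hπ0
  obtain ⟨m, hm⟩ := hpF.exists_zpow x hx ((v.ne_zero_iff).1 (hvx ▸ pow_ne_zero _ hvπ))
  rw [hvx, hpπ, ← zpow_natCast, ← zpow_natCast, ← zpow_mul] at hm
  have hexp := zpow_right_injective₀ (zero_lt_iff.2 hvπ) hπ1.ne hm
  have hdvd : (p : ℤ) ∣ 1 := by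
    refine ⟨m - 1, mul_left_cancel₀ (Nat.cast_ne_zero.2 hp.ne_zero) ?_⟩
    push_cast at hexp
    linarith
  exact hp.one_lt.ne' (by exact_mod_cast Int.eq_one_of_dvd_one (by positivity) hdvd)

/-- If `I` had exponent `p`, let `σ ≠ 1` be deep in the ramification filtration and `τ` a
complementary generator. The norm `ϖ` of `π` over `τ` has `v ϖ = v π ^ p`, and its trace over `σ` is
dominated by `p ϖ`. This trace is fixed by `I` but its valuation is not a power of `v p`. -/
theorem exists_pow_ne_one_of_card_inertia_eq_sq [Finite I] (hp : p.Prime) (hp2 : p ≠ 2)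
    (hI : ∀ σ : I, IsInertial v σ) (hπ : IsUniformizer v ⊤ π)
    (hpI : IsUniformizer v (FixedPoints.subfield I K) (p : K)) (hpπ : v (p : K) = v π ^ p ^ 2)
    (hφ : IsFrobenius v p φ) (hcomm : ∀ (σ : I) (x : K), φ (σ • x) = σ • φ x)
    (hcard : Nat.card I = p ^ 2) : ∃ σ : I, σ ^ p ≠ 1 := by
  by_contra! hpow
  have := Fact.mk hp
  have hmul := IsPGroup.isMulCommutative_of_card_eq_prime_sq hcard
  have hpπ' : v (p : K) ≤ v π :=
    hpπ.trans_le (pow_le_of_le_one zero_le hπ.lt_one.le (pow_ne_zero 2 hp.ne_zero))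
  have htame : ∀ σ : I, DisplacementLE v σ ⊤ (v π) := fun σ =>
    hπ.displacementLE_of_tameCharacter_eq_one hI <|
      tameCharacter_eq_one_of_coprime hI hπ.ne_zero hp.ne_zero hφ hcomm <|
        (Nat.coprime_self_sub_right hp.one_le |>.2 (Nat.coprime_one_right p)).coprime_dvd_left
          (orderOf_dvd_of_pow_eq_one (hpow σ))
  obtain ⟨σ, hσ1, hdeep⟩ := exists_ne_one_val_smul_sub_lt_sq hI hπ hp hpπ' hφ hcomm
    (fun σ => (htame σ π trivial).trans_eq (sq _).symm) (hcard ▸ lt_self_pow₀ hp.one_lt one_lt_two)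
  have hσπ : v (σ • π - π) ≤ v π ^ 3 := hπ.val_le_pow_succ_of_lt_pow trivial hdeep
  obtain ⟨τ, hτ⟩ := exists_notMem_zpowers hp hcard (hpow σ)
  have hστ : Commute σ τ := mul_comm' σ τ
  have hFφ : ∀ x ∈ FixedBy.subfield K τ, φ.symm x ∈ FixedBy.subfield K τ := fun x hx =>
    φ.injective (by rw [hcomm, φ.apply_symm_apply]; exact hx)
  have hϖ := hπ.prod_pow_smul hp hcard hpow hστ hσ1 hτ (fun ρ => (hI ρ).map_smul) hpI hpπ
  have hσϖ := val_smul_prod_sub_le_pow_three hp hI hπ hpπ hστ (htame τ) hσπ hϖ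
  obtain ⟨ϖ, hϖ'⟩ : ∃ ϖ, ϖ = ∏ j ∈ Finset.range p, τ ^ j • π := ⟨_, rfl⟩
  rw [← hϖ'] at hϖ hσϖ
  have hvϖ : v ϖ = v π ^ p := hϖ' ▸ val_prod_range_pow_smul (hI τ).map_smul π
  have htrace : v (∑ j ∈ Finset.range p, σ ^ j • ϖ) = v (p * ϖ) :=
    val_sum_pow_smul_eq hp hp2 (hI σ)
      (fun _ hx => smul_mem_fixedBy_of_commute hστ hx) hϖ (by rw [hvϖ, ← pow_mul, ← sq, hpπ]) hφ
      hFφ hσϖ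
  have ht : ∑ j ∈ Finset.range p, σ ^ j • ϖ ∈ FixedPoints.subfield I K :=
    mem_fixedPoints_of_smul_eq hp hcard hσ1 hτ (smul_sum_range_pow_smul (hpow σ) ϖ)
      (Subfield.sum_mem _ fun j _ => smul_mem_fixedBy_of_commute (hστ.pow_left j) hϖ.mem)
  refine val_ne_pow_of_mem hp hπ.ne_zero hπ.lt_one hpI hpπ ht ?_
  rw [htrace, map_mul, hvϖ, hpπ, ← pow_add]

end WildTheorem

/-! ### Inertia groups of Dedekind domains and number fields -/

open IsDedekindDomain NumberField

section DedekindPlace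

open scoped Pointwise

variable {B L G : Type*} [CommRing B] [IsDedekindDomain B] [Field L] [Algebra B L]
  [IsFractionRing B L] (v : HeightOneSpectrum B)

lemma isUniformizer_top_valuation {π : L} (hπ : v.valuation L π = WithZero.exp (-1)) :
    IsUniformizer (v.valuation L) ⊤ π where
  mem := trivial
  ne_zero := by rintro rfl; exact WithZero.exp_ne_zero (hπ.symm.trans (map_zero _))
  lt_one := by rw [hπ, ← WithZero.exp_zero, WithZero.exp_lt_exp]; norm_num
  exists_zpow x _ hx := by
    refine ⟨-WithZero.log (v.valuation L x), ?_⟩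
    rw [hπ, ← WithZero.exp_zsmul, smul_eq_mul, neg_mul_neg, mul_one,
      WithZero.exp_log (((v.valuation L).ne_zero_iff).2 hx)]

lemma exists_isUniformizer_top : ∃ π : L, IsUniformizer (v.valuation L) ⊤ π :=
  (v.valuation_exists_uniformizer L).imp fun _ => isUniformizer_top_valuation v

lemma exists_val_sub_algebraMap_lt_one {x : L} (hx : v.valuation L x ≤ 1) :
    ∃ a : B, v.valuation L (x - algebraMap B L a) < 1 := by
  obtain ⟨n, ⟨d, hd⟩, hxd⟩ := v.exists_primeCompl_mul_eq_of_integer x hx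
  obtain ⟨e, he⟩ : ∃ e, d * e - 1 ∈ v.asIdeal := by
    obtain ⟨e, t, ht, h⟩ := v.isMaximal.exists_inv hd
    exact ⟨e, by rw [← h, mul_comm e d, sub_add_cancel_left]; exact neg_mem ht⟩
  refine ⟨n * e, ?_⟩
  have hsplit : x - algebraMap B L (n * e) = -(x * algebraMap B L (d * e - 1)) := by
    rw [map_mul, ← hxd, map_sub, map_mul, map_one]; ring
  rw [hsplit, Valuation.map_neg, map_mul]
  exact (mul_le_of_le_one_left' hx).trans_lt ((v.valuation_lt_one_iff_mem _).2 he)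

variable [Group G] [MulSemiringAction G B] {σ : G}

lemma intValuation_smul_le (hσ : σ ∈ MulAction.stabilizer G v.asIdeal) (a : B) :
    v.intValuation (σ • a) ≤ v.intValuation a := by
  rcases eq_or_ne a 0 with rfl | ha
  · rw [smul_zero]
  rw [v.intValuation_if_neg ha, v.intValuation_le_pow_iff_mem]
  have hstab (k : ℕ) : σ • v.asIdeal ^ k = v.asIdeal ^ k := by
    rw [smul_pow', MulAction.mem_stabilizer_iff.1 hσ]
  rw [← hstab, Ideal.smul_mem_pointwise_smul_iff, ← v.intValuation_le_pow_iff_mem,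
    v.intValuation_if_neg ha]

lemma intValuation_smul (hσ : σ ∈ MulAction.stabilizer G v.asIdeal) (a : B) :
    v.intValuation (σ • a) = v.intValuation a :=
  (intValuation_smul_le v hσ a).antisymm <| by
    simpa using intValuation_smul_le v (inv_mem hσ) (σ • a)

variable [MulSemiringAction G L] [SMulDistribClass G B L]

lemma valuation_smul (hσ : σ ∈ MulAction.stabilizer G v.asIdeal) (x : L) :
    v.valuation L (σ • x) = v.valuation L x := by
  obtain ⟨a, b, -, rfl⟩ := IsFractionRing.div_surjective (A := B) x
  rw [smul_div₀', ← algebraMap.coe_smul', ← algebraMap.coe_smul']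
  simp only [map_div₀, v.valuation_of_algebraMap, intValuation_smul v hσ]

lemma isInertial_of_mem_inertia (hσ : σ ∈ v.asIdeal.inertia G) :
    IsInertial (v.valuation L) σ where
  map_smul := valuation_smul v (Ideal.inertia_le_stabilizer _ hσ)
  sub_lt_one x hx := by
    obtain ⟨a, ha⟩ := exists_val_sub_algebraMap_lt_one v hx
    have hsplit : σ • x - x = σ • (x - algebraMap B L a) + algebraMap B L (σ • a - a)
        - (x - algebraMap B L a) := by
      rw [smul_sub, map_sub, ← algebraMap.coe_smul']; ring
    have hsmul := valuation_smul v (Ideal.inertia_le_stabilizer _ hσ) (x - algebraMap B L a)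
    rw [hsplit]
    exact (v.valuation L).map_sub_lt ((v.valuation L).map_add_lt (hsmul.trans_lt ha)
      ((v.valuation_lt_one_iff_mem _).2 (AddSubgroup.mem_inertia.1 hσ a))) ha

end DedekindPlace

lemma val_pow_sub_pow_lt_one {K Γ₀ : Type*} [Field K] [LinearOrderedCommGroupWithZero Γ₀]
    {v : Valuation K Γ₀} {x y : K} (hx : v x ≤ 1) (hy : v y ≤ 1) (h : v (x - y) < 1) (n : ℕ) :
    v (x ^ n - y ^ n) < 1 := by
  have hres := residue_eq_residue_iff (v := v) (x := ⟨x, hx⟩) (y := ⟨y, hy⟩) |>.2 h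
  have hpow := congrArg (· ^ n) hres
  simp only [← map_pow] at hpow
  exact residue_eq_residue_iff.1 hpow

section DedekindPlace

open scoped Pointwise

variable {A K B L G : Type*} [CommRing A] [CommRing B] [IsDedekindDomain B] [Algebra A B]
  [Field L] [Algebra B L] [IsFractionRing B L] [Group G] [MulSemiringAction G B]
  [MulSemiringAction G L] [SMulDistribClass G B L]

lemma isFrobenius_of_isArithFrobAt [SMulCommClass G A B] {v : HeightOneSpectrum B} {φ : G}
    (hφ : IsArithFrobAt A φ v.asIdeal) :
    IsFrobenius (v.valuation L) (Nat.card (A ⧸ v.asIdeal.under A))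
      (MulSemiringAction.toRingEquiv G L φ) where
  map_apply := valuation_smul v hφ.mem_stabilizer
  sub_pow_lt_one x hx := by
    obtain ⟨a, ha⟩ := exists_val_sub_algebraMap_lt_one v hx
    set q := Nat.card (A ⧸ v.asIdeal.under A)
    have hsplit : φ • x - x ^ q = φ • (x - algebraMap B L a) + algebraMap B L (φ • a - a ^ q)
        - (x ^ q - algebraMap B L a ^ q) := by
      rw [smul_sub, map_sub, map_pow, ← algebraMap.coe_smul']; ring
    change v.valuation L (φ • x - x ^ q) < 1
    rw [hsplit]
    exact (v.valuation L).map_sub_lt ((v.valuation L).map_add_lt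
      ((valuation_smul v hφ.mem_stabilizer _).trans_lt ha)
      ((v.valuation_lt_one_iff_mem _).2 (hφ a)))
      (val_pow_sub_pow_lt_one hx (v.valuation_le_one a) ha q)

end DedekindPlace

section Ramification

variable {A K L B G : Type*} [CommRing A] [IsDedekindDomain A] [Ring.HasFiniteQuotients A]
  [CommRing B] [IsDedekindDomain B] [Algebra A B] [Module.Finite A B] [Module.IsTorsionFree A B]
  [Group G] [Finite G] [MulSemiringAction G B] [IsGaloisGroup G A B] (v : HeightOneSpectrum B)

variable (A G) in
lemma card_inertia_eq_ramificationIdx :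
    Nat.card (v.asIdeal.inertia G) = v.asIdeal.ramificationIdx A := by
  have : Finite (A ⧸ v.asIdeal.under A) :=
    Ring.HasFiniteQuotients.finiteQuotient (Ideal.under_ne_bot A v.ne_bot)
  have := v.isMaximal.under A
  have : Finite (v.asIdeal.under A).ResidueField :=
    Finite.of_surjective _ (Ideal.bijective_algebraMap_quotient_residueField _).2
  rw [Ideal.card_inertia_eq_ramificationIdxIn (v.asIdeal.under A) v.asIdeal,
    Ideal.ramificationIdxIn_eq_ramificationIdx (v.asIdeal.under A) v.asIdeal G]

variable (G) in
lemma valuation_pow_card_inertia [Field K] [Algebra A K] [IsFractionRing A K] [Field L]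
    [Algebra B L] [IsFractionRing B L] [Algebra K L] [Algebra A L] [IsScalarTower A K L]
    [IsScalarTower A B L] (u : HeightOneSpectrum A) [v.asIdeal.LiesOver u.asIdeal] (x : K) :
    u.valuation K x ^ Nat.card (v.asIdeal.inertia G) = v.valuation L (algebraMap K L x) := by
  rw [card_inertia_eq_ramificationIdx A G, ← HeightOneSpectrum.valuation_liesOver L u v,
    Ideal.ramificationIdx'_eq_ramificationIdx _ _ u.ne_bot]

end Ramification

section Int

variable {B : Type*} [CommRing B] {P : Ideal B} {p : ℕ}

lemma under_int_eq_span [P.IsPrime] (hp : p.Prime) (hpP : (p : B) ∈ P) :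
    P.under ℤ = Ideal.span {(p : ℤ)} := by
  have hpZ : Prime (p : ℤ) := Nat.prime_iff_prime_int.1 hp
  have hmax : (Ideal.span {(p : ℤ)}).IsMaximal :=
    PrincipalIdealRing.isMaximal_of_irreducible hpZ.irreducible
  refine (hmax.eq_of_le (Ideal.IsPrime.ne_top inferInstance) ?_).symm
  rw [Ideal.span_singleton_le_iff_mem, Ideal.mem_comap]
  simpa using hpP

lemma card_int_quotient_under [P.IsPrime] (hp : p.Prime) (hpP : (p : B) ∈ P) :
    Nat.card (ℤ ⧸ P.under ℤ) = p := by
  rw [under_int_eq_span hp hpP, Nat.card_congr (Int.quotientSpanNatEquivZMod p).toEquiv,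
    Nat.card_zmod]

lemma valuation_prime_eq [IsDedekindDomain B] [Module.Finite ℤ B] [Module.IsTorsionFree ℤ B]
    {L G : Type*} [Field L] [CharZero L] [Algebra B L] [IsFractionRing B L] [Group G] [Finite G]
    [MulSemiringAction G B] [IsGaloisGroup G ℤ B] (v : HeightOneSpectrum B) (hp : p.Prime)
    (hpv : (p : B) ∈ v.asIdeal) :
    v.valuation L (p : L) = WithZero.exp (-1) ^ Nat.card (v.asIdeal.inertia G) := by
  have hpZ : Prime (p : ℤ) := Nat.prime_iff_prime_int.1 hp
  let u : HeightOneSpectrum ℤ := ⟨Ideal.span {(p : ℤ)},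
    (Ideal.span_singleton_prime hpZ.ne_zero).2 hpZ, by simpa using hp.ne_zero⟩
  have : v.asIdeal.LiesOver u.asIdeal := ⟨(under_int_eq_span hp hpv).symm⟩
  have hu : u.valuation ℚ (p : ℚ) = WithZero.exp (-1) := by
    rw [← u.intValuation_singleton (Int.natCast_ne_zero.2 hp.ne_zero) rfl,
      ← u.valuation_of_algebraMap (K := ℚ)]
    rfl
  rw [← hu, valuation_pow_card_inertia (L := L) G v u, map_natCast (algebraMap ℚ L)]

end Int

section Subfields

variable {L : Type*} [Field L] (v : HeightOneSpectrum (𝓞 L)) (E : Type*) [Field E] [Algebra E L]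

/-- The finite place of the subfield `E` lying below `v`. -/
noncomputable def placeBelow : HeightOneSpectrum (𝓞 E) :=
  ⟨v.asIdeal.under (𝓞 E), inferInstance, Ideal.under_ne_bot _ v.ne_bot⟩

instance : v.asIdeal.LiesOver (placeBelow v E).asIdeal := ⟨rfl⟩

variable {v} in
lemma natCast_mem_placeBelow {n : ℕ} (hnv : (n : 𝓞 L) ∈ v.asIdeal) :
    (n : 𝓞 E) ∈ (placeBelow v E).asIdeal := by
  change algebraMap (𝓞 E) (𝓞 L) n ∈ v.asIdeal
  rwa [map_natCast]

variable [NumberField L] [NumberField E]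

/-- The inertia group of a finite place, inside the Galois group over `ℚ`. -/
abbrev inertiaGroup : Subgroup Gal(L/ℚ) := v.asIdeal.inertia Gal(L/ℚ)

lemma card_inertia_subgroup (T : Subgroup Gal(L/ℚ)) : Nat.card (v.asIdeal.inertia T) =
    Nat.card (inertiaGroup v ⊓ T : Subgroup Gal(L/ℚ)) := by
  rw [← AddSubgroup.inertia_map_subtype,
    Subgroup.card_map_of_injective (Subgroup.subtype_injective _)]

lemma exists_pow_card_eq_valuation [IsGalois ℚ L] {T : Subgroup Gal(L/ℚ)}
    (hT : T ≤ inertiaGroup v) {x : L} (hx : ∀ σ ∈ T, σ x = x) :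
    ∃ y, y ^ Nat.card T = v.valuation L x := by
  let E := IntermediateField.fixedField T
  have hxE : x ∈ E := fun σ => hx _ σ.2
  have : IsGaloisGroup T E L := IsGaloisGroup.subgroup Gal(L/ℚ) ℚ L T
  have : IsGaloisGroup T (𝓞 E) (𝓞 L) := instIsGaloisGroupRingOfIntegersOfNumberField E L T
  have hval := valuation_pow_card_inertia (L := L) T v (placeBelow v E) (⟨x, hxE⟩ : E)
  rw [card_inertia_subgroup, inf_eq_right.2 hT] at hval
  exact ⟨_, hval⟩

lemma restrictNormalHom_mem_inertiaGroup [IsGalois ℚ E] {σ : Gal(L/ℚ)} (hσ : σ ∈ inertiaGroup v) :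
    AlgEquiv.restrictNormalHom E σ ∈ inertiaGroup (placeBelow v E) := by
  refine AddSubgroup.mem_inertia.2 fun a => ?_
  have hcomm : algebraMap (𝓞 E) (𝓞 L) (AlgEquiv.restrictNormalHom E σ • a) =
      σ • algebraMap (𝓞 E) (𝓞 L) a := by
    apply RingOfIntegers.coe_injective
    exact AlgEquiv.restrictNormal_commutes σ E (a : E)
  have hmem := AddSubgroup.mem_inertia.1 hσ (algebraMap (𝓞 E) (𝓞 L) a)
  rw [← hcomm, ← map_sub] at hmem
  exact hmem

variable [IsGalois ℚ E] [IsGalois ℚ L]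

lemma card_inertiaGroup_placeBelow_mul (T : Subgroup Gal(L/ℚ)) [IsGaloisGroup T E L] :
    Nat.card (inertiaGroup (placeBelow v E)) *
      Nat.card (inertiaGroup v ⊓ T : Subgroup Gal(L/ℚ)) = Nat.card (inertiaGroup v) := by
  have : IsGaloisGroup T (𝓞 E) (𝓞 L) := instIsGaloisGroupRingOfIntegersOfNumberField E L T
  rw [← card_inertia_subgroup, card_inertia_eq_ramificationIdx (𝓞 E) T,
    card_inertia_eq_ramificationIdx ℤ, card_inertia_eq_ramificationIdx ℤ]
  exact (Ideal.ramificationIdx_tower _ _).symm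

lemma ker_restrictNormalHom (T : Subgroup Gal(L/ℚ)) [IsGaloisGroup T E L] :
    (AlgEquiv.restrictNormalHom E : Gal(L/ℚ) →* Gal(E/ℚ)).ker = T := by
  rw [← IsGaloisGroup.fixingSubgroup_range_algebraMap' Gal(L/ℚ) ℚ L T E]
  ext σ
  simp only [MonoidHom.mem_ker, mem_fixingSubgroup_iff, Set.forall_mem_range, AlgEquiv.ext_iff,
    ← (algebraMap E L).injective.eq_iff, AlgEquiv.smul_def, AlgEquiv.one_apply]
  exact forall_congr' fun x => by rw [← AlgEquiv.restrictNormal_commutes σ E x]; rfl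

lemma map_restrictNormalHom_inertiaGroup (T : Subgroup Gal(L/ℚ)) [IsGaloisGroup T E L] :
    (inertiaGroup v).map (AlgEquiv.restrictNormalHom E) = inertiaGroup (placeBelow v E) := by
  apply Subgroup.eq_of_le_of_card_ge
  · rintro _ ⟨σ, hσ, rfl⟩
    exact restrictNormalHom_mem_inertiaGroup v E hσ
  · have hpos : 0 < Nat.card (inertiaGroup v ⊓ T : Subgroup Gal(L/ℚ)) := Nat.card_pos
    have hrel : Nat.card (inertiaGroup v ⊓ T : Subgroup Gal(L/ℚ)) * T.relIndex (inertiaGroup v) =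
        Nat.card (inertiaGroup v) := by
      rw [← Subgroup.inf_relIndex_left, ← Subgroup.relIndex_bot_left, ← Subgroup.relIndex_bot_left]
      exact Subgroup.relIndex_mul_relIndex _ _ _ bot_le inf_le_left
    rw [← Subgroup.relIndex_ker, ker_restrictNormalHom E T]
    refine (Nat.eq_of_mul_eq_mul_right hpos ?_).le
    rw [card_inertiaGroup_placeBelow_mul, mul_comm, hrel]

end Subfields

section InertiaGroups

variable {L : Type*} [Field L] [NumberField L] (v : HeightOneSpectrum (𝓞 L)) {p : ℕ}

lemma valuation_natCast_lt_one (hpv : (p : 𝓞 L) ∈ v.asIdeal) : v.valuation L (p : L) < 1 := by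
  rw [← map_natCast (algebraMap (𝓞 L) L)]
  exact (v.valuation_lt_one_iff_mem _).2 hpv

lemma isUniformizer_natCast [IsGalois ℚ L] (hp : p.Prime) (hpv : (p : 𝓞 L) ∈ v.asIdeal) :
    IsUniformizer (v.valuation L) (FixedPoints.subfield (inertiaGroup v) L) (p : L) where
  mem := natCast_mem _ p
  ne_zero := Nat.cast_ne_zero.2 hp.ne_zero
  lt_one := valuation_natCast_lt_one v hpv
  exists_zpow x hx hx0 := by
    obtain ⟨y, hy⟩ := exists_pow_card_eq_valuation v le_rfl fun σ hσ => hx ⟨σ, hσ⟩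
    have hy0 : y ≠ 0 := by
      rintro rfl
      rw [zero_pow Nat.card_pos.ne'] at hy
      exact (v.valuation L).ne_zero_iff.2 hx0 hy.symm
    refine ⟨-WithZero.log y, ?_⟩
    have hexp : WithZero.exp (-1 : ℤ) ^ (-WithZero.log y) = y := by
      rw [← WithZero.exp_zsmul, smul_eq_mul, neg_mul_neg, mul_one, WithZero.exp_log hy0]
    rw [← hy, valuation_prime_eq (G := Gal(L/ℚ)) v hp hpv, ← zpow_natCast, ← zpow_natCast,
      zpow_comm, hexp]

lemma exists_isFrobenius [IsGalois ℚ L] (hp : p.Prime) (hpv : (p : 𝓞 L) ∈ v.asIdeal) :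
    ∃ φ : Gal(L/ℚ), IsFrobenius (v.valuation L) p (MulSemiringAction.toRingEquiv Gal(L/ℚ) L φ) := by
  have : Finite (𝓞 L ⧸ v.asIdeal) := Ring.HasFiniteQuotients.finiteQuotient v.ne_bot
  obtain ⟨φ, hφ⟩ := IsArithFrobAt.exists_of_isInvariant ℤ Gal(L/ℚ) v.asIdeal
  have hfrob := isFrobenius_of_isArithFrobAt (L := L) hφ
  rw [card_int_quotient_under hp hpv] at hfrob
  exact ⟨φ, hfrob⟩

variable [IsAbelianGalois ℚ L]

lemma card_dvd_sub_one_of_le_inertiaGroup (hp : p.Prime) (hpv : (p : 𝓞 L) ∈ v.asIdeal)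
    {T : Subgroup Gal(L/ℚ)} (hT : T ≤ inertiaGroup v) (hcop : (Nat.card T).Coprime p) :
    Nat.card T ∣ p - 1 := by
  obtain ⟨φ, hφ⟩ := exists_isFrobenius v hp hpv
  obtain ⟨π, hπ⟩ := exists_isUniformizer_top (L := L) v
  refine card_inertia_dvd_sub_one hp.ne_zero
    (fun σ : T => isInertial_of_mem_inertia (L := L) v (hT σ.2)) hπ
    (valuation_natCast_lt_one v hpv) hφ (fun σ x => ?_) hcop
  exact DFunLike.congr_fun (mul_comm' φ (σ : Gal(L/ℚ))) x

lemma exists_mem_inertiaGroup_pow_ne_one (hp : p.Prime) (hp2 : p ≠ 2)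
    (hpv : (p : 𝓞 L) ∈ v.asIdeal) (hcard : Nat.card (inertiaGroup v) = p ^ 2) :
    ∃ σ ∈ inertiaGroup v, σ ^ p ≠ 1 := by
  obtain ⟨φ, hφ⟩ := exists_isFrobenius v hp hpv
  obtain ⟨π, hπ⟩ := v.valuation_exists_uniformizer L
  have hval : v.valuation L (p : L) = v.valuation L π ^ p ^ 2 := by
    rw [hπ, ← hcard, ← valuation_prime_eq (L := L) v hp hpv]
  obtain ⟨σ, hσ⟩ := exists_pow_ne_one_of_card_inertia_eq_sq hp hp2
    (fun σ : inertiaGroup v => isInertial_of_mem_inertia (L := L) v σ.2)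
    (isUniformizer_top_valuation v hπ) (isUniformizer_natCast v hp hpv) hval hφ
    (fun σ x => DFunLike.congr_fun (mul_comm' φ (σ : Gal(L/ℚ))) x) hcard
  exact ⟨σ, σ.2, fun h => hσ (Subtype.ext h)⟩

lemma exists_mem_inertiaGroup_pow_notMem (hp : p.Prime) (hp2 : p ≠ 2)
    (hpv : (p : 𝓞 L) ∈ v.asIdeal) {A : Subgroup Gal(L/ℚ)}
    (hcard : A.relIndex (inertiaGroup v) = p ^ 2) : ∃ σ ∈ inertiaGroup v, σ ^ p ∉ A := by
  let E := IntermediateField.fixedField A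
  have : IsGaloisGroup A E L := IsGaloisGroup.subgroup Gal(L/ℚ) ℚ L A
  have : IsAbelianGalois ℚ E := IsAbelianGalois.tower_bot ℚ E L
  have hmap := map_restrictNormalHom_inertiaGroup v E A
  have hker := ker_restrictNormalHom E A
  obtain ⟨τ, hτ, hne⟩ := exists_mem_inertiaGroup_pow_ne_one (placeBelow v E) hp hp2
    (natCast_mem_placeBelow E hpv) (by rw [← hmap, ← Subgroup.relIndex_ker, hker, hcard])
  rw [← hmap] at hτ
  obtain ⟨σ, hσ, rfl⟩ := hτ
  refine ⟨σ, hσ, fun h => hne ?_⟩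
  rwa [← hker, MonoidHom.mem_ker, map_pow] at h

end InertiaGroups

section Ramification

variable {L : Type*} [Field L] [NumberField L]

lemma exists_heightOneSpectrum_natCast_mem {p : ℕ} (hp : p.Prime) :
    ∃ v : HeightOneSpectrum (𝓞 L), (p : 𝓞 L) ∈ v.asIdeal := by
  have hpZ : Prime (p : ℤ) := Nat.prime_iff_prime_int.1 hp
  have : (Ideal.span {(p : ℤ)}).IsPrime := (Ideal.span_singleton_prime hpZ.ne_zero).2 hpZ
  obtain ⟨⟨P, hP, hover⟩⟩ := (Ideal.span {(p : ℤ)}).nonempty_primesOver (S := 𝓞 L)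
  have hmem : (p : 𝓞 L) ∈ P := by
    have hpP : (p : ℤ) ∈ P.under ℤ := hover.over ▸ Ideal.mem_span_singleton_self _
    simpa using Ideal.mem_comap.1 hpP
  refine ⟨⟨P, hP, ?_⟩, hmem⟩
  rintro rfl
  exact hp.ne_zero (Nat.cast_eq_zero.1 (Ideal.mem_bot.1 hmem))

variable [IsGalois ℚ L]

lemma inertiaGroup_eq_bot_iff (v : HeightOneSpectrum (𝓞 L)) :
    inertiaGroup v = ⊥ ↔ Algebra.IsUnramifiedAt ℤ v.asIdeal := by
  have : v.asIdeal.IsMaximal := v.isMaximal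
  have : (v.asIdeal.under ℤ).IsMaximal := inferInstance
  have : Finite (ℤ ⧸ v.asIdeal.under ℤ) :=
    Ring.HasFiniteQuotients.finiteQuotient (Ideal.under_ne_bot _ v.ne_bot)
  have : Finite (v.asIdeal.under ℤ).ResidueField :=
    Finite.of_surjective _ (Ideal.bijective_algebraMap_quotient_residueField _).2
  rw [← Subgroup.card_eq_one, card_inertia_eq_ramificationIdx ℤ, Ideal.ramificationIdx_eq_one_iff]

lemma inertiaGroup_eq_bot_of_not_dvd_discr {p : ℕ} (hp : p.Prime) (hdvd : ¬ p ∣ (discr L).natAbs)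
    {v : HeightOneSpectrum (𝓞 L)} (hpv : (p : 𝓞 L) ∈ v.asIdeal) : inertiaGroup v = ⊥ := by
  rw [inertiaGroup_eq_bot_iff]
  refine (not_dvd_discr_iff_forall_mem L (𝓞 L) (Nat.prime_iff_prime_int.1 hp)).1 ?_ _
    v.isPrime (by simpa using hpv)
  rwa [Int.natCast_dvd]

/-- By Minkowski's theorem, the fixed field of `H`, being unramified everywhere, is `ℚ`. -/
lemma eq_top_of_inertiaGroup_le (P : ℕ → HeightOneSpectrum (𝓞 L))
    (hP : ∀ p, p.Prime → (p : 𝓞 L) ∈ (P p).asIdeal) (H : Subgroup Gal(L/ℚ)) [H.Normal]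
    (hH : ∀ p, p.Prime → inertiaGroup (P p) ≤ H) : H = ⊤ := by
  let E := IntermediateField.fixedField H
  have : IsGaloisGroup H E L := IsGaloisGroup.subgroup Gal(L/ℚ) ℚ L H
  have : IsGalois ℚ E := IsGalois.of_fixedField_normal_subgroup H
  have hdegree : ¬ 1 < Module.finrank ℚ E := by
    intro hlt
    obtain ⟨p, hp, hram⟩ := exists_not_isUnramifiedAt_int_of_isGalois (K := E) (𝒪 := 𝓞 E) hlt
    refine hram _ (placeBelow (P p) E).isPrime (natCast_mem_placeBelow E (hP p hp)) ?_
    rw [← inertiaGroup_eq_bot_iff, ← map_restrictNormalHom_inertiaGroup (P p) E H,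
      Subgroup.map_eq_bot_iff, ker_restrictNormalHom E H]
    exact hH p hp
  have hbot : E = ⊥ := IntermediateField.finrank_eq_one_iff.1
    (le_antisymm (not_lt.1 hdegree) Module.finrank_pos)
  rw [← IntermediateField.fixingSubgroup_fixedField H, ← IntermediateField.fixingSubgroup_bot]
  exact congrArg _ hbot

end Ramification

section RootsOfUnity

variable {L : Type*} [Field L] [NumberField L] {v : HeightOneSpectrum (𝓞 L)} {p : ℕ}

lemma natCast_notMem_of_coprime (hpv : (p : 𝓞 L) ∈ v.asIdeal) {m : ℕ} (hm : m.Coprime p) :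
    (m : 𝓞 L) ∉ v.asIdeal := by
  intro hmv
  obtain ⟨a, b, hab⟩ := Nat.isCoprime_iff_coprime.2 hm
  have hone : (a : 𝓞 L) * m + b * p = 1 := by exact_mod_cast congrArg (Int.cast : ℤ → 𝓞 L) hab
  refine v.isPrime.ne_top ((Ideal.eq_top_iff_one _).2 ?_)
  rw [← hone]
  exact add_mem (Ideal.mul_mem_left _ _ hmv) (Ideal.mul_mem_left _ _ hpv)

variable [IsGalois ℚ L]

/-- If `φ` is a Frobenius then so is `φ * σ`, and all of them act in the same way on `η`. -/
lemma apply_eq_self_of_mem_inertiaGroup (hpv : (p : 𝓞 L) ∈ v.asIdeal) {m : ℕ} (hm : m.Coprime p)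
    (hm0 : 0 < m) {η : L} (hη : η ^ m = 1) {σ : Gal(L/ℚ)} (hσ : σ ∈ inertiaGroup v) : σ η = η := by
  have : Finite (𝓞 L ⧸ v.asIdeal) := Ring.HasFiniteQuotients.finiteQuotient v.ne_bot
  obtain ⟨φ, hφ⟩ := IsArithFrobAt.exists_of_isInvariant ℤ Gal(L/ℚ) v.asIdeal
  have hφσ : IsArithFrobAt ℤ (φ * σ) v.asIdeal := by
    intro a
    rw [← sub_add_sub_cancel _ ((σ • a) ^ Nat.card (ℤ ⧸ v.asIdeal.under ℤ))]
    refine add_mem ?_ (Ideal.mem_of_dvd _ (sub_dvd_pow_sub_pow _ _ _) (hσ a))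
    simpa only [MulSemiringAction.toAlgHom_apply, mul_smul] using hφ (σ • a)
  let a : 𝓞 L := ⟨η, .of_pow hm0 (hη ▸ isIntegral_one)⟩
  have ha : a ^ m = 1 := RingOfIntegers.ext hη
  have hmv := natCast_notMem_of_coprime hpv hm
  have hfrob := (hφσ.apply_of_pow_eq_one ha hmv).trans (hφ.apply_of_pow_eq_one ha hmv).symm
  simp only [MulSemiringAction.toAlgHom_apply, mul_smul, smul_left_cancel_iff] at hfrob
  exact congrArg (algebraMap (𝓞 L) L) hfrob

end RootsOfUnity

/-! ### Finite commutative groups -/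

section FiniteGroups

lemma exists_le_index_eq_prime_pow_succ {G : Type*} [Group G] [Finite G] {p : ℕ} (hp : p.Prime)
    (A : Subgroup G) [A.Normal] (hA : ∀ g : G, ∃ n, g ^ p ^ n ∈ A) {k : ℕ} (hk : p ^ k < A.index) :
    ∃ B : Subgroup G, A ≤ B ∧ B.index = p ^ (k + 1) := by
  have : Fact p.Prime := ⟨hp⟩
  have hpGroup : IsPGroup p (G ⧸ A) := by
    intro g
    obtain ⟨g, rfl⟩ := QuotientGroup.mk_surjective g
    obtain ⟨n, hn⟩ := hA g
    exact ⟨n, by rwa [← QuotientGroup.mk_pow, QuotientGroup.eq_one_iff]⟩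
  obtain ⟨m, hm⟩ := IsPGroup.iff_card.1 hpGroup
  have hkm : k < m := (Nat.pow_lt_pow_iff_right hp.one_lt).1 (hk.trans_eq hm)
  obtain ⟨B, hB⟩ := Sylow.exists_subgroup_card_pow_prime (G := G ⧸ A) p (n := m - (k + 1))
    (hm ▸ pow_dvd_pow p (m.sub_le _))
  refine ⟨B.comap (QuotientGroup.mk' A), QuotientGroup.le_comap_mk' A B, ?_⟩
  rw [Subgroup.index_comap_of_surjective _ (QuotientGroup.mk'_surjective A)]
  refine Nat.eq_of_mul_eq_mul_left (pow_pos hp.pos (m - (k + 1))) ?_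
  rw [← hB, B.card_mul_index, hm, hB, ← pow_add, Nat.sub_add_cancel (Nat.succ_le_of_lt hkm)]

lemma card_ker_comp_le {A B C : Type*} [Group A] [Group B] [Group C] [Finite A] [Finite B]
    (f : A →* B) (g : B →* C) : Nat.card (g.comp f).ker ≤ Nat.card f.ker * Nat.card g.ker := by
  have hmap : Nat.card ((g.comp f).ker.map f) ≤ Nat.card g.ker :=
    Subgroup.card_le_of_le (Subgroup.map_le_iff_le_comap.2 (MonoidHom.comap_ker g f).ge)
  have hker : f.ker ≤ (g.comp f).ker := by
    rw [← MonoidHom.comap_ker]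
    exact f.ker_le_comap _
  have hmul := Subgroup.relIndex_mul_relIndex ⊥ f.ker (g.comp f).ker bot_le hker
  rw [Subgroup.relIndex_bot_left, Subgroup.relIndex_bot_left, Subgroup.relIndex_ker] at hmul
  exact hmul.symm.trans_le (Nat.mul_le_mul_left _ hmap)

variable {H : Type*} [CommGroup H] [Finite H] {p : ℕ}

lemma card_ker_powMonoidHom_pow_le (hker : Nat.card (powMonoidHom p : H →* H).ker ≤ p) (k : ℕ) :
    Nat.card (powMonoidHom (p ^ k) : H →* H).ker ≤ p ^ k := by
  induction k with
  | zero =>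
    have hbot : (powMonoidHom (p ^ 0) : H →* H).ker = ⊥ := by
      ext x
      simp [MonoidHom.mem_ker]
    rw [hbot, Subgroup.card_bot, pow_zero]
  | succ k ih =>
    have hcomp : (powMonoidHom (p ^ (k + 1)) : H →* H) =
        (powMonoidHom p).comp (powMonoidHom (p ^ k)) := by
      ext x
      simp [← pow_mul, pow_succ]
    rw [hcomp, pow_succ]
    exact (card_ker_comp_le _ _).trans (Nat.mul_le_mul ih hker)

lemma card_ker_powMonoidHom_le (hp : p.Prime)
    (hquot : ∀ A : Subgroup H, A.index = p ^ 2 → ∃ σ, σ ^ p ∉ A) :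
    Nat.card (powMonoidHom p : H →* H).ker ≤ p := by
  set f : H →* H := powMonoidHom p
  have hindex : Nat.card f.ker = f.range.index := by
    refine Nat.eq_of_mul_eq_mul_right (Nat.card_pos (α := f.range)) ?_
    rw [← Subgroup.index_ker, f.ker.card_mul_index, Subgroup.index_ker, mul_comm,
      f.range.card_mul_index]
  have hpow (σ : H) : σ ^ p ∈ f.range := ⟨σ, rfl⟩
  rw [hindex]
  by_contra! hlt
  obtain ⟨A, hA, hAindex⟩ := exists_le_index_eq_prime_pow_succ (k := 1) hp f.range
    (fun σ => ⟨1, by simpa only [pow_one] using hpow σ⟩) (by rwa [pow_one])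
  obtain ⟨σ, hσ⟩ := hquot A hAindex
  exact hσ (hA (hpow σ))

lemma card_le_pow_mul_sub_one (hp : p.Prime) (k : ℕ)
    (hexp : ∀ h : H, (∃ n, h ^ p ^ n = 1) → h ^ p ^ k = 1)
    (htame : ∀ T : Subgroup H, (Nat.card T).Coprime p → Nat.card T ≤ p - 1)
    (hwild : ∀ A : Subgroup H, A.index = p ^ 2 → ∃ σ, σ ^ p ∉ A) :
    Nat.card H ≤ p ^ k * (p - 1) := by
  have : Fact p.Prime := ⟨hp⟩
  set f : H →* H := powMonoidHom (p ^ k)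
  have hcoprime : (Nat.card f.range).Coprime p := by
    rw [Nat.coprime_comm, hp.coprime_iff_not_dvd]
    intro hdvd
    obtain ⟨⟨x, hx⟩, horder⟩ := exists_prime_orderOf_dvd_card' p hdvd
    rw [Subgroup.orderOf_mk] at horder
    obtain ⟨h, rfl⟩ := hx
    have hpow : (h ^ p ^ k) ^ p = 1 := orderOf_dvd_iff_pow_eq_one.1 horder.dvd
    have hone : f h = 1 := hexp h ⟨k + 1, by rwa [pow_succ, pow_mul]⟩
    rw [hone, orderOf_one] at horder
    exact hp.one_lt.ne horder
  rw [← f.ker.card_mul_index, Subgroup.index_ker]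
  exact Nat.mul_le_mul (card_ker_powMonoidHom_pow_le (card_ker_powMonoidHom_le hp hwild) k)
    (htame _ hcoprime)

end FiniteGroups

/-! ### Orders of inertia groups -/

section InertiaBounds

open scoped IsMulCommutative

variable {L : Type*} [Field L] [NumberField L] [IsAbelianGalois ℚ L] {v : HeightOneSpectrum (𝓞 L)}
  {p : ℕ}

lemma card_inertiaGroup_le (hp : p.Prime) (hp2 : p ≠ 2) (hpv : (p : 𝓞 L) ∈ v.asIdeal) {k : ℕ}
    (hexp : ∀ σ ∈ inertiaGroup v, (∃ n, σ ^ p ^ n = 1) → σ ^ p ^ k = 1) :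
    Nat.card (inertiaGroup v) ≤ p ^ k * (p - 1) := by
  refine card_le_pow_mul_sub_one hp k ?_ (fun T hT => ?_) (fun A hA => ?_)
  · rintro ⟨σ, hσ⟩ ⟨n, hn⟩
    exact Subtype.ext (hexp σ hσ ⟨n, congrArg Subtype.val hn⟩)
  · rw [← Subgroup.card_map_of_injective (inertiaGroup v).subtype_injective] at hT ⊢
    exact Nat.le_of_dvd (Nat.sub_pos_of_lt hp.one_lt)
      (card_dvd_sub_one_of_le_inertiaGroup v hp hpv (Subgroup.map_subtype_le T) hT)
  · obtain ⟨σ, hσ, hσA⟩ := exists_mem_inertiaGroup_pow_notMem v hp hp2 hpv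
      (A := A.map (inertiaGroup v).subtype) (by
        rw [Subgroup.relIndex, Subgroup.subgroupOf, Subgroup.comap_map_eq_self_of_injective
          (inertiaGroup v).subtype_injective, hA])
    exact ⟨⟨σ, hσ⟩, fun h => hσA ⟨_, h, rfl⟩⟩

lemma exists_pow_two_pow_eq_one (h2v : (2 : 𝓞 L) ∈ v.asIdeal) {σ : Gal(L/ℚ)}
    (hσ : σ ∈ inertiaGroup v) : ∃ n, σ ^ 2 ^ n = 1 := by
  obtain ⟨n, m, hm, horder⟩ := Nat.exists_eq_two_pow_mul_odd (orderOf_pos σ).ne'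
  have hcard : Nat.card (Subgroup.zpowers (σ ^ 2 ^ n)) = m := by
    rw [Nat.card_zpowers, orderOf_pow, horder, Nat.gcd_mul_right_left,
      Nat.mul_div_cancel_left _ (Nat.two_pow_pos n)]
  have hdvd := card_dvd_sub_one_of_le_inertiaGroup v Nat.prime_two h2v
    ((Subgroup.zpowers_le).2 (pow_mem hσ (2 ^ n))) (hcard ▸ Nat.coprime_two_right.2 hm)
  rw [Nat.card_zpowers, Nat.dvd_one, orderOf_eq_one_iff] at hdvd
  exact ⟨n, hdvd⟩

end InertiaBounds

section RootsOfUnity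

lemma pow_prime_pow_sub_one_eq_one {p e t : ℕ} (hp : p.Prime) (he : 0 < e) {u : (ZMod (p ^ e))ˣ}
    (hu : u ^ p ^ t = 1) : u ^ p ^ (e - 1) = 1 := by
  have htotient := ZMod.pow_totient u
  rw [Nat.totient_prime_pow hp he] at htotient
  rw [← orderOf_dvd_iff_pow_eq_one] at hu htotient ⊢
  have hcoprime : (p ^ t).Coprime (p - 1) :=
    Nat.Coprime.pow_left t ((Nat.coprime_self_sub_right hp.one_le).2 (Nat.coprime_one_right p))
  exact (hcoprime.coprime_dvd_left hu).dvd_of_dvd_mul_right htotient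

/-- The unit group modulo `2 ^ e` has order `2 ^ (e - 1)` but is not cyclic. -/
lemma pow_two_pow_sub_two_eq_one {e : ℕ} (he : 3 ≤ e) (u : (ZMod (2 ^ e))ˣ) :
    u ^ 2 ^ (e - 2) = 1 := by
  have hcard : Nat.card (ZMod (2 ^ e))ˣ = 2 ^ (e - 1) := by
    rw [Nat.card_eq_fintype_card, ZMod.card_units_eq_totient,
      Nat.totient_prime_pow Nat.prime_two (by lia), Nat.add_one_sub_one, mul_one]
  obtain ⟨k, hk, horder⟩ := (Nat.dvd_prime_pow Nat.prime_two).1 (hcard ▸ orderOf_dvd_natCard u)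
  have hne : k ≠ e - 1 := by
    rintro rfl
    have hcyclic := isCyclic_of_orderOf_eq_card u (horder.trans hcard.symm)
    rw [ZMod.isCyclic_units_two_pow_iff] at hcyclic
    lia
  rw [← orderOf_dvd_iff_pow_eq_one, horder]
  exact pow_dvd_pow 2 (by lia)

variable {L : Type*} [Field L] [NumberField L] [IsGalois ℚ L] {v : HeightOneSpectrum (𝓞 L)} {p : ℕ}

/-- Write `ζ` as a product of roots of unity of order `p ^ e` and of order prime to `p`; inertia
fixes the latter. -/
lemma pow_apply_eq_self_of_isPrimitiveRoot (hp : p.Prime) (hpv : (p : 𝓞 L) ∈ v.asIdeal) {n : ℕ}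
    (hn : n ≠ 0) {ζ : L} (hζ : IsPrimitiveRoot ζ n) {σ : Gal(L/ℚ)} (hσ : σ ∈ inertiaGroup v)
    {r : ℕ} (hr : ∀ χ : Gal(L/ℚ) →* (ZMod (p ^ n.factorization p))ˣ, χ σ ^ r = 1) :
    (σ ^ r) ζ = ζ := by
  set e := n.factorization p
  set m := n / p ^ e
  have hmul : p ^ e * m = n := Nat.ordProj_mul_ordCompl_eq_self n p
  have hη : IsPrimitiveRoot (ζ ^ m) (p ^ e) := hζ.pow (Nat.pos_of_ne_zero hn) (by lia)
  have : NeZero (p ^ e) := ⟨pow_ne_zero _ hp.ne_zero⟩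
  have hwild : (σ ^ r) (ζ ^ m) = ζ ^ m := by
    have hker : hη.autToPow ℚ (σ ^ r) = 1 := by rw [map_pow, hr]
    rw [← hη.autToPow_spec ℚ (σ ^ r), hker, ← map_one (hη.autToPow ℚ), hη.autToPow_spec ℚ,
      AlgEquiv.one_apply]
  have hcoprime : m.Coprime p := (Nat.coprime_ordCompl hp hn).symm
  have htame : (σ ^ r) (ζ ^ p ^ e) = ζ ^ p ^ e :=
    apply_eq_self_of_mem_inertiaGroup hpv hcoprime (Nat.ordCompl_pos p hn)
      (by rw [← pow_mul, hmul, hζ.pow_eq_one]) (pow_mem hσ r)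
  obtain ⟨a, b, hab⟩ := Nat.isCoprime_iff_coprime.2 (hcoprime.pow_right e)
  have hdecomp : ζ = (ζ ^ m) ^ a * (ζ ^ p ^ e) ^ b := by
    rw [← zpow_natCast, ← zpow_natCast, ← zpow_mul, ← zpow_mul, ← zpow_add₀ (hζ.ne_zero hn),
      mul_comm _ a, mul_comm _ b, hab, zpow_one]
  rw [hdecomp, map_mul, map_zpow₀, map_zpow₀, hwild, htame]

end RootsOfUnity

/-! ### Inertia at `2` -/

open NumberField.ComplexEmbedding

section IndexTwo

lemma exists_ne_zero_apply_eq_neg {K L : Type*} [Field K] [Field L] [Algebra K L]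
    [FiniteDimensional K L] {A : Subgroup Gal(L/K)} (hA : A.index = 2) :
    ∃ y : L, y ≠ 0 ∧ (∀ σ ∈ A, σ y = y) ∧ ∀ σ ∉ A, σ y = -y := by
  have hmul (σ τ : Gal(L/K)) : σ * τ ∈ A ↔ (σ ∈ A ↔ τ ∈ A) :=
    Subgroup.mul_mem_iff_of_index_two hA
  obtain ⟨τ, hτ⟩ : ∃ τ, τ ∉ A := by
    by_contra! htop
    rw [(Subgroup.eq_top_iff' A).2 htop, Subgroup.index_top] at hA
    exact absurd hA (by decide)
  obtain ⟨α, hα, hne⟩ : ∃ α ∈ IntermediateField.fixedField A, τ α ≠ α := by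
    by_contra! hfix
    rw [← IntermediateField.fixingSubgroup_fixedField A, IntermediateField.mem_fixingSubgroup_iff]
      at hτ
    exact hτ hfix
  replace hα : ∀ σ ∈ A, σ α = α := fun σ hσ => hα ⟨σ, hσ⟩
  have hout (σ) (hσ : σ ∉ A) : σ α = τ α := by
    have hmem : τ⁻¹ * σ ∈ A := by
      rw [hmul, inv_mem_iff]
      tauto
    rw [← mul_inv_cancel_left τ σ, AlgEquiv.mul_apply, hα _ hmem]
  refine ⟨α - τ α, sub_ne_zero.2 hne.symm, fun σ hσ => ?_, fun σ hσ => ?_⟩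
  · have hnotMem : σ * τ ∉ A := by
      rw [hmul]
      tauto
    rw [map_sub, ← AlgEquiv.mul_apply, hα σ hσ, hout _ hnotMem]
  · have hmem : σ * τ ∈ A := by
      rw [hmul]
      tauto
    rw [map_sub, ← AlgEquiv.mul_apply, hout σ hσ, hα _ hmem, neg_sub]

lemma exists_squarefree_sq_mul_eq {r : ℚ} (hr : 0 < r) :
    ∃ (s : ℕ) (q : ℚ), Squarefree s ∧ q ^ 2 * r = s := by
  have hnum := Rat.num_pos.2 hr
  obtain ⟨s, t, -, ht, hst, hs⟩ := Nat.sq_mul_squarefree_of_pos (n := r.num.natAbs * r.den)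
    (Nat.mul_pos (Int.natAbs_pos.2 hnum.ne') r.den_pos)
  refine ⟨s, r.den / t, hs, ?_⟩
  have ht0 : (t : ℚ) ≠ 0 := Nat.cast_ne_zero.2 ht.ne'
  have hnatAbs : ((r.num.natAbs : ℕ) : ℚ) = r.num := by
    rw [Nat.cast_natAbs, abs_of_pos hnum]
  have hmul : (t : ℚ) ^ 2 * s = r.num * r.den := by
    rw [← hnatAbs]
    exact_mod_cast hst
  rw [div_pow, div_mul_eq_mul_div, div_eq_iff (pow_ne_zero 2 ht0), mul_comm (s : ℚ), hmul,
    ← Rat.mul_den_eq_num r]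
  ring

variable {L : Type*} [Field L] [NumberField L] [IsGalois ℚ L]

lemma exists_squarefree_sqrt {φ : L →+* ℂ} {c : Gal(L/ℚ)} (hc : IsConj φ c)
    {A : Subgroup Gal(L/ℚ)} (hA : A.index = 2) (hcA : c ∈ A) :
    ∃ (s : ℕ) (x : L), Squarefree s ∧ x ^ 2 = s ∧ (∀ σ ∈ A, σ x = x) ∧ ∀ σ ∉ A, σ x = -x := by
  obtain ⟨y, hy0, hyA, hyA'⟩ := exists_ne_zero_apply_eq_neg hA
  obtain ⟨r, hr⟩ : y ^ 2 ∈ Set.range (algebraMap ℚ L) := by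
    rw [← IntermediateField.mem_bot, IsGalois.mem_bot_iff_fixed]
    intro σ
    by_cases hσ : σ ∈ A
    · rw [map_pow, hyA σ hσ]
    · rw [map_pow, hyA' σ hσ, neg_sq]
  have hrpos : 0 < r := by
    have hreal : star (φ y) = φ y := by rw [← hc.eq, hyA c hcA]
    obtain ⟨z, hz⟩ := Complex.conj_eq_iff_real.1 hreal
    have hz0 : z ≠ 0 := by
      rintro rfl
      exact hy0 ((map_eq_zero φ).1 (by simpa using hz))
    have hrz : (r : ℝ) = z ^ 2 := by
      have hφ := congrArg φ hr
      rw [map_pow, hz, eq_ratCast, map_ratCast] at hφ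
      exact_mod_cast hφ
    have hrpos : 0 < (r : ℝ) := hrz ▸ by positivity
    exact_mod_cast hrpos
  obtain ⟨s, q, hs, hq⟩ := exists_squarefree_sq_mul_eq hrpos
  refine ⟨s, algebraMap ℚ L q * y, hs, ?_, fun σ hσ => ?_, fun σ hσ => ?_⟩
  · rw [mul_pow, ← hr, ← map_pow, ← map_mul, hq, map_natCast]
  · rw [map_mul, σ.commutes, hyA σ hσ]
  · rw [map_mul, σ.commutes, hyA' σ hσ, mul_neg]

/-- Otherwise `p` would be a square up to a unit at `v`, in the fixed field of inertia, where `p` is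
a uniformizer. -/
lemma not_dvd_of_sq_eq {p s : ℕ} (hp : p.Prime) {v : HeightOneSpectrum (𝓞 L)}
    (hpv : (p : 𝓞 L) ∈ v.asIdeal) (hs : Squarefree s) {x : L} (hx : x ^ 2 = s)
    (hfix : ∀ σ ∈ inertiaGroup v, σ x = x) : ¬ p ∣ s := by
  rintro ⟨d, rfl⟩
  have hcoprime : d.Coprime p := ((Nat.squarefree_mul_iff.1 hs).1).symm
  have hd : v.valuation L (d : L) = 1 := by
    rw [← map_natCast (algebraMap (𝓞 L) L), v.valuation_eq_one_iff_notMem]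
    exact natCast_notMem_of_coprime hpv hcoprime
  obtain ⟨y, hy⟩ := exists_pow_card_eq_valuation v le_rfl hfix
  have hsq : (y ^ 2) ^ Nat.card (inertiaGroup v) =
      WithZero.exp (-1 : ℤ) ^ Nat.card (inertiaGroup v) := by
    rw [pow_right_comm, hy, ← map_pow, hx, Nat.cast_mul, map_mul, hd, mul_one,
      valuation_prime_eq (G := Gal(L/ℚ)) v hp hpv]
  have hlog := congrArg WithZero.log
    ((pow_left_inj₀ zero_le zero_le Nat.card_pos.ne').1 hsq)
  rw [WithZero.log_pow, WithZero.log_exp] at hlog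
  lia

end IndexTwo

section SqrtTwo

variable {L : Type*} [Field L] [NumberField L]

lemma exists_forall_prime_natCast_mem (L : Type*) [Field L] [NumberField L] :
    ∃ P : ℕ → HeightOneSpectrum (𝓞 L), ∀ p, p.Prime → (p : 𝓞 L) ∈ (P p).asIdeal := by
  obtain ⟨v, -⟩ := exists_heightOneSpectrum_natCast_mem (L := L) Nat.prime_two
  have hex (p : ℕ) : ∃ v : HeightOneSpectrum (𝓞 L), p.Prime → (p : 𝓞 L) ∈ v.asIdeal := by
    by_cases hp : p.Prime
    · exact (exists_heightOneSpectrum_natCast_mem hp).imp fun w hw _ => hw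
    · exact ⟨v, fun h => absurd h hp⟩
  exact ⟨_, fun p => (hex p).choose_spec⟩

lemma exists_isConj [IsGalois ℚ L] (φ : L →+* ℂ) : ∃ c : Gal(L/ℚ), IsConj φ c := by
  obtain ⟨σ, hσ⟩ := exists_comp_symm_eq_of_comp_eq (k := ℚ) φ (conjugate φ)
    (Subsingleton.elim _ _)
  exact ⟨σ.symm, hσ.symm⟩

variable {P : ℕ → HeightOneSpectrum (𝓞 L)}

section Galois

variable [IsGalois ℚ L] {φ : L →+* ℂ} {c : Gal(L/ℚ)}

/-- A real quadratic field unramified outside `2` is `ℚ(√2)`. -/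
lemma exists_sq_eq_two_of_index_eq_two
    (hP : ∀ p, p.Prime → (p : 𝓞 L) ∈ (P p).asIdeal) (hc : IsConj φ c)
    {A : Subgroup Gal(L/ℚ)} (hA : A.index = 2) (hcA : c ∈ A)
    (hodd : ∀ p, p.Prime → p ≠ 2 → inertiaGroup (P p) ≤ A) :
    ∃ x : L, x ^ 2 = 2 ∧ ∀ σ ∈ A, σ x = x := by
  obtain ⟨s, x, hs, hx, hxA, hxA'⟩ := exists_squarefree_sqrt hc hA hcA
  have hsub : s.primeFactors ⊆ {2} := by
    intro p hp
    obtain ⟨hprime, hdvd, -⟩ := Nat.mem_primeFactors.1 hp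
    by_contra hp2
    exact not_dvd_of_sq_eq hprime (hP p hprime) hs hx
      (fun σ hσ => hxA σ (hodd p hprime (Finset.notMem_singleton.1 hp2) hσ)) hdvd
  have hdvd : s ∣ 2 := by
    simpa only [Nat.prod_primeFactors_of_squarefree hs, Finset.prod_singleton] using
      Finset.prod_dvd_prod_of_subset _ _ (fun p => p) hsub
  obtain ⟨τ, hτ⟩ : ∃ τ, τ ∉ A := by
    by_contra! htop
    rw [(Subgroup.eq_top_iff' A).2 htop, Subgroup.index_top] at hA
    exact absurd hA (by decide)
  have hs1 : s ≠ 1 := by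
    rintro rfl
    have hτx := hxA' τ hτ
    rw [Nat.cast_one, sq_eq_one_iff] at hx
    rcases hx with rfl | rfl <;> norm_num at hτx
  rcases (Nat.dvd_prime Nat.prime_two).1 hdvd with h | rfl
  · exact absurd h hs1
  · exact ⟨x, by exact_mod_cast hx, hxA⟩

end Galois

variable [IsAbelianGalois ℚ L]

lemma exists_pow_two_pow_mem (hP : ∀ p, p.Prime → (p : 𝓞 L) ∈ (P p).asIdeal)
    {A : Subgroup Gal(L/ℚ)}
    (hodd : ∀ p, p.Prime → p ≠ 2 → inertiaGroup (P p) ≤ A) (σ : Gal(L/ℚ)) :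
    ∃ n, σ ^ 2 ^ n ∈ A := by
  have htop : A ⊔ inertiaGroup (P 2) = ⊤ := eq_top_of_inertiaGroup_le P hP _ fun p hp => by
    rcases eq_or_ne p 2 with rfl | hp2
    · exact le_sup_right
    · exact (hodd p hp hp2).trans le_sup_left
  obtain ⟨a, ha, b, hb, rfl⟩ := Subgroup.mem_sup_of_normal_left.1 (htop ▸ Subgroup.mem_top σ)
  obtain ⟨n, hn⟩ := exists_pow_two_pow_eq_one (hP 2 Nat.prime_two) hb
  refine ⟨n, ?_⟩
  rw [Commute.mul_pow (mul_comm' a b), hn, mul_one]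
  exact pow_mem ha _

lemma exists_sq_eq_two_of_ne_top (hP : ∀ p, p.Prime → (p : 𝓞 L) ∈ (P p).asIdeal)
    {φ : L →+* ℂ} {c : Gal(L/ℚ)} (hc : IsConj φ c) {A : Subgroup Gal(L/ℚ)} (hA : A ≠ ⊤)
    (hcA : c ∈ A)
    (hodd : ∀ p, p.Prime → p ≠ 2 → inertiaGroup (P p) ≤ A) :
    ∃ x : L, x ^ 2 = 2 ∧ ∀ σ ∈ A, σ x = x := by
  have hindex : 2 ^ 0 < A.index :=
    Nat.one_lt_iff_ne_zero_and_ne_one.2 ⟨A.index_ne_zero_of_finite, mt A.index_eq_one.1 hA⟩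
  obtain ⟨B, hAB, hB⟩ := exists_le_index_eq_prime_pow_succ Nat.prime_two A
    (exists_pow_two_pow_mem hP hodd) hindex
  obtain ⟨x, hx, hxB⟩ := exists_sq_eq_two_of_index_eq_two hP hc hB (hAB hcA)
    fun p hp hp2 => (hodd p hp hp2).trans hAB
  exact ⟨x, hx, fun σ hσ => hxB σ (hAB hσ)⟩

lemma exists_mem_inertiaGroup_two_apply_ne
    (hP : ∀ p, p.Prime → (p : 𝓞 L) ∈ (P p).asIdeal) {x : L} (hx : x ^ 2 = 2)
    (hodd : ∀ p, p.Prime → p ≠ 2 → ∀ σ ∈ inertiaGroup (P p), σ x = x) :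
    ∃ σ ∈ inertiaGroup (P 2), σ x ≠ x := by
  by_contra! htwo
  have htop : MulAction.stabilizer Gal(L/ℚ) x = ⊤ :=
    eq_top_of_inertiaGroup_le P hP _ fun p hp => by
      rcases eq_or_ne p 2 with rfl | hp2
      · exact htwo
      · exact hodd p hp hp2
  obtain ⟨q, rfl⟩ : x ∈ Set.range (algebraMap ℚ L) := by
    rw [← IntermediateField.mem_bot, IsGalois.mem_bot_iff_fixed]
    exact fun σ => (htop ▸ Subgroup.mem_top σ : σ ∈ MulAction.stabilizer Gal(L/ℚ) x)
  have hq : q ^ 2 = 2 := (algebraMap ℚ L).injective (by rw [map_pow, hx, map_ofNat])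
  have hsq : IsSquare 2 := Rat.isSquare_natCast_iff.1 ⟨q, hq.symm.trans (sq q)⟩
  exact Nat.prime_two.prime.not_isSquare hsq

/-- Every proper subgroup containing `H` fixes a square root of `2`, which `a` moves. -/
lemma exists_mem_inertiaGroup_two_sup_zpowers_eq_top
    (hP : ∀ p, p.Prime → (p : 𝓞 L) ∈ (P p).asIdeal) {φ : L →+* ℂ} {c : Gal(L/ℚ)}
    (hc : IsConj φ c) {H : Subgroup Gal(L/ℚ)} (hcH : c ∈ H)
    (hodd : ∀ p, p.Prime → p ≠ 2 → inertiaGroup (P p) ≤ H) :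
    ∃ a ∈ inertiaGroup (P 2), H ⊔ Subgroup.zpowers a = ⊤ := by
  rcases eq_or_ne H ⊤ with rfl | hH
  · exact ⟨1, one_mem _, top_sup_eq _⟩
  obtain ⟨x, hx, hxH⟩ := exists_sq_eq_two_of_ne_top hP hc hH hcH hodd
  obtain ⟨a, ha, hax⟩ := exists_mem_inertiaGroup_two_apply_ne hP hx
    fun p hp hp2 σ hσ => hxH σ (hodd p hp hp2 hσ)
  refine ⟨a, ha, ?_⟩
  by_contra hne
  obtain ⟨y, hy, hyA⟩ := exists_sq_eq_two_of_ne_top hP hc hne (Subgroup.mem_sup_left hcH)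
    fun p hp hp2 => (hodd p hp hp2).trans le_sup_left
  have hay := hyA a (Subgroup.mem_sup_right (Subgroup.mem_zpowers a))
  rcases sq_eq_sq_iff_eq_or_eq_neg.1 (hx.trans hy.symm) with rfl | rfl
  · exact hax hay
  · exact hax (by rw [map_neg, hay])

end SqrtTwo

section DegreeBound

open scoped Pointwise in
lemma card_sup_le {G : Type*} [Group G] [Finite G] (A B : Subgroup G) [B.Normal] :
    Nat.card (A ⊔ B : Subgroup G) ≤ Nat.card A * Nat.card B := by
  have hcard : Nat.card ((A : Set G) * (B : Set G) : Set G) ≤ Nat.card A * Nat.card B :=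
    Set.natCard_mul_le
  rwa [← Subgroup.mul_normal] at hcard

lemma card_finset_sup_le {G ι : Type*} [Group G] [IsMulCommutative G] [Finite G] (s : Finset ι)
    (A : ι → Subgroup G) : Nat.card (s.sup A : Subgroup G) ≤ ∏ i ∈ s, Nat.card (A i) := by
  classical
  induction s using Finset.induction_on with
  | empty => simp
  | insert a s ha ih =>
    rw [Finset.prod_insert ha, Finset.sup_insert]
    exact (card_sup_le _ _).trans (Nat.mul_le_mul_left _ ih)

lemma totient_eq_prod_odd_mul {n : ℕ} (hn2 : 2 ≤ n.factorization 2) :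
    n.totient = (∏ p ∈ n.primeFactors.erase 2, p ^ (n.factorization p - 1) * (p - 1)) * 2 *
      2 ^ (n.factorization 2 - 2) := by
  have hn : n ≠ 0 := by
    rintro rfl
    simp at hn2
  have hmem : 2 ∈ n.primeFactors := by
    rw [← Nat.support_factorization, Finsupp.mem_support_iff]
    lia
  rw [Nat.totient_eq_prod_factorization hn, Finsupp.prod, Nat.support_factorization,
    ← Finset.prod_erase_mul _ _ hmem, Nat.add_one_sub_one, mul_one, mul_assoc, ← pow_succ']
  congr 2
  lia

variable {L : Type*} [Field L] [NumberField L]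

lemma orderOf_le_two_of_isConj {φ : L →+* ℂ} {c : Gal(L/ℚ)} (hc : IsConj φ c) :
    orderOf c ≤ 2 := by
  rcases eq_or_ne c 1 with rfl | hne
  · rw [orderOf_one]
    exact one_le_two
  · exact (orderOf_isConj_two_of_ne_one hc hne).le

variable [IsAbelianGalois ℚ L]

/-- The group is generated by the inertia groups at odd primes, the complex conjugation and one
element of the inertia group at `2`. -/
lemma card_gal_le_totient {P : ℕ → HeightOneSpectrum (𝓞 L)}
    (hP : ∀ p, p.Prime → (p : 𝓞 L) ∈ (P p).asIdeal) {n : ℕ} (hn2 : 2 ≤ n.factorization 2)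
    (hunr : ∀ p, p.Prime → ¬ p ∣ n → inertiaGroup (P p) = ⊥)
    (hodd : ∀ p, p.Prime → p ≠ 2 → p ∣ n → ∀ σ ∈ inertiaGroup (P p),
      (∃ t, σ ^ p ^ t = 1) → σ ^ p ^ (n.factorization p - 1) = 1)
    (htwo : ∀ σ ∈ inertiaGroup (P 2), σ ^ 2 ^ (n.factorization 2 - 2) = 1) :
    Nat.card Gal(L/ℚ) ≤ n.totient := by
  have hn : n ≠ 0 := by
    rintro rfl
    simp at hn2
  obtain ⟨φ⟩ : Nonempty (L →+* ℂ) := inferInstance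
  obtain ⟨c, hc⟩ := exists_isConj φ
  set J := (n.primeFactors.erase 2).sup fun p => inertiaGroup (P p)
  have hJ (p : ℕ) (hp : p.Prime) (hp2 : p ≠ 2) : inertiaGroup (P p) ≤ J := by
    by_cases hpn : p ∣ n
    · exact Finset.le_sup (f := fun p => inertiaGroup (P p))
        (Finset.mem_erase.2 ⟨hp2, Nat.mem_primeFactors.2 ⟨hp, hpn, hn⟩⟩)
    · exact (hunr p hp hpn).trans_le bot_le
  have hcardJ : Nat.card J ≤
      ∏ p ∈ n.primeFactors.erase 2, p ^ (n.factorization p - 1) * (p - 1) := by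
    refine (card_finset_sup_le _ _).trans (Finset.prod_le_prod' fun p hp => ?_)
    obtain ⟨hp2, hp⟩ := Finset.mem_erase.1 hp
    obtain ⟨hp, hpn, -⟩ := Nat.mem_primeFactors.1 hp
    exact card_inertiaGroup_le hp hp2 (hP p hp) (hodd p hp hp2 hpn)
  obtain ⟨a, ha, htop⟩ := exists_mem_inertiaGroup_two_sup_zpowers_eq_top hP hc
    (Subgroup.mem_sup_right (Subgroup.mem_zpowers c))
    fun p hp hp2 => (hJ p hp hp2).trans le_sup_left
  have ha_order : orderOf a ≤ 2 ^ (n.factorization 2 - 2) :=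
    orderOf_le_of_pow_eq_one (Nat.two_pow_pos _) (htwo a ha)
  calc Nat.card Gal(L/ℚ) = Nat.card (J ⊔ Subgroup.zpowers c ⊔ Subgroup.zpowers a : Subgroup _) := by
        rw [htop, Subgroup.card_top]
    _ ≤ Nat.card J * orderOf c * orderOf a := by
        rw [← Nat.card_zpowers c, ← Nat.card_zpowers a]
        exact (card_sup_le _ _).trans (Nat.mul_le_mul_right _ (card_sup_le _ _))
    _ ≤ _ := Nat.mul_le_mul (Nat.mul_le_mul hcardJ (orderOf_le_two_of_isConj hc)) ha_order
    _ = n.totient := (totient_eq_prod_odd_mul hn2).symm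

end DegreeBound

/-! ### The Kronecker–Weber theorem -/

open scoped IntermediateField

section Compositum

variable {k L : Type*} [Field k] [Field L] [Algebra k L] {F F' : IntermediateField k L}

lemma eq_one_of_mem_fixingSubgroup_of_sup_eq_top (htop : F ⊔ F' = ⊤) {σ : Gal(L/k)}
    (hF : σ ∈ F.fixingSubgroup) (hF' : σ ∈ F'.fixingSubgroup) : σ = 1 := by
  rw [← Subgroup.mem_bot, ← IntermediateField.fixingSubgroup_top, ← htop,
    IntermediateField.fixingSubgroup_sup]
  exact ⟨hF, hF'⟩

lemma mem_fixingSubgroup_adjoin_simple_iff {σ : Gal(L/k)} {x : L} :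
    σ ∈ k⟮x⟯.fixingSubgroup ↔ σ x = x := by
  simpa using IntermediateField.forall_mem_adjoin_smul_eq_self_iff k (S := {x}) σ

lemma commutator_mem_fixingSubgroup [IsAbelianGalois k F] (σ τ : Gal(L/k)) :
    σ * τ * (τ * σ)⁻¹ ∈ F.fixingSubgroup := by
  rw [← IntermediateField.restrictNormalHom_ker, MonoidHom.mem_ker, map_mul, map_inv, map_mul,
    map_mul, mul_comm' (AlgEquiv.restrictNormalHom F σ), mul_inv_cancel]

lemma isAbelianGalois_of_sup_eq_top [IsGalois k L] [IsAbelianGalois k F] [IsAbelianGalois k F']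
    (htop : F ⊔ F' = ⊤) : IsAbelianGalois k L where
  is_comm.comm σ τ := mul_inv_eq_one.1 <| eq_one_of_mem_fixingSubgroup_of_sup_eq_top htop
    (commutator_mem_fixingSubgroup σ τ) (commutator_mem_fixingSubgroup σ τ)

lemma restrict_sup_restrict_eq_top (E E' : IntermediateField k L) :
    IntermediateField.restrict (le_sup_left : E ≤ E ⊔ E') ⊔
      IntermediateField.restrict (le_sup_right : E' ≤ E ⊔ E') = ⊤ := by
  apply IntermediateField.lift_injective (E ⊔ E')
  rw [IntermediateField.lift_sup, IntermediateField.lift_top, IntermediateField.lift_restrict,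
    IntermediateField.lift_restrict]

-- Not instance arguments: for `k = ℚ` the caller's facts carry `DivisionRing.toRatAlgebra`, which
-- instance search does not identify with the algebra structure of an intermediate field.
lemma isAbelianGalois_sup {E E' : IntermediateField k L} (_ : IsAbelianGalois k E)
    (_ : IsAbelianGalois k E') : IsAbelianGalois k (E ⊔ E' : IntermediateField k L) := by
  have : IsGalois k (E ⊔ E' : IntermediateField k L) :=
    { to_normal := inferInstance, to_isSeparable := inferInstance }
  have := IsAbelianGalois.of_algHom
    (IntermediateField.restrictAlgEquiv (le_sup_left : E ≤ E ⊔ E')).symm.toAlgHom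
  have := IsAbelianGalois.of_algHom
    (IntermediateField.restrictAlgEquiv (le_sup_right : E' ≤ E ⊔ E')).symm.toAlgHom
  exact isAbelianGalois_of_sup_eq_top (restrict_sup_restrict_eq_top E E')

lemma restrict_sup_adjoin_simple_eq_top (E : IntermediateField k L) {x : L}
    (hx : x ∈ E ⊔ k⟮x⟯) :
    IntermediateField.restrict (le_sup_left : E ≤ E ⊔ k⟮x⟯) ⊔
      k⟮(⟨x, hx⟩ : (E ⊔ k⟮x⟯ : IntermediateField k L))⟯ = ⊤ := by
  apply IntermediateField.lift_injective
  rw [IntermediateField.lift_sup, IntermediateField.lift_top, IntermediateField.lift_adjoin_simple,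
    IntermediateField.lift_restrict]

lemma le_adjoin_simple_of_adjoin_simple_eq_top {E : IntermediateField k L} {x : L} {hx : x ∈ E}
    (htop : k⟮(⟨x, hx⟩ : E)⟯ = ⊤) : E ≤ k⟮x⟯ := by
  have hlift := congrArg IntermediateField.lift htop
  rw [IntermediateField.lift_adjoin_simple, IntermediateField.lift_top] at hlift
  exact hlift.symm.le

end Compositum

section Ramification

variable {L : Type*} [Field L] [NumberField L] [IsGalois ℚ L] {F : IntermediateField ℚ L}

lemma ker_restrictNormalHom_intermediateField (F : IntermediateField ℚ L) [IsGalois ℚ F] :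
    (AlgEquiv.restrictNormalHom F : Gal(L/ℚ) →* Gal(F/ℚ)).ker = F.fixingSubgroup := by
  have := IsGaloisGroup.of_fixedPoints_eq Gal(L/ℚ) ℚ L F.fixingSubgroup F
    (IsGalois.fixedField_fixingSubgroup F)
  exact ker_restrictNormalHom F F.fixingSubgroup

lemma pow_prime_pow_mem_fixingSubgroup [IsGalois ℚ F] {p : ℕ} (hp : p.Prime) {σ : Gal(L/ℚ)} {t : ℕ}
    (hσ : σ ^ p ^ t = 1) {k : ℕ} (hk : (Nat.card Gal(F/ℚ)).factorization p ≤ k) :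
    σ ^ p ^ k ∈ F.fixingSubgroup := by
  rw [← ker_restrictNormalHom_intermediateField, MonoidHom.mem_ker, map_pow]
  set τ := AlgEquiv.restrictNormalHom F σ
  have hτ : orderOf τ ∣ p ^ t := orderOf_dvd_of_pow_eq_one (by rw [← map_pow, hσ, map_one])
  obtain ⟨j, -, hj⟩ := (Nat.dvd_prime_pow hp).1 hτ
  have hjk : j ≤ k :=
    ((hp.pow_dvd_iff_le_factorization Nat.card_pos.ne').1 (hj ▸ orderOf_dvd_natCard τ)).trans hk
  exact orderOf_dvd_iff_pow_eq_one.1 (hj ▸ pow_dvd_pow p hjk)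

variable {v : HeightOneSpectrum (𝓞 L)} {p n : ℕ} {ζ : L}

lemma inertiaGroup_eq_bot_of_sup_eq_top [IsGalois ℚ F] (hp : p.Prime)
    (hpv : (p : 𝓞 L) ∈ v.asIdeal) (hpF : ¬ p ∣ (discr F).natAbs) (hpn : ¬ p ∣ n)
    (hζ : IsPrimitiveRoot ζ n) (htop : F ⊔ ℚ⟮ζ⟯ = ⊤) : inertiaGroup v = ⊥ := by
  refine (Subgroup.eq_bot_iff_forall _).2 fun σ hσ =>
    eq_one_of_mem_fixingSubgroup_of_sup_eq_top htop ?_ ?_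
  · have hσF := restrictNormalHom_mem_inertiaGroup v F hσ
    rw [inertiaGroup_eq_bot_of_not_dvd_discr hp hpF (natCast_mem_placeBelow F hpv)] at hσF
    rwa [← ker_restrictNormalHom_intermediateField]
  · have hn : 0 < n := Nat.pos_of_ne_zero fun hn => hpn (hn ▸ dvd_zero p)
    exact mem_fixingSubgroup_adjoin_simple_iff.2 <|
      apply_eq_self_of_mem_inertiaGroup hpv (hp.coprime_iff_not_dvd.2 hpn).symm hn hζ.pow_eq_one hσ

lemma pow_eq_one_of_sup_eq_top [IsGalois ℚ F] (hp : p.Prime)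
    (hpv : (p : 𝓞 L) ∈ v.asIdeal) (hn : n ≠ 0) (hζ : IsPrimitiveRoot ζ n) (htop : F ⊔ ℚ⟮ζ⟯ = ⊤)
    {σ : Gal(L/ℚ)} (hσ : σ ∈ inertiaGroup v) (hσp : ∃ t, σ ^ p ^ t = 1) {k : ℕ}
    (hk : (Nat.card Gal(F/ℚ)).factorization p ≤ k)
    (hχ : ∀ χ : Gal(L/ℚ) →* (ZMod (p ^ n.factorization p))ˣ, χ σ ^ p ^ k = 1) :
    σ ^ p ^ k = 1 := by
  obtain ⟨t, ht⟩ := hσp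
  exact eq_one_of_mem_fixingSubgroup_of_sup_eq_top htop
    (pow_prime_pow_mem_fixingSubgroup hp ht hk) <| mem_fixingSubgroup_adjoin_simple_iff.2 <|
      pow_apply_eq_self_of_isPrimitiveRoot hp hpv hn hζ hσ hχ

end Ramification

section Degree

variable {L : Type*} [Field L] [NumberField L] [IsAbelianGalois ℚ L] {F : IntermediateField ℚ L}
  {m : ℕ} {ζ : L}

lemma card_gal_le_totient_of_sup_eq_top (hm0 : m ≠ 0) (h2 : 2 ∣ m) (hdiscr : (discr F).natAbs ∣ m)
    (hcard : Nat.card Gal(F/ℚ) ∣ m) (hζ : IsPrimitiveRoot ζ (m ^ 3)) (htop : F ⊔ ℚ⟮ζ⟯ = ⊤) :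
    Nat.card Gal(L/ℚ) ≤ (m ^ 3).totient := by
  have : IsAbelianGalois ℚ F := .tower_bot ℚ F L
  obtain ⟨P, hP⟩ := exists_forall_prime_natCast_mem L
  have hn : m ^ 3 ≠ 0 := pow_ne_zero 3 hm0
  have hfac (p : ℕ) : (m ^ 3).factorization p = 3 * m.factorization p := by
    rw [Nat.factorization_pow, Finsupp.smul_apply, smul_eq_mul]
  have hcard_fac (p : ℕ) : (Nat.card Gal(F/ℚ)).factorization p ≤ m.factorization p :=
    (Nat.factorization_le_iff_dvd Nat.card_pos.ne' hm0).2 hcard p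
  have hfac_pos {p : ℕ} (hp : p.Prime) (hpm : p ∣ m) : 1 ≤ m.factorization p :=
    (hp.dvd_iff_one_le_factorization hm0).1 hpm
  have hfac_two := hfac 2
  have hfac_two_pos := hfac_pos Nat.prime_two h2
  refine card_gal_le_totient hP (by omega) (fun p hp hpn => ?_) (fun p hp _ hpn σ hσ hσp => ?_)
    fun σ hσ => ?_
  · exact inertiaGroup_eq_bot_of_sup_eq_top hp (hP p hp)
      (fun h => hpn (dvd_pow (h.trans hdiscr) three_ne_zero)) hpn hζ htop
  · have hfac_p := hfac p
    have hfac_p_pos := hfac_pos hp (hp.dvd_of_dvd_pow hpn)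
    refine pow_eq_one_of_sup_eq_top hp (hP p hp) hn hζ htop hσ hσp
      ((hcard_fac p).trans (by omega)) fun χ => ?_
    obtain ⟨t, ht⟩ := hσp
    exact pow_prime_pow_sub_one_eq_one hp (by omega) (t := t) (by rw [← map_pow, ht, map_one])
  · have h2P := hP 2 Nat.prime_two
    exact pow_eq_one_of_sup_eq_top Nat.prime_two h2P hn hζ htop hσ
      (exists_pow_two_pow_eq_one (mod_cast h2P) hσ) ((hcard_fac 2).trans (by omega))
      fun χ => pow_two_pow_sub_two_eq_one (by omega) _

lemma adjoin_eq_top_of_sup_eq_top (hm0 : m ≠ 0) (h2 : 2 ∣ m) (hdiscr : (discr F).natAbs ∣ m)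
    (hcard : Nat.card Gal(F/ℚ) ∣ m) (hζ : IsPrimitiveRoot ζ (m ^ 3)) (htop : F ⊔ ℚ⟮ζ⟯ = ⊤) :
    ℚ⟮ζ⟯ = ⊤ := by
  apply IntermediateField.eq_of_le_of_finrank_le le_top
  rw [IntermediateField.finrank_top', IntermediateField.adjoin.finrank (.of_finite ℚ ζ),
    ← Polynomial.cyclotomic_eq_minpoly_rat hζ (pow_pos (Nat.pos_of_ne_zero hm0) 3),
    Polynomial.natDegree_cyclotomic, ← IsGalois.card_aut_eq_finrank]
  exact card_gal_le_totient_of_sup_eq_top hm0 h2 hdiscr hcard hζ htop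

end Degree

section Cyclotomic

variable {Ω : Type*} [Field Ω] [CharZero Ω]

lemma isAbelianGalois_adjoin {n : ℕ} (hn : n ≠ 0) {ζ : Ω} (hζ : IsPrimitiveRoot ζ n) :
    IsAbelianGalois ℚ ℚ⟮ζ⟯ := by
  have : NeZero n := ⟨hn⟩
  have : IsCyclotomicExtension {n} ℚ ℚ⟮ζ⟯ := by
    change IsCyclotomicExtension {n} ℚ ℚ⟮ζ⟯.toSubalgebra
    rw [IntermediateField.adjoin_simple_toSubalgebra_of_isAlgebraic
      (hζ.isIntegral (NeZero.pos n)).tower_top.isAlgebraic]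
    exact hζ.adjoin_isCyclotomicExtension ℚ
  exact IsCyclotomicExtension.isAbelianGalois {n} ℚ ℚ⟮ζ⟯

lemma le_adjoin_of_isAbelianGalois (E : IntermediateField ℚ Ω) [NumberField E]
    [IsAbelianGalois ℚ E] {m : ℕ} {ζ : Ω} (hm0 : m ≠ 0) (h2 : 2 ∣ m)
    (hdiscr : (discr E).natAbs ∣ m) (hcard : Nat.card Gal(E/ℚ) ∣ m)
    (hζ : IsPrimitiveRoot ζ (m ^ 3)) : E ≤ ℚ⟮ζ⟯ := by
  have hζ_abelian := isAbelianGalois_adjoin (pow_ne_zero 3 hm0) hζ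
  have := IntermediateField.adjoin.finiteDimensional
    ((hζ.isIntegral (pow_pos (Nat.pos_of_ne_zero hm0) 3)).tower_top (A := ℚ))
  set L := E ⊔ ℚ⟮ζ⟯
  have hEL : E ≤ L := le_sup_left
  have : IsAbelianGalois ℚ L := isAbelianGalois_sup ‹_› hζ_abelian
  have : FiniteDimensional ℚ L := IntermediateField.finiteDimensional_sup E ℚ⟮ζ⟯
  have : NumberField L := ⟨⟩
  have hζL : ζ ∈ L := (le_sup_right : ℚ⟮ζ⟯ ≤ L) (IntermediateField.mem_adjoin_simple_self ℚ ζ)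
  let e : E ≃ₐ[ℚ] IntermediateField.restrict hEL := IntermediateField.restrictAlgEquiv hEL
  have hζL_top := adjoin_eq_top_of_sup_eq_top hm0 h2 (discr_eq_discr_of_algEquiv E e ▸ hdiscr)
    (Nat.card_congr (AlgEquiv.autCongr e).toEquiv ▸ hcard)
    (hζ.of_map_of_injective (f := algebraMap L Ω) (algebraMap L Ω).injective)
    (restrict_sup_adjoin_simple_eq_top E hζL)
  exact hEL.trans (le_adjoin_simple_of_adjoin_simple_eq_top hζL_top)

theorem kronecker_weber [IsAlgClosed Ω] (E : IntermediateField ℚ Ω) [NumberField E]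
    [IsAbelianGalois ℚ E] : ∃ (ζ : Ω) (n : ℕ), 1 ≤ n ∧ ζ ^ n = 1 ∧ E ≤ ℚ⟮ζ⟯ := by
  set m := 2 * (discr E).natAbs * Nat.card Gal(E/ℚ)
  have hm0 : m ≠ 0 := mul_ne_zero
    (mul_ne_zero two_ne_zero (Int.natAbs_ne_zero.2 (discr_ne_zero E))) Nat.card_pos.ne'
  have : NeZero (m ^ 3) := ⟨pow_ne_zero 3 hm0⟩
  obtain ⟨ζ, hζ⟩ := HasEnoughRootsOfUnity.exists_primitiveRoot Ω (m ^ 3)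
  exact ⟨ζ, m ^ 3, NeZero.one_le, hζ.pow_eq_one, le_adjoin_of_isAbelianGalois E hm0
    ((dvd_mul_right 2 _).mul_right _) ((dvd_mul_left _ 2).mul_right _) (dvd_mul_left _ _) hζ⟩

end Cyclotomic

section Adjoin

variable {k Ω : Type*} [Field k] [Field Ω] [Algebra k Ω] {S : Set Ω}

lemma fieldRange_le_adjoin {ψ : IntermediateField.adjoin k S →ₐ[k] Ω}
    (hψ : ∀ x (hx : x ∈ S),
      ψ ⟨x, IntermediateField.subset_adjoin k S hx⟩ ∈ IntermediateField.adjoin k S) :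
    ψ.fieldRange ≤ IntermediateField.adjoin k S := by
  have htop : (⊤ : IntermediateField k (IntermediateField.adjoin k S)) =
      IntermediateField.adjoin k (Subtype.val ⁻¹' S) := by
    apply IntermediateField.lift_injective (IntermediateField.adjoin k S)
    rw [IntermediateField.lift_top, IntermediateField.lift_adjoin]
    exact congrArg _ (Subtype.image_preimage_val _ _ |>.trans <|
      Set.inter_eq_right.2 (IntermediateField.subset_adjoin k S)).symm
  rw [AlgHom.fieldRange_eq_map, htop, IntermediateField.adjoin_map, IntermediateField.adjoin_le_iff]
  rintro _ ⟨x, hx, rfl⟩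
  exact hψ x hx

lemma normal_of_forall_fieldRange_le [IsAlgClosed Ω] {E : IntermediateField k Ω}
    [Algebra.IsAlgebraic k E] (hE : ∀ ψ : E →ₐ[k] Ω, ψ.fieldRange ≤ E) : Normal k E := by
  refine ⟨fun x => IntermediateField.splits_of_splits (IsAlgClosed.splits _) fun y hy => ?_⟩
  rw [← Algebra.IsAlgebraic.range_eval_eq_rootSet_minpoly Ω x] at hy
  obtain ⟨ψ, rfl⟩ := hy
  exact hE ψ ⟨x, rfl⟩

end Adjoin

end KroneckerWeber

/-! ### Modular data -/

namespace ModularData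

variable {I : Type} [Fintype I] [DecidableEq I] (M : ModularData I)

/-- The character of the fusion ring given by the `j`-th column of the S-matrix. -/
noncomputable def columnCharacter (j i : I) : ℂ := M.s i j / M.s M.one j

lemma columnCharacter_one (j : I) : M.columnCharacter j M.one = 1 := div_self (M.s_one_ne_zero j)

lemma columnCharacter_mul (r i j : I) :
    M.columnCharacter r i * M.columnCharacter r j =
      ∑ k, (M.N i j k : ℂ) * M.columnCharacter r k := by
  have hr := M.s_one_ne_zero r
  calc M.columnCharacter r i * M.columnCharacter r j
      = M.s i r * M.s j r / M.s M.one r / M.s M.one r := by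
        rw [columnCharacter, columnCharacter, div_mul_div_comm, div_div]
    _ = (∑ k, (M.N i j k : ℂ) * M.s k r) / M.s M.one r := by
        rw [← M.verlinde, mul_div_cancel_left₀ _ hr]
    _ = ∑ k, (M.N i j k : ℂ) * M.columnCharacter r k := by
        simp only [columnCharacter, Finset.sum_div, mul_div_assoc]

lemma s_eq_mul_columnCharacter (i j : I) : M.s i j = M.s M.one j * M.columnCharacter j i :=
  (mul_div_cancel₀ _ (M.s_one_ne_zero j)).symm

/-- The field generated over `ℚ` by the entries of the S-matrix. -/
noncomputable def entryField : IntermediateField ℚ ℂ :=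
  IntermediateField.adjoin ℚ (Set.range fun x : I × I => M.s x.1 x.2)

/-- An entry of the S-matrix, as an element of the field generated by all of them. -/
noncomputable def entry (i j : I) : M.entryField :=
  ⟨M.s i j, IntermediateField.subset_adjoin _ _ ⟨(i, j), rfl⟩⟩

lemma entry_symm (i j : I) : M.entry i j = M.entry j i := Subtype.ext (M.s_symm i j)

lemma sq_mul_sum_columnCharacter (j : I) :
    M.s M.one j ^ 2 * ∑ k, M.columnCharacter j k * M.columnCharacter j (M.star k) = 1 := by
  have horth := M.s_mul_s j (M.star j)
  rw [if_pos rfl] at horth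
  rw [← horth, Finset.mul_sum]
  refine Finset.sum_congr rfl fun k _ => ?_
  rw [M.s_star k, M.star_involutive, M.s_symm j k, M.s_eq_mul_columnCharacter k,
    M.s_eq_mul_columnCharacter (M.star k)]
  ring

section Integrality

-- Multiplication by `χ_j(i)` preserves the finitely generated group spanned by the values of `χ_j`.
lemma isIntegral_columnCharacter (j i : I) : IsIntegral ℤ (M.columnCharacter j i) := by
  set V := Submodule.span ℤ (Set.range (M.columnCharacter j))
  have hV (k : I) : M.columnCharacter j k ∈ V := Submodule.subset_span (Set.mem_range_self k)
  have hV_ne_bot : V ≠ ⊥ := fun hbot => one_ne_zero <|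
    (M.columnCharacter_one j).symm.trans ((Submodule.mem_bot ℤ).1 (hbot ▸ hV M.one))
  refine isIntegral_of_smul_mem_submodule V hV_ne_bot (Submodule.fg_span (Set.finite_range _)) _
    fun x hx => ?_
  induction hx using Submodule.span_induction with
  | mem x hx =>
    obtain ⟨l, rfl⟩ := hx
    rw [smul_eq_mul, columnCharacter_mul]
    refine Submodule.sum_mem _ fun k _ => ?_
    rw [← nsmul_eq_mul]
    exact nsmul_mem (hV k) _
  | zero => rw [smul_zero]; exact zero_mem V
  | add x y _ _ hx hy => rw [smul_add]; exact add_mem hx hy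
  | smul a x _ hx => rw [smul_comm]; exact V.smul_mem a hx

lemma isIntegral_s (i j : I) : IsIntegral ℚ (M.s i j) := by
  have hχ (k : I) : IsIntegral ℚ (M.columnCharacter j k) :=
    (M.isIntegral_columnCharacter j k).tower_top
  rw [s_eq_mul_columnCharacter]
  refine .mul (.of_pow two_pos ?_) (hχ i)
  rw [eq_inv_of_mul_eq_one_left (M.sq_mul_sum_columnCharacter j)]
  exact .inv (.sum _ fun k _ => (hχ k).mul (hχ _))

instance : NumberField M.entryField where
  to_finiteDimensional := by
    have : Finite (Set.range fun x : I × I => M.s x.1 x.2) := Set.finite_range _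
    refine IntermediateField.finiteDimensional_adjoin ?_
    rintro _ ⟨⟨i, j⟩, rfl⟩
    exact M.isIntegral_s i j

end Integrality

section GaloisAction

variable (ψ : M.entryField →+* ℂ) (j : I)

lemma exists_map_div_eq_columnCharacter :
    ∃ j', ∀ i, ψ (M.entry i j / M.entry M.one j) = M.columnCharacter j' i := by
  refine M.char_column (fun i => ψ (M.entry i j / M.entry M.one j)) ?_ fun i l => ?_
  · have hne : M.entry M.one j ≠ 0 := fun h => M.s_one_ne_zero j (congrArg Subtype.val h)
    rw [div_self hne, map_one]
  · have hmul : M.entry i j / M.entry M.one j * (M.entry l j / M.entry M.one j) =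
        ∑ k, (M.N i l k : M.entryField) * (M.entry k j / M.entry M.one j) := by
      apply Subtype.ext
      push_cast
      exact M.columnCharacter_mul j i l
    rw [← map_mul, hmul, map_sum]
    exact Finset.sum_congr rfl fun k _ => by rw [map_mul, map_natCast]

variable {M ψ j} in
lemma map_entry_one_sq {j' : I}
    (hj' : ∀ i, ψ (M.entry i j / M.entry M.one j) = M.columnCharacter j' i) :
    ψ (M.entry M.one j) ^ 2 = M.s M.one j' ^ 2 := by
  have hsum : M.entry M.one j ^ 2 *
      ∑ k, M.entry k j / M.entry M.one j * (M.entry (M.star k) j / M.entry M.one j) = 1 := by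
    apply Subtype.ext
    push_cast
    exact M.sq_mul_sum_columnCharacter j
  have hψsum := congrArg ψ hsum
  simp only [map_one, map_mul, map_sum, map_pow, hj'] at hψsum
  exact (eq_inv_of_mul_eq_one_left hψsum).trans
    (eq_inv_of_mul_eq_one_left (M.sq_mul_sum_columnCharacter j')).symm

lemma exists_map_entry_eq : ∃ (ε : ℤ) (j' : I), ∀ i, ψ (M.entry i j) = ε * M.s i j' := by
  obtain ⟨j', hj'⟩ := M.exists_map_div_eq_columnCharacter ψ j
  have hne : M.entry M.one j ≠ 0 := fun h => M.s_one_ne_zero j (congrArg Subtype.val h)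
  obtain ⟨ε, hε⟩ : ∃ ε : ℤ, ψ (M.entry M.one j) = ε * M.s M.one j' := by
    rcases sq_eq_sq_iff_eq_or_eq_neg.1 (map_entry_one_sq hj') with h | h
    · exact ⟨1, by rw [h, Int.cast_one, one_mul]⟩
    · exact ⟨-1, by rw [h, Int.cast_neg, Int.cast_one, neg_one_mul]⟩
  refine ⟨ε, j', fun i => ?_⟩
  rw [← mul_div_cancel₀ (M.entry i j) hne, map_mul, hj', hε, mul_assoc,
    ← M.s_eq_mul_columnCharacter]

lemma exists_apply_entry_eq (σ : Gal(M.entryField/ℚ)) :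
    ∃ (ε : ℤ) (j' : I), ∀ i, σ (M.entry i j) = ε * M.entry i j' := by
  obtain ⟨ε, j', h⟩ :=
    M.exists_map_entry_eq ((algebraMap M.entryField ℂ).comp (σ : M.entryField →+* M.entryField)) j
  refine ⟨ε, j', fun i => Subtype.ext ?_⟩
  push_cast
  exact h i

end GaloisAction

lemma normal_entryField : Normal ℚ M.entryField := by
  refine KroneckerWeber.normal_of_forall_fieldRange_le fun ψ =>
    KroneckerWeber.fieldRange_le_adjoin ?_
  rintro _ ⟨⟨i, j⟩, rfl⟩
  obtain ⟨ε, j', h⟩ := M.exists_map_entry_eq ψ.toRingHom j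
  exact (h i).symm ▸ mul_mem (intCast_mem _ ε) (M.entry i j').2

-- By symmetry of `s`, one of the automorphisms may be let act on rows instead of columns.
lemma apply_apply_entry_comm (σ τ : Gal(M.entryField/ℚ)) (i j : I) :
    σ (τ (M.entry i j)) = τ (σ (M.entry i j)) := by
  obtain ⟨ε, j', hσ⟩ := M.exists_apply_entry_eq j σ
  obtain ⟨δ, i', hτ⟩ := M.exists_apply_entry_eq i τ
  rw [hσ, M.entry_symm i j, hτ, map_mul, map_mul, map_intCast, map_intCast, M.entry_symm j i', hσ,
    M.entry_symm i j', hτ, M.entry_symm i' j']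
  ring

instance : IsAbelianGalois ℚ M.entryField where
  to_normal := M.normal_entryField
  is_comm.comm σ τ := by
    have hστ : (σ * τ).toAlgHom = (τ * σ).toAlgHom :=
      IntermediateField.algHom_ext_of_eq_adjoin ℚ rfl <| by
        rintro _ ⟨⟨i, j⟩, rfl⟩
        exact M.apply_apply_entry_comm σ τ i j
    exact AlgEquiv.ext fun x => DFunLike.congr_fun hστ x

end ModularData

/-- All entries of the S-matrix of modular data lie in a cyclotomic field: there is a
root of unity `ξ` such that every `s i j` lies in `ℚ(ξ)`. -/
theorem smatrix_entries_in_cyclotomic_field {I : Type} [Fintype I] [DecidableEq I]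
    (M : ModularData I) :
    ∃ ξ : ℂ, (∃ n : ℕ, 1 ≤ n ∧ ξ ^ n = 1) ∧
      ∀ i j, M.s i j ∈ Algebra.adjoin ℚ ({ξ} : Set ℂ) := by
  obtain ⟨ξ, n, hn, hξ, hle⟩ := KroneckerWeber.kronecker_weber M.entryField
  refine ⟨ξ, ⟨n, hn, hξ⟩, fun i j => ?_⟩
  have hξ_alg : IsAlgebraic ℚ ξ := (IsIntegral.of_pow hn (hξ ▸ isIntegral_one)).isAlgebraic
  rw [← IntermediateField.adjoin_simple_toSubalgebra_of_isAlgebraic hξ_alg]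
  exact hle (M.entry i j).2
end

section
/- (Larson–Radford theorem) Let H be a finite-dimensional Hopf algebra over ℂ that is semisimple as a ring. Then its antipode S satisfies S² = id, i.e. S ∘ S is the identity linear map of H. -/
/-!
Averaging over the comultiplication `t₁ ⊗ S(t₂)` of a Haar integral `t` shows that the functional
`c(x) = Tr(y ↦ S²(y) x)` is a nondegenerate integral on `H`. Comparing `c ∘ S` with `c` gives
Radford's formula: `S⁴` is conjugation by a group-like element `g`. Group-like elements have finite
order, so `S²` has finite order as well. The element `S(t₂) t₁` implements `S²` by conjugation and
has nonzero trace on every simple module; hence, on each simple block `End V`, `S²` is conjugation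
by some `b` of finite order with `Tr b ≠ 0`, and its trace there is `|Tr b|²`. Therefore
`c(1) = Tr S² > 0`, which forces `g = 1` and `S⁴ = 1`.

The regular character `χ` of the dual algebra satisfies `χ² = n χ` with `n = dim H`, `S²(χ) = χ` and
`c(χ) = Tr S²`. So `n⁻¹ χ` acts by right multiplication as a projection `P` commuting with the
involution `S²`, and `Tr S² = n Tr(P S²)`. Both traces are integers and `0 < |Tr S²| ≤ n`, hence
`|Tr S²| = n` and `S² = ±1`; the sign is settled by `S²(1) = 1`.
-/

namespace LarsonRadford

open TensorProduct Coalgebra HopfAlgebra MulOpposite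

/-! ### The antipode and the comultiplication -/

section Antipode

variable {R C M H : Type*} [CommSemiring R]

lemma sum_lTensor_assoc_comul [AddCommMonoid C] [Module R C] [Coalgebra R C] [AddCommMonoid M]
    [Module R M] {T : C ⊗[R] C →ₗ[R] M} {u : M} (hT : ∀ x, T (comul x) = counit (R := R) x • u)
    {ι : Type*} {x : C} (r : Repr R x ι) :
    ∑ i ∈ r.index, T.lTensor C (TensorProduct.assoc R C C C (comul (r.left i) ⊗ₜ r.right i)) =
      x ⊗ₜ u := by
  have hT' : T ∘ₗ comul = counit.smulRight u := LinearMap.ext hT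
  calc
    _ = T.lTensor C (TensorProduct.assoc R C C C (comul.rTensor C (comul x))) := by
      simp only [← r.eq, map_sum, LinearMap.rTensor_tmul]
    _ = (counit.smulRight u).lTensor C (comul x) := by
      rw [coassoc_apply, ← LinearMap.lTensor_comp_apply, hT']
    _ = TensorProduct.map .id (.toSpanSingleton R M u) (counit.lTensor C (comul x)) := by
      simp only [← r.eq, map_sum, LinearMap.lTensor_tmul, map_tmul, LinearMap.id_apply,
        LinearMap.smulRight_apply, LinearMap.toSpanSingleton_apply]
    _ = x ⊗ₜ u := by simp

variable [Semiring H] [HopfAlgebra R H]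

lemma sum_comul_mul_one_tmul_antipode {ι : Type*} {x : H} (r : Repr R x ι) :
    ∑ i ∈ r.index, comul (R := R) (r.left i) * (1 ⊗ₜ antipode R (r.right i)) = x ⊗ₜ 1 := by
  rw [← sum_lTensor_assoc_comul (T := LinearMap.mul' R H ∘ₗ (antipode R).lTensor H)
    (fun y => by simp [Algebra.algebraMap_eq_smul_one]) r]
  refine Finset.sum_congr rfl fun i _ => ?_
  simp only [← (ℛ R (r.left i)).eq, Finset.sum_mul, sum_tmul, map_sum,
    Algebra.TensorProduct.tmul_mul_tmul, mul_one, assoc_tmul, LinearMap.lTensor_tmul,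
    LinearMap.comp_apply, LinearMap.mul'_apply]

/-- `y₁ x ⊗ y₂ = y₁ x₁ ⊗ y₂ x₂ S(x₃)`. -/
lemma comul_mul_tmul_one {ι : Type*} (y : H) {x : H} (r : Repr R x ι) :
    comul y * (x ⊗ₜ[R] 1) =
      ∑ i ∈ r.index, comul (y * r.left i) * (1 ⊗ₜ antipode R (r.right i)) := by
  simp only [Bialgebra.comul_mul, mul_assoc, ← Finset.mul_sum, sum_comul_mul_one_tmul_antipode]

variable (R H) in
/-- The algebra homomorphism `x ↦ x₁ ⊗ S(x₂)`, with values in `H ⊗ Hᵐᵒᵖ`. -/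
noncomputable def comulAntipode : H →ₐ[R] H ⊗[R] Hᵐᵒᵖ :=
  (Algebra.TensorProduct.map (.id R H) (antipodeAlgHomOp R H)).comp (Bialgebra.comulAlgHom R H)

lemma comulAntipode_apply {ι : Type*} {x : H} (r : Repr R x ι) :
    comulAntipode R H x = ∑ i ∈ r.index, r.left i ⊗ₜ op (antipode R (r.right i)) := by
  simp [comulAntipode, ← r.eq]

lemma mulLeftRight_comulAntipode (x : H) :
    AlgHom.mulLeftRight R H (comulAntipode R H x) 1 = algebraMap R H (counit x) := by
  simp [comulAntipode_apply (ℛ R x), sum_mul_antipode_eq_algebraMap_counit]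

lemma sum_one_tmul_op_mul_comulAntipode {ι : Type*} {x : H} (r : Repr R x ι) :
    ∑ i ∈ r.index, (1 ⊗ₜ op (r.right i)) * comulAntipode R H (r.left i) = x ⊗ₜ 1 := by
  rw [← sum_lTensor_assoc_comul (T := (opLinearEquiv R).toLinearMap ∘ₗ
    LinearMap.mul' R H ∘ₗ (antipode R).rTensor H) (u := (1 : Hᵐᵒᵖ))
    (fun y => by simp [Algebra.algebraMap_eq_smul_one]) r]
  refine Finset.sum_congr rfl fun i _ => ?_
  simp only [← (ℛ R (r.left i)).eq, comulAntipode_apply (ℛ R (r.left i)), Finset.mul_sum,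
    sum_tmul, map_sum, Algebra.TensorProduct.tmul_mul_tmul, one_mul, assoc_tmul,
    LinearMap.lTensor_tmul, LinearMap.rTensor_tmul, LinearMap.comp_apply, LinearMap.mul'_apply]
  rfl

variable (R H) in
/-- The square `S²` of the antipode, as an algebra endomorphism. -/
noncomputable def antipodeSq : H →ₐ[R] H :=
  .ofLinearMap (antipode R ∘ₗ antipode R) (by simp) (by simp [antipode_mul_antidistrib])

lemma antipodeSq_apply (x : H) : antipodeSq R H x = antipode R (antipode R x) := rfl

end Antipode

/-! ### Separability idempotents -/

section Separable

variable {R A : Type*}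

/-- A separability idempotent of the algebra `A`: an element `∑ aᵢ ⊗ bᵢ` with `∑ aᵢ bᵢ = 1` and
`∑ a aᵢ ⊗ bᵢ = ∑ aᵢ ⊗ bᵢ a` for all `a`. The second factor is taken in `Aᵐᵒᵖ`, so that both sides
are products in the algebra `A ⊗ Aᵐᵒᵖ`. -/
structure IsSeparabilityIdempotent [CommSemiring R] [Semiring A] [Algebra R A]
    (z : A ⊗[R] Aᵐᵒᵖ) : Prop where
  mulLeftRight_one : AlgHom.mulLeftRight R A z 1 = 1
  tmul_one_mul (a : A) : (a ⊗ₜ 1) * z = (1 ⊗ₜ op a) * z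

section Average

variable {M N : Type*} [CommSemiring R] [Semiring A] [Algebra R A]
  [AddCommMonoid M] [Module R M] [Module A M] [IsScalarTower R A M]
  [AddCommMonoid N] [Module R N] [Module A N] [IsScalarTower R A N]

/-- The average `m ↦ ∑ aᵢ p(bᵢ m)` of a linear map `p` over `z = ∑ aᵢ ⊗ bᵢ`. -/
noncomputable def average (p : M →ₗ[R] N) : A ⊗[R] Aᵐᵒᵖ →ₗ[R] M →ₗ[R] N :=
  TensorProduct.lift <| (LinearMap.llcomp R M N N ∘ₗ (Algebra.lsmul R R N).toLinearMap).compl₂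
    (LinearMap.llcomp R M M N p ∘ₗ (Algebra.lsmul R R M).toLinearMap ∘ₗ
      (opLinearEquiv R).symm.toLinearMap)

lemma average_tmul (p : M →ₗ[R] N) (a : A) (b : Aᵐᵒᵖ) (m : M) :
    average p (a ⊗ₜ b) m = a • p (b.unop • m) := rfl

lemma average_tmul_one_mul (p : M →ₗ[R] N) (a : A) (z : A ⊗[R] Aᵐᵒᵖ) (m : M) :
    average p ((a ⊗ₜ 1) * z) m = a • average p z m := by
  induction z with
  | zero => simp
  | add x y hx hy => simp only [mul_add, map_add, LinearMap.add_apply, smul_add, hx, hy]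
  | tmul b c => simp [average_tmul, mul_smul]

lemma average_one_tmul_op_mul (p : M →ₗ[R] N) (a : A) (z : A ⊗[R] Aᵐᵒᵖ) (m : M) :
    average p ((1 ⊗ₜ op a) * z) m = average p z (a • m) := by
  induction z with
  | zero => simp
  | add x y hx hy => simp only [mul_add, map_add, LinearMap.add_apply, hx, hy]
  | tmul b c => simp [average_tmul, mul_smul]

lemma average_apply_of_forall_smul {p : M →ₗ[R] N} {m : M} {n : N} (h : ∀ a : A, p (a • m) = a • n)
    (z : A ⊗[R] Aᵐᵒᵖ) : average p z m = AlgHom.mulLeftRight R A z 1 • n := by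
  induction z with
  | zero => simp
  | add x y hx hy => simp only [map_add, LinearMap.add_apply, add_smul, hx, hy]
  | tmul b c => simp [average_tmul, mul_smul, h]

end Average

namespace IsSeparabilityIdempotent

theorem moduleFinite [CommSemiring R] [Semiring A] [Algebra R A] [Module.Free R A]
    {z : A ⊗[R] Aᵐᵒᵖ} (hz : IsSeparabilityIdempotent z) : Module.Finite R A := by
  classical
  let b := Module.Free.chooseBasis R A
  obtain ⟨u, rfl⟩ := (TensorProduct.equivFinsuppOfBasisLeft (N := Aᵐᵒᵖ) b).symm.surjective z
  rw [TensorProduct.equivFinsuppOfBasisLeft_symm_apply] at hz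
  have hone : ∑ j ∈ u.support, b j * (u j).unop = 1 := by
    simpa [Finsupp.sum] using hz.mulLeftRight_one
  have hmul (x : A) (j) : (u j).unop * x = ∑ i ∈ u.support, b.coord j (x * b i) • (u i).unop := by
    have h := congr(unop (TensorProduct.lid R Aᵐᵒᵖ ((b.coord j).rTensor _ $(hz.tmul_one_mul x))))
    simp only [Finsupp.sum, Finset.mul_sum, Algebra.TensorProduct.tmul_mul_tmul, one_mul, map_sum,
      LinearMap.rTensor_tmul, lid_tmul] at h
    obtain hj | hj := eq_or_ne (u j) 0 <;> simpa [Finsupp.single_apply, hj] using! h.symm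
  refine ⟨(u.support ×ˢ u.support).image fun ij => b ij.2 * (u ij.1).unop,
    eq_top_iff.2 fun x _ => ?_⟩
  have hx : x = ∑ j ∈ u.support, ∑ i ∈ u.support, b.coord j (x * b i) • (b j * (u i).unop) := by
    conv_lhs => rw [← one_mul x, ← hone, Finset.sum_mul]
    simp only [mul_assoc, hmul, Finset.mul_sum, mul_smul_comm]
  rw [hx]
  exact Submodule.sum_mem _ fun j hj => Submodule.sum_mem _ fun i hi => Submodule.smul_mem _ _
    (Submodule.subset_span (Finset.mem_coe.2 (Finset.mem_image.2
      ⟨(i, j), Finset.mk_mem_product hi hj, rfl⟩)))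

theorem exists_leftInverse {M N : Type*} [CommSemiring R] [Semiring A] [Algebra R A]
    [AddCommMonoid M] [Module R M] [Module A M] [IsScalarTower R A M]
    [AddCommMonoid N] [Module R N] [Module A N] [IsScalarTower R A N]
    {z : A ⊗[R] Aᵐᵒᵖ} (hz : IsSeparabilityIdempotent z) {f : N →ₗ[A] M} {p : M →ₗ[R] N}
    (hp : Function.LeftInverse p f) : ∃ g : M →ₗ[A] N, Function.LeftInverse g f := by
  refine ⟨{ average p z with map_smul' := fun a m => ?_ }, fun n => ?_⟩
  · change average p z (a • m) = a • average p z m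
    rw [← average_one_tmul_op_mul, ← hz.tmul_one_mul, average_tmul_one_mul]
  · have h : average p z (f n) = AlgHom.mulLeftRight R A z 1 • n :=
      average_apply_of_forall_smul (fun a => by rw [← map_smul, hp]) z
    rwa [hz.mulLeftRight_one, one_smul] at h

theorem isSemisimpleModule [Field R] [Ring A] [Algebra R A] {z : A ⊗[R] Aᵐᵒᵖ}
    (hz : IsSeparabilityIdempotent z) (M : Type*) [AddCommGroup M] [Module R M] [Module A M]
    [IsScalarTower R A M] : IsSemisimpleModule A M := by
  refine (isSemisimpleModule_iff _ _).2 ⟨fun N => ?_⟩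
  obtain ⟨p, hp⟩ := (N.subtype.restrictScalars R).exists_leftInverse_of_injective
    (LinearMap.ker_eq_bot.2 N.injective_subtype)
  obtain ⟨g, hg⟩ := hz.exists_leftInverse (f := N.subtype) (LinearMap.congr_fun hp)
  exact ⟨_, LinearMap.isCompl_of_proj hg⟩

end IsSeparabilityIdempotent

end Separable

/-! ### Haar integrals -/

/-- A Haar integral of a bialgebra: a two-sided integral `t` normalized by `ε(t) = 1`. -/
structure IsHaarIntegral (R : Type*) {H : Type*} [CommSemiring R] [Semiring H] [Bialgebra R H]
    (t : H) : Prop where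
  mul_left (h : H) : h * t = counit (R := R) h • t
  mul_right (h : H) : t * h = counit (R := R) h • t
  counit_eq_one : counit (R := R) t = 1

section Existence

variable {R A H : Type*} [CommRing R]

lemma exists_mul_eq_smul [Ring A] [Algebra R A] [IsSemisimpleRing A] (e : A →ₐ[R] R) :
    ∃ b : A, e b = 1 ∧ ∀ h, h * b = e h • b := by
  obtain ⟨I, hI⟩ := exists_isCompl (RingHom.ker e : Submodule A A)
  obtain ⟨a, ha, b, hb, hab⟩ := Submodule.mem_sup.1 (hI.sup_eq_top ▸ Submodule.mem_top (x := 1))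
  have hker (h : A) (hh : e h = 0) : h * b = 0 :=
    Submodule.disjoint_def.1 hI.disjoint _ ((RingHom.mem_ker).2 (by simp [hh])) (I.smul_mem h hb)
  refine ⟨b, by simpa [(RingHom.mem_ker).1 ha] using congr(e $hab), fun h => ?_⟩
  have := hker (h - algebraMap R A (e h)) (by simp)
  rwa [sub_mul, sub_eq_zero, ← Algebra.smul_def] at this

variable [Ring H] [Bialgebra R H]

variable (R H) in
theorem exists_isHaarIntegral [IsSemisimpleRing H] : ∃ t : H, IsHaarIntegral R t := by
  let e := Bialgebra.counitAlgHom R H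
  obtain ⟨t, ht1, ht⟩ := exists_mul_eq_smul e
  have : IsSemisimpleRing Hᵐᵒᵖ := isSemisimpleRing_mulOpposite_iff.2 ‹_›
  obtain ⟨u, hu1, hu⟩ := exists_mul_eq_smul (AlgHom.fromOpposite e fun _ _ => Commute.all _ _)
  have hu' (h : H) : u.unop * h = e h • u.unop := congr(unop $(hu (op h)))
  have hut : u.unop = t := by
    calc u.unop = e t • u.unop := by rw [ht1, one_smul]
      _ = e u.unop • t := by rw [← hu', ht]
      _ = t := by rw [show e u.unop = 1 from hu1, one_smul]
  exact ⟨t, ht, fun h => hut ▸ hu' h, ht1⟩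

end Existence

namespace IsHaarIntegral

variable {R S H : Type*} [CommSemiring R] [CommSemiring S] [Algebra R S] [Semiring H]

section Bialgebra

variable [Bialgebra R H] {t : H}

lemma nontrivial [Nontrivial R] (ht : IsHaarIntegral R t) : Nontrivial H :=
  ⟨t, 0, by rintro rfl; simpa using ht.counit_eq_one⟩

variable (S) in
theorem baseChange (ht : IsHaarIntegral R t) : IsHaarIntegral S ((1 : S) ⊗ₜ[R] t) where
  mul_left h := by
    induction h with
    | zero => simp
    | add x y hx hy => simp only [add_mul, map_add, add_smul, hx, hy]
    | tmul s h => simp [ht.mul_left, smul_tmul']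
  mul_right h := by
    induction h with
    | zero => simp
    | add x y hx hy => simp only [mul_add, map_add, add_smul, hx, hy]
    | tmul s h => simp [ht.mul_right, smul_tmul']
  counit_eq_one := by simp [ht.counit_eq_one]

end Bialgebra

variable [HopfAlgebra R H] {t : H} (ht : IsHaarIntegral R t)
include ht

lemma sum_mul_antipode {ι : Type*} (r : Repr R t ι) :
    ∑ i ∈ r.index, r.left i * antipode R (r.right i) = 1 := by
  rw [sum_mul_antipode_eq_smul, ht.counit_eq_one, one_smul]

lemma comul_mul_tmul_one (x : H) :
    comul t * (x ⊗ₜ[R] 1) = comul t * (1 ⊗ₜ[R] antipode R x) := by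
  calc
    _ = ∑ i ∈ (ℛ R x).index, comul t * (1 ⊗ₜ[R]
          antipode R (counit (R := R) ((ℛ R x).left i) • (ℛ R x).right i)) := by
      simp only [LarsonRadford.comul_mul_tmul_one t (ℛ R x), ht.mul_right, map_smul, tmul_smul,
        smul_mul_assoc, mul_smul_comm]
    _ = _ := by rw [← Finset.mul_sum, ← tmul_sum, ← map_sum, sum_counit_smul]

lemma tmul_one_mul_comulAntipode (x : H) :
    (x ⊗ₜ 1) * comulAntipode R H t = (1 ⊗ₜ op x) * comulAntipode R H t := by
  calc
    _ = ∑ i ∈ (ℛ R x).index, ((1 : H) ⊗ₜ[R]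
          op (counit (R := R) ((ℛ R x).left i) • (ℛ R x).right i)) * comulAntipode R H t := by
      simp only [← sum_one_tmul_op_mul_comulAntipode (ℛ R x), Finset.sum_mul, mul_assoc, ← map_mul,
        ht.mul_left, map_smul, op_smul, tmul_smul, smul_mul_assoc, mul_smul_comm]
    _ = _ := by rw [← Finset.sum_mul, ← tmul_sum, ← Finset.op_sum, sum_counit_smul]

theorem isSeparabilityIdempotent : IsSeparabilityIdempotent (comulAntipode R H t) where
  mulLeftRight_one := by rw [mulLeftRight_comulAntipode, ht.counit_eq_one, map_one]
  tmul_one_mul := ht.tmul_one_mul_comulAntipode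

end IsHaarIntegral

/-! ### Contractions of the comultiplication -/

section Contraction

lemma eq_of_forall_rTensor_dual {R M N : Type*} [CommSemiring R] [AddCommMonoid M] [Module R M]
    [Module.Free R M] [AddCommMonoid N] [Module R N] {z w : M ⊗[R] N}
    (h : ∀ p : Module.Dual R M, p.rTensor N z = p.rTensor N w) : z = w := by
  classical
  refine (TensorProduct.equivFinsuppOfBasisLeft (N := N)
    (Module.Free.chooseBasis R M)).injective (Finsupp.ext fun i => ?_)
  rw [TensorProduct.equivFinsuppOfBasisLeft_apply, TensorProduct.equivFinsuppOfBasisLeft_apply, h]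

lemma eq_of_forall_dual {R M : Type*} [CommSemiring R] [AddCommMonoid M] [Module R M]
    [Module.Free R M] {x y : M} (h : ∀ p : Module.Dual R M, p x = p y) : x = y :=
  (Module.Free.chooseBasis R M).ext_elem fun i => h ((Module.Free.chooseBasis R M).coord i)

variable {R C : Type*} [CommSemiring R] [AddCommMonoid C] [Module R C] [Coalgebra R C]

/-- The endomorphism `x ↦ p(x₁) x₂`, that is, the right action of the dual algebra on `C`. -/
noncomputable def contractFst : Module.Dual R C →ₗ[R] Module.End R C where
  toFun p := TensorProduct.lid R C ∘ₗ p.rTensor C ∘ₗ comul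
  map_add' p q := by ext; simp [LinearMap.rTensor_add]
  map_smul' a p := by ext; simp [LinearMap.rTensor_smul]

/-- The endomorphism `x ↦ p(x₂) x₁`, that is, the left action of the dual algebra on `C`. -/
noncomputable def contractSnd (p : Module.Dual R C) : Module.End R C :=
  TensorProduct.rid R C ∘ₗ p.lTensor C ∘ₗ comul

variable (p q : Module.Dual R C)

lemma contractFst_apply (x : C) :
    contractFst p x = TensorProduct.lid R C (p.rTensor C (comul x)) := rfl

lemma contractSnd_apply (x : C) :
    contractSnd p x = TensorProduct.rid R C (p.lTensor C (comul x)) := rfl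

lemma contractFst_eq_sum {ι : Type*} {x : C} (r : Repr R x ι) :
    contractFst p x = ∑ i ∈ r.index, p (r.left i) • r.right i := by
  simp [contractFst_apply, ← r.eq]

lemma contractSnd_eq_sum {ι : Type*} {x : C} (r : Repr R x ι) :
    contractSnd p x = ∑ i ∈ r.index, p (r.right i) • r.left i := by
  simp [contractSnd_apply, ← r.eq]

lemma apply_contractFst (x : C) : p (contractFst q x) = q (contractSnd p x) := by
  simp [contractFst_eq_sum q (ℛ R x), contractSnd_eq_sum p (ℛ R x), mul_comm]

lemma contractFst_contractFst (x : C) :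
    contractFst p (contractFst q x) = contractFst (p ∘ₗ contractFst q) x := by
  have h := congr(TensorProduct.lid R C (TensorProduct.map q (TensorProduct.lid R C ∘ₗ p.rTensor C)
    $(sum_tmul_tmul_eq (ℛ R x) (fun i => ℛ R ((ℛ R x).left i)) fun i => ℛ R ((ℛ R x).right i))))
  simp only [map_sum, map_tmul, LinearMap.comp_apply, LinearEquiv.coe_coe, LinearMap.rTensor_tmul,
    lid_tmul] at h
  rw [contractFst_eq_sum q (ℛ R x), contractFst_eq_sum (p ∘ₗ contractFst q) (ℛ R x), map_sum]
  simp only [map_smul, LinearMap.comp_apply, contractFst_eq_sum p (ℛ R ((ℛ R x).right _)),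
    contractFst_eq_sum q (ℛ R ((ℛ R x).left _)), map_sum, Finset.smul_sum, Finset.sum_smul,
    smul_assoc]
  exact h.symm

end Contraction

section Bialgebra

variable {R H : Type*} [CommSemiring R] [Semiring H] [Bialgebra R H] (p : Module.Dual R H)

lemma contractFst_one : contractFst p (1 : H) = p 1 • 1 := by
  simp [contractFst_apply, Algebra.TensorProduct.one_def]

lemma contractSnd_one : contractSnd p (1 : H) = p 1 • 1 := by
  simp [contractSnd_apply, Algebra.TensorProduct.one_def]

end Bialgebra

lemma contractFst_comp_mulRight {R H : Type*} [CommSemiring R] [Semiring H] [HopfAlgebra R H]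
    (p : Module.Dual R H) (y : H) {ι : Type*} {x : H} (r : Repr R x ι) :
    contractFst (p ∘ₗ LinearMap.mulRight R x) y =
      ∑ i ∈ r.index, contractFst p (y * r.left i) * antipode R (r.right i) := by
  have h (z : H ⊗[R] H) (a b : H) : TensorProduct.lid R H (p.rTensor H (z * (a ⊗ₜ b))) =
      TensorProduct.lid R H ((p ∘ₗ LinearMap.mulRight R a).rTensor H z) * b := by
    induction z with
    | zero => simp
    | add x y hx hy => simp only [add_mul, map_add, hx, hy]
    | tmul c d => simp
  simpa [h, contractFst_apply] using
    congr(TensorProduct.lid R H (p.rTensor H $(comul_mul_tmul_one y r)))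

/-! ### The trace integral -/

section TraceIntegral

variable {R H : Type*}

namespace IsHaarIntegral

variable [CommSemiring R] [Semiring H] [HopfAlgebra R H] {t : H} (ht : IsHaarIntegral R t)
include ht

lemma contractFst_comp_mulRight (p : Module.Dual R H) (x : H) :
    contractFst (p ∘ₗ LinearMap.mulRight R x) t = contractFst p t * antipode R x := by
  simp only [LarsonRadford.contractFst_comp_mulRight p t (ℛ R x), ht.mul_right, map_smul,
    smul_mul_assoc, ← mul_smul_comm]
  simp only [← map_smul, ← Finset.mul_sum, ← map_sum, sum_counit_smul]

lemma contractSnd_comp_mulRight_antipode (p : Module.Dual R H) (x : H) :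
    contractSnd (p ∘ₗ LinearMap.mulRight R (antipode R x)) t = contractSnd p t * x := by
  have h := congr(TensorProduct.rid R H (p.lTensor H $(ht.comul_mul_tmul_one x)))
  simp only [← (ℛ R t).eq, Finset.sum_mul, Algebra.TensorProduct.tmul_mul_tmul, mul_one, map_sum,
    LinearMap.lTensor_tmul, rid_tmul] at h
  simpa only [contractSnd_eq_sum _ (ℛ R t), Finset.sum_mul, smul_mul_assoc, LinearMap.comp_apply,
    LinearMap.mulRight_apply] using h.symm

end IsHaarIntegral

variable [CommRing R] [Ring H] [HopfAlgebra R H]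

variable (R H) in
/-- The functional `c : x ↦ Tr(y ↦ S²(y) x)`, an integral on `H` if `H` has a Haar integral. -/
noncomputable def traceIntegral : Module.Dual R H :=
  LinearMap.trace R H ∘ₗ LinearMap.lcomp R H (antipodeSq R H).toLinearMap ∘ₗ
    (LinearMap.mul R H).flip

lemma traceIntegral_apply (x : H) : traceIntegral R H x =
    LinearMap.trace R H (LinearMap.mulRight R x ∘ₗ (antipodeSq R H).toLinearMap) := rfl

lemma traceIntegral_one :
    traceIntegral R H 1 = LinearMap.trace R H (antipodeSq R H).toLinearMap := by
  rw [traceIntegral_apply, LinearMap.mulRight_one, LinearMap.id_comp]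

/-- `S²` is the Nakayama automorphism of the form `(x, y) ↦ traceIntegral (x * y)`. -/
lemma traceIntegral_mul (x y : H) :
    traceIntegral R H (x * y) = traceIntegral R H (antipodeSq R H y * x) := by
  have h (z : H) : LinearMap.mulRight R (x * z) =
      LinearMap.mulRight R z * LinearMap.mulRight R x := by ext; simp [mul_assoc]
  rw [traceIntegral_apply, traceIntegral_apply, ← Module.End.mul_eq_comp, h, mul_assoc,
    LinearMap.trace_mul_comm]
  congr 1
  ext z
  simp [mul_assoc]

lemma traceIntegral_eq_sum {ι : Type*} [Fintype ι] (b : Module.Basis ι R H) (x : H) :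
    traceIntegral R H x = ∑ i, b.coord i (antipodeSq R H (b i) * x) := by
  classical
  simp [traceIntegral_apply, LinearMap.trace_eq_matrix_trace R b, Matrix.trace,
    LinearMap.toMatrix_apply]

variable [Module.Free R H] [Module.Finite R H]

namespace IsHaarIntegral

variable {t : H} (ht : IsHaarIntegral R t)
include ht

lemma traceIntegral_self : traceIntegral R H t = 1 := by
  have h : LinearMap.mulRight R t ∘ₗ (antipodeSq R H).toLinearMap = counit.smulRight t := by
    ext x; simp [ht.mul_left, antipodeSq_apply]
  rw [traceIntegral_apply, h, LinearMap.trace_smulRight, ht.counit_eq_one]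

/-- `t₁ ⊗ S(t₂)` consists of dual bases for the form `(x, y) ↦ traceIntegral (x * y)`. -/
lemma contractSnd_traceIntegral_mulRight_antipode (x : H) :
    contractSnd (traceIntegral R H ∘ₗ LinearMap.mulRight R x ∘ₗ antipode R) t = x := by
  have hone : contractSnd (traceIntegral R H ∘ₗ antipode R) t = 1 := by
    let b := Module.Free.chooseBasis R H
    have h (i) : (b.coord i ∘ₗ antipode R) ∘ₗ LinearMap.mulRight R (antipode R (b i)) =
        b.coord i ∘ₗ LinearMap.mulLeft R (antipodeSq R H (b i)) ∘ₗ antipode R := by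
      ext x; simp [antipode_mul_antidistrib, antipodeSq_apply]
    calc
      _ = ∑ i, contractSnd
            (b.coord i ∘ₗ LinearMap.mulLeft R (antipodeSq R H (b i)) ∘ₗ antipode R) t := by
        simp only [contractSnd_eq_sum _ (ℛ R t), LinearMap.comp_apply, traceIntegral_eq_sum b,
          Finset.sum_smul, LinearMap.mulLeft_apply]
        exact Finset.sum_comm
      _ = ∑ k ∈ (ℛ R t).index,
            (ℛ R t).left k * ∑ i, b.coord i (antipode R ((ℛ R t).right k)) • b i := by
        simp only [← h, ht.contractSnd_comp_mulRight_antipode, contractSnd_eq_sum _ (ℛ R t),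
          Finset.sum_mul, Finset.mul_sum, smul_mul_assoc, mul_smul_comm, LinearMap.comp_apply]
        exact Finset.sum_comm
      _ = 1 := by simp only [Module.Basis.coord_apply, b.sum_repr, ht.sum_mul_antipode]
  have h : traceIntegral R H ∘ₗ LinearMap.mulRight R x ∘ₗ antipode R =
      (traceIntegral R H ∘ₗ antipode R) ∘ₗ LinearMap.mulRight R (antipode R x) := by
    ext y
    simp [antipode_mul_antidistrib, traceIntegral_mul _ x, antipodeSq_apply]
  rw [h, ht.contractSnd_comp_mulRight_antipode, hone, one_mul]

lemma apply_eq_traceIntegral_mul (p : Module.Dual R H) (x : H) :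
    p x = traceIntegral R H (antipode R (contractFst p t) * x) := by
  conv_lhs => rw [← ht.contractSnd_traceIntegral_mulRight_antipode x]
  rw [← apply_contractFst]
  rfl

lemma traceIntegral_mul_injective :
    Function.Injective (LinearMap.mul R H |>.compr₂ (traceIntegral R H)) := by
  let b := Module.Free.chooseBasis R H
  classical
  exact OrzechProperty.injective_of_surjective_of_injective _ _ b.toDualEquiv.injective
    fun p => ⟨antipode R (contractFst p t), LinearMap.ext fun x =>
      (ht.apply_eq_traceIntegral_mul p x).symm⟩

lemma eq_of_forall_traceIntegral_mul_eq {x y : H}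
    (h : ∀ z, traceIntegral R H (x * z) = traceIntegral R H (y * z)) : x = y :=
  ht.traceIntegral_mul_injective (LinearMap.ext h)

lemma antipode_injective : Function.Injective (antipode R (A := H)) :=
  OrzechProperty.injective_of_surjective_endomorphism _ fun x =>
    ⟨_, ht.eq_of_forall_traceIntegral_mul_eq fun z =>
      (ht.apply_eq_traceIntegral_mul (traceIntegral R H ∘ₗ LinearMap.mulLeft R x) z).symm⟩

lemma contractFst_traceIntegral_self : contractFst (traceIntegral R H) t = 1 :=
  ht.antipode_injective <| ht.eq_of_forall_traceIntegral_mul_eq fun z => by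
    rw [← ht.apply_eq_traceIntegral_mul, antipode_one, one_mul]

lemma contractFst_traceIntegral (x : H) :
    contractFst (traceIntegral R H) x = traceIntegral R H x • 1 := by
  refine eq_of_forall_dual fun q : Module.Dual R H => ?_
  rw [← LinearMap.comp_apply, ht.apply_eq_traceIntegral_mul, ← contractFst_contractFst,
    ht.contractFst_traceIntegral_self, contractFst_one, map_smul, antipode_one, smul_one_mul,
    map_smul, map_smul, smul_eq_mul, smul_eq_mul, mul_comm]

lemma contractSnd_traceIntegral (x : H) : contractSnd (traceIntegral R H) x =
    traceIntegral R H x • contractSnd (traceIntegral R H) t := by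
  refine eq_of_forall_dual fun q : Module.Dual R H => ?_
  rw [← apply_contractFst, ← LinearMap.comp_apply, ht.apply_eq_traceIntegral_mul,
    ← contractFst_contractFst, ht.contractFst_traceIntegral, map_smul, antipode_one, smul_one_mul,
    map_smul, map_smul, apply_contractFst, smul_eq_mul, smul_eq_mul, mul_comm]

/-- `g = t₁ c(t₂)` is the distinguished group-like element. -/
lemma isGroupLikeElem_contractSnd_traceIntegral :
    IsGroupLikeElem R (contractSnd (traceIntegral R H) t) := by
  set g := contractSnd (traceIntegral R H) t
  have h (p q : Module.Dual R H) : q (contractFst p g) = q (p g • g) := by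
    calc
      _ = traceIntegral R H (contractFst q (contractFst p t)) := by
        rw [contractFst_contractFst, apply_contractFst (traceIntegral R H), LinearMap.comp_apply]
      _ = traceIntegral R H (contractFst p t) * q g := by
        rw [apply_contractFst _ q, ht.contractSnd_traceIntegral, map_smul, smul_eq_mul]
      _ = _ := by rw [apply_contractFst _ p, map_smul, smul_eq_mul]
  refine ⟨?_, eq_of_forall_rTensor_dual fun p => (TensorProduct.lid R H).injective ?_⟩
  · have : contractFst (counit (R := R)) t = t := by
      rw [contractFst_eq_sum _ (ℛ R t), sum_counit_smul]
    rw [← apply_contractFst, this, ht.traceIntegral_self]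
  · rw [← contractFst_apply, eq_of_forall_dual (h p), LinearMap.rTensor_tmul, lid_tmul]

lemma traceIntegral_antipode (x : H) : traceIntegral R H (antipode R x) =
    traceIntegral R H (contractSnd (traceIntegral R H) t * x) := by
  rw [← one_mul (antipode R x), ← ht.contractFst_traceIntegral_self,
    ← ht.contractFst_comp_mulRight, apply_contractFst, LinearMap.comp_apply,
    LinearMap.mulRight_apply]

/-- Radford's formula for `S⁴`, in the unimodular case. -/
theorem semiconjBy_antipodeSq_antipodeSq (x : H) :
    SemiconjBy (contractSnd (traceIntegral R H) t) x (antipodeSq R H (antipodeSq R H x)) := by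
  refine ht.eq_of_forall_traceIntegral_mul_eq fun y => ?_
  symm
  calc
    _ = traceIntegral R H (contractSnd (traceIntegral R H) t * (y * antipodeSq R H x)) := by
      rw [mul_assoc, ← traceIntegral_mul, mul_assoc]
    _ = traceIntegral R H (antipodeSq R H (antipode R x) * antipode R y) := by
      rw [← ht.traceIntegral_antipode, antipode_mul_antidistrib]; rfl
    _ = traceIntegral R H (antipode R (x * y)) := by
      rw [← traceIntegral_mul, antipode_mul_antidistrib]
    _ = _ := by rw [ht.traceIntegral_antipode, mul_assoc]

end IsHaarIntegral

end TraceIntegral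

/-! ### Powers of the square of the antipode -/

section FiniteOrder

lemma semiconjBy_pow_iterate {M : Type*} [Monoid M] {v : M} {f : M → M}
    (h : ∀ y, SemiconjBy v y (f y)) (n : ℕ) (y : M) : SemiconjBy (v ^ n) y (f^[n] y) := by
  induction n with
  | zero => simp
  | succ n ih => rw [pow_succ', Function.iterate_succ_apply']; exact (h _).mul_left ih

lemma exists_pow_eq_one_of_isGroupLikeElem {k H : Type*} [Field k] [Ring H] [HopfAlgebra k H]
    [FiniteDimensional k H] {g : H} (hg : IsGroupLikeElem k g) : ∃ n : ℕ, 0 < n ∧ g ^ n = 1 := by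
  have : Finite (GroupLike k H) := (linearIndep_groupLikeVal (R := k) (A := H)).finite
  let u : GroupLike k H := ⟨g, hg⟩
  exact ⟨orderOf u, orderOf_pos u, congr(GroupLike.val $(pow_orderOf_eq_one u))⟩

theorem exists_antipodeSq_iterate_eq {k H : Type*} [Field k] [Ring H] [HopfAlgebra k H]
    [FiniteDimensional k H] {t : H} (ht : IsHaarIntegral k t) :
    ∃ m : ℕ, 0 < m ∧ ∀ x, (antipodeSq k H)^[m] x = x := by
  obtain ⟨n, hn, hgn⟩ :=
    exists_pow_eq_one_of_isGroupLikeElem ht.isGroupLikeElem_contractSnd_traceIntegral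
  refine ⟨2 * n, by lia, fun x => ?_⟩
  have h := semiconjBy_pow_iterate (f := (antipodeSq k H)^[2])
    ht.semiconjBy_antipodeSq_antipodeSq n x
  rw [hgn, ← Function.iterate_mul, SemiconjBy, one_mul, mul_one] at h
  exact h.symm

variable {R H : Type*} [CommSemiring R] [Semiring H] [HopfAlgebra R H]

variable (R) in
/-- The element `S(t₂) t₁`. For a Haar integral `t`, it implements `S²`. -/
noncomputable def twist (t : H) : H :=
  LinearMap.mul' R H (map (antipode R) .id (TensorProduct.comm R H H (comul t)))

lemma twist_eq_sum {ι : Type*} {t : H} (r : Repr R t ι) :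
    twist R t = ∑ i ∈ r.index, antipode R (r.right i) * r.left i := by
  simp [twist, ← r.eq]

namespace IsHaarIntegral

variable {t : H} (ht : IsHaarIntegral R t)
include ht

lemma semiconjBy_twist (y : H) : SemiconjBy (twist R t) y (antipodeSq R H y) := by
  have h := congr(LinearMap.mul' R H (map (antipode R) .id
    (TensorProduct.comm R H H $(ht.comul_mul_tmul_one y))))
  rw [SemiconjBy, twist_eq_sum (ℛ R t)]
  rw [← (ℛ R t).eq] at h
  simpa [Finset.sum_mul, Finset.mul_sum, antipode_mul_antidistrib, mul_assoc,
    antipodeSq_apply] using h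

lemma apply_twist {M : Type*} [AddCommMonoid M] [Module R M] {φ : H →ₗ[R] M}
    (hφ : ∀ x y, φ (x * y) = φ (y * x)) : φ (twist R t) = φ 1 := by
  simp only [← ht.sum_mul_antipode (ℛ R t), twist_eq_sum (ℛ R t), map_sum, hφ]

end IsHaarIntegral

end FiniteOrder

/-! ### Traces of elements of finite order -/

section FiniteOrderTrace

open Polynomial

lemma aeval_eq_zero_of_isPrimitiveRoot {k L : Type*} [Field k] [CharZero k] [Field L] [CharZero L]
    {m : ℕ} (hm : 0 < m) {ζ : k} {ξ : L} (hζ : IsPrimitiveRoot ζ m) (hξ : IsPrimitiveRoot ξ m)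
    {p : ℚ[X]} (hp : aeval ζ p = 0) : aeval ξ p = 0 := by
  obtain ⟨q, rfl⟩ := minpoly.dvd ℚ ζ hp
  rw [← cyclotomic_eq_minpoly_rat hζ hm, cyclotomic_eq_minpoly_rat hξ hm, map_mul, minpoly.aeval,
    zero_mul]

/-- Over `ℂ`, the sum is `∑ ‖pᵢ(ζ)‖²`; the general case reduces to this one because all primitive
`m`-th roots of unity have the same minimal polynomial over `ℚ`. -/
lemma sum_aeval_mul_aeval_pow_ne_zero {k ι : Type*} [Field k] [CharZero k] {m : ℕ} (hm : 0 < m)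
    {ζ : k} (hζ : IsPrimitiveRoot ζ m) (s : Finset ι) (p : ι → ℚ[X])
    (hp : ∃ i ∈ s, aeval ζ (p i) ≠ 0) :
    ∑ i ∈ s, aeval ζ (p i) * aeval (ζ ^ (m - 1)) (p i) ≠ 0 := by
  obtain ⟨ξ, hξ⟩ : ∃ ξ : ℂ, IsPrimitiveRoot ξ m := ⟨_, Complex.isPrimitiveRoot_exp m hm.ne'⟩
  have hξ_inv : ξ ^ (m - 1) = starRingEnd ℂ ξ := by
    rw [← Complex.inv_eq_conj (hξ.norm'_eq_one hm.ne')]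
    exact eq_inv_of_mul_eq_one_left (by rw [pow_sub_one_mul hm.ne', hξ.pow_eq_one])
  have hconj (q : ℚ[X]) : aeval (ξ ^ (m - 1)) q = starRingEnd ℂ (aeval ξ q) := by
    rw [hξ_inv]
    exact aeval_algHom_apply (RingHom.toRatAlgHom (starRingEnd ℂ)) ξ q
  intro h
  have hsum : ∑ i ∈ s, aeval ξ (p i) * starRingEnd ℂ (aeval ξ (p i)) = 0 := by
    have := aeval_eq_zero_of_isPrimitiveRoot hm hζ hξ
      (p := ∑ i ∈ s, p i * (p i).comp (X ^ (m - 1))) (by simpa [aeval_comp] using h)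
    simpa [aeval_comp, hconj] using this
  simp only [Complex.mul_conj, ← Complex.ofReal_sum, Complex.ofReal_eq_zero] at hsum
  obtain ⟨i, hi, hpi⟩ := hp
  have := (Finset.sum_eq_zero_iff_of_nonneg fun i _ => Complex.normSq_nonneg _).1 hsum i hi
  exact hpi (aeval_eq_zero_of_isPrimitiveRoot hm hξ hζ (Complex.normSq_eq_zero.1 this))

variable {k V : Type*} [Field k] [AddCommGroup V] [Module k V] [FiniteDimensional k V]
  {f : Module.End k V} {m : ℕ} {ζ : k}

lemma isInternal_eigenspace_of_pow_eq_one [IsAlgClosed k] [NeZero (m : k)]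
    (hζ : IsPrimitiveRoot ζ m) (hf : f ^ m = 1) :
    DirectSum.IsInternal fun l : Fin m => f.eigenspace (ζ ^ (l : ℕ)) := by
  have : NeZero m := .of_neZero_natCast k
  have hsep : (X ^ m - 1 : k[X]).Separable := (X_pow_sub_one_separable_iff).2 (NeZero.ne _)
  have hss : f.IsSemisimple := Module.End.isSemisimple_of_squarefree_aeval_eq_zero
    hsep.squarefree (by simp [hf])
  refine DirectSum.isInternal_submodule_of_iSupIndep_of_iSup_eq_top
    (f.eigenspaces_iSupIndep.comp fun a b h => Fin.ext (hζ.pow_inj a.2 b.2 h)) ?_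
  rw [eq_top_iff, ← hss.iSup_eigenspace_eq_top]
  refine iSup_le fun μ => ?_
  by_cases hμ : f.HasEigenvalue μ
  · obtain ⟨v, hv⟩ := hμ.exists_hasEigenvector
    have hμm : μ ^ m = 1 := by
      have := hv.pow_apply m
      rw [hf, Module.End.one_apply] at this
      exact smul_left_injective k hv.2 (by simp [← this])
    obtain ⟨l, hl, rfl⟩ := hζ.eq_pow_of_pow_eq_one hμm
    exact le_iSup (fun l : Fin m => f.eigenspace (ζ ^ (l : ℕ))) ⟨l, hl⟩
  · rw [Module.End.hasEigenvalue_iff, not_not] at hμ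
    exact hμ ▸ bot_le

lemma exists_trace_pow_eq_aeval [CharZero k] [IsAlgClosed k] (hm : 0 < m)
    (hζ : IsPrimitiveRoot ζ m) (hf : f ^ m = 1) :
    ∃ p : ℚ[X], ∀ j, LinearMap.trace k V (f ^ j) = aeval (ζ ^ j) p := by
  have : NeZero (m : k) := ⟨mod_cast hm.ne'⟩
  refine ⟨∑ l : Fin m, (Module.finrank k (f.eigenspace (ζ ^ (l : ℕ))) : ℚ[X]) * X ^ (l : ℕ),
    fun j => ?_⟩
  have hpow (l : Fin m) (v : V) (hv : v ∈ f.eigenspace (ζ ^ (l : ℕ))) :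
      (f ^ j) v = (ζ ^ (l : ℕ)) ^ j • v := by
    induction j with
    | zero => simp
    | succ j ih =>
      rw [pow_succ', Module.End.mul_apply, ih, map_smul, Module.End.mem_eigenspace_iff.1 hv,
        smul_smul, ← pow_succ]
  have hmaps (l : Fin m) : Set.MapsTo (f ^ j) (f.eigenspace (ζ ^ (l : ℕ)))
      (f.eigenspace (ζ ^ (l : ℕ))) := fun v hv => by
    rw [SetLike.mem_coe, hpow l v hv]
    exact Submodule.smul_mem _ _ hv
  rw [LinearMap.trace_eq_sum_trace_restrict (isInternal_eigenspace_of_pow_eq_one hζ hf) hmaps]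
  simp only [map_sum, map_mul, map_natCast, map_pow, aeval_X]
  refine Finset.sum_congr rfl fun l _ => ?_
  have : (f ^ j).restrict (hmaps l) = (ζ ^ (l : ℕ)) ^ j • LinearMap.id :=
    LinearMap.ext fun v => Subtype.ext (hpow l v v.2)
  rw [this, map_smul, LinearMap.trace_id, smul_eq_mul, mul_comm, pow_right_comm]

end FiniteOrderTrace

section Matrix

open Matrix

variable {k n : Type*} [Field k] [Fintype n] [DecidableEq n]

/-- The hypothesis makes the kernel of `v` stable under all matrices. -/
lemma isUnit_of_forall_exists_semiconjBy {v : Matrix n n k} (hv : v ≠ 0)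
    (h : ∀ X, ∃ Y, SemiconjBy v X Y) : IsUnit v := by
  rw [isUnit_iff_isUnit_det, isUnit_iff_ne_zero]
  intro hdet
  obtain ⟨w, hw, hvw⟩ := exists_mulVec_eq_zero_iff.2 hdet
  obtain ⟨j, hj : w j ≠ 0⟩ := Function.ne_iff.1 hw
  refine hv (Matrix.ext fun a b => ?_)
  obtain ⟨Y, hY⟩ := h (single b j 1)
  have hvb : v *ᵥ (single b j 1 *ᵥ w) = 0 := by
    rw [mulVec_mulVec, hY.eq, ← mulVec_mulVec, hvw, mulVec_zero]
  have hab := congrFun hvb a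
  rw [single_mulVec] at hab
  simpa [mulVec, dotProduct, Function.update_apply, hj] using hab

lemma exists_eq_smul_of_forall_commute_pow [IsAlgClosed k] {v : Matrix n n k} (hv : IsUnit v)
    {m : ℕ} (hm : 0 < m) (hcomm : ∀ X, Commute (v ^ m) X) :
    ∃ r : k, r ≠ 0 ∧ ∃ b : Matrix n n k, v = r • b ∧ b ^ m = 1 := by
  obtain ⟨s, hs⟩ := mem_range_scalar_of_commute_single fun _ _ _ => (hcomm _).symm
  obtain ⟨r, rfl⟩ := IsAlgClosed.exists_pow_nat_eq s hm
  rcases eq_or_ne r 0 with rfl | hr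
  · have h0 : IsUnit (0 : Matrix n n k) := by
      simpa [← hs, hm.ne'] using hv.pow m
    have := isUnit_zero_iff.1 h0
    exact ⟨1, one_ne_zero, v, (one_smul _ _).symm, by rw [← mul_one (v ^ m), ← this, mul_zero]⟩
  · refine ⟨r, hr, r⁻¹ • v, (smul_inv_smul₀ hr v).symm, ?_⟩
    rw [smul_pow, ← hs, scalar_apply, ← smul_one_eq_diagonal, smul_smul, inv_pow,
      inv_mul_cancel₀ (pow_ne_zero m hr), one_smul]

lemma exists_pow_eq_one_of_semiconjBy [IsAlgClosed k] {v : Matrix n n k}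
    (hv : v.trace ≠ 0) (h : ∀ X, ∃ Y, SemiconjBy v X Y) {m : ℕ} (hm : 0 < m)
    (hcomm : ∀ X, Commute (v ^ m) X) : ∃ b : Matrix n n k,
      b ^ m = 1 ∧ b.trace ≠ 0 ∧ ∀ X Y, SemiconjBy v X Y → Y = b * X * b ^ (m - 1) := by
  have hunit : IsUnit v :=
    isUnit_of_forall_exists_semiconjBy (by rintro rfl; exact hv (trace_zero n k)) h
  obtain ⟨r, hr, b, rfl, hb⟩ := exists_eq_smul_of_forall_commute_pow hunit hm hcomm
  refine ⟨b, hb, fun h => hv (by rw [trace_smul, h, smul_zero]), fun X Y hXY => ?_⟩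
  have hbX : b * X = Y * b := by
    have := hXY.eq
    rwa [smul_mul_assoc, mul_smul_comm, (smul_right_injective _ hr).eq_iff] at this
  rw [hbX, mul_assoc, mul_pow_sub_one hm.ne', hb, mul_one]

lemma trace_pi_mul_mul {R ι : Type*} [CommRing R] [Fintype ι] {n : ι → Type*}
    [∀ i, Fintype (n i)] {F : Module.End R (Π i, Matrix (n i) (n i) R)}
    {v w : Π i, Matrix (n i) (n i) R} (hF : ∀ X i, F X i = v i * X i * w i) :
    LinearMap.trace R _ F = ∑ i, (v i).trace * (w i).trace := by
  classical
  let b := Pi.basis fun i => stdBasis R (n i) (n i)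
  rw [LinearMap.trace_eq_matrix_trace R b, Matrix.trace, Fintype.sum_sigma]
  refine Finset.sum_congr rfl fun i _ => ?_
  rw [Fintype.sum_prod_type, Matrix.trace, Matrix.trace, Finset.sum_mul_sum]
  refine Finset.sum_congr rfl fun a _ => Finset.sum_congr rfl fun c _ => ?_
  have hrepr (X : Matrix (n i) (n i) R) : (stdBasis R (n i) (n i)).repr X (a, c) = X a c := by
    simp [stdBasis]
  rw [diag_apply, LinearMap.toMatrix_apply, Pi.basis_repr, hF, hrepr, Pi.basis_apply]
  simp [stdBasis_eq_single, mul_apply, single_apply, ite_and]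

theorem trace_pi_ne_zero [CharZero k] [IsAlgClosed k] {ι : Type*} [Finite ι] [Nonempty ι]
    {n : ι → Type*} [∀ i, Fintype (n i)] [∀ i, DecidableEq (n i)]
    {F : Module.End k (Π i, Matrix (n i) (n i) k)} {b : Π i, Matrix (n i) (n i) k} {m : ℕ}
    (hm : 0 < m) (hb : ∀ i, b i ^ m = 1) (htr : ∀ i, (b i).trace ≠ 0)
    (hF : ∀ X i, F X i = b i * X i * b i ^ (m - 1)) : LinearMap.trace k _ F ≠ 0 := by
  have := Fintype.ofFinite ι
  have : NeZero (m : k) := ⟨mod_cast hm.ne'⟩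
  obtain ⟨ζ, hζ⟩ := HasEnoughRootsOfUnity.exists_primitiveRoot k m
  have hp (i) := exists_trace_pow_eq_aeval hm hζ
    (f := toLin' (b i)) (by rw [← toLin'_pow, hb, toLin'_one]; rfl)
  simp only [← toLin'_pow, trace_toLin'_eq] at hp
  choose p hp using hp
  have hp1 (i) : (b i).trace = Polynomial.aeval ζ (p i) := by simpa using hp i 1
  simp only [trace_pi_mul_mul hF, hp1, hp]
  exact sum_aeval_mul_aeval_pow_ne_zero hm hζ _ p
    ⟨Classical.arbitrary ι, Finset.mem_univ _, hp1 _ ▸ htr _⟩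

end Matrix

/-! ### Nonvanishing of the trace of `S²` -/

section Nonvanishing

variable {k H : Type*} [Field k] [Ring H] [HopfAlgebra k H] [FiniteDimensional k H]

namespace IsHaarIntegral

variable {t : H} (ht : IsHaarIntegral k t)
include ht

lemma exists_commute_twist_pow : ∃ m : ℕ, 0 < m ∧ ∀ y, Commute (twist k t ^ m) y := by
  obtain ⟨m, hm, h⟩ := exists_antipodeSq_iterate_eq ht
  refine ⟨m, hm, fun y => ?_⟩
  simpa only [h, Commute] using semiconjBy_pow_iterate ht.semiconjBy_twist m y

lemma trace_antipodeSq_ne_zero_of_isAlgClosed [CharZero k] [IsAlgClosed k] :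
    LinearMap.trace k H (antipodeSq k H).toLinearMap ≠ 0 := by
  have : IsSemisimpleRing H := ht.isSeparabilityIdempotent.isSemisimpleModule H
  have : Nontrivial H := ht.nontrivial
  obtain ⟨n, d, hd, ⟨e⟩⟩ := IsSemisimpleRing.exists_algEquiv_pi_matrix_of_isAlgClosed k H
  have : Nonempty (Fin n) := by
    by_contra! h
    exact not_subsingleton H e.toEquiv.subsingleton
  obtain ⟨m, hm, hcomm⟩ := ht.exists_commute_twist_pow
  have hsurj (i) (X : Matrix (Fin (d i)) (Fin (d i)) k) : ∃ y, e y i = X :=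
    ⟨e.symm (Pi.single i X), by simp⟩
  have hsemi (y : H) (i) : SemiconjBy (e (twist k t) i) (e y i) (e (antipodeSq k H y) i) := by
    simpa using! congrFun congr(e $((ht.semiconjBy_twist y).eq)) i
  have htrace (i) : (e (twist k t) i).trace ≠ 0 := by
    have := ht.apply_twist (φ := Matrix.traceLinearMap (Fin (d i)) k k ∘ₗ LinearMap.proj i ∘ₗ
      e.toLinearMap) fun x y => by simpa using! Matrix.trace_mul_comm (e x i) (e y i)
    have : (e (twist k t) i).trace = d i := by simpa using this
    rw [this]
    exact Nat.cast_ne_zero.2 (hd i).out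
  have hblock (i) := exists_pow_eq_one_of_semiconjBy (htrace i)
    (fun X => (hsurj i X).elim fun y hy => ⟨_, hy ▸ hsemi y i⟩) hm
    (fun X => by
      obtain ⟨y, rfl⟩ := hsurj i X
      simpa using! congrFun congr(e $((hcomm y).eq)) i)
  choose b hb htr hconj using hblock
  rw [← LinearMap.trace_conj' _ e.toLinearEquiv]
  refine trace_pi_ne_zero hm hb htr fun X i => hconj i _ _ ?_
  simpa using hsemi (e.symm X) i

variable [CharZero k]

theorem trace_antipodeSq_ne_zero : LinearMap.trace k H (antipodeSq k H).toLinearMap ≠ 0 := by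
  let K := AlgebraicClosure k
  have h : (antipodeSq K (K ⊗[k] H)).toLinearMap = (antipodeSq k H).toLinearMap.baseChange K := by
    ext x
    simp [antipodeSq_apply, TensorProduct.antipode_def]
  have hK := (ht.baseChange K).trace_antipodeSq_ne_zero_of_isAlgClosed
  rw [h, LinearMap.trace_baseChange] at hK
  exact fun h0 => hK (by rw [h0, map_zero])

theorem antipodeSq_antipodeSq (x : H) : antipodeSq k H (antipodeSq k H x) = x := by
  have hg := ht.contractSnd_traceIntegral 1
  rw [contractSnd_one] at hg
  have hne : traceIntegral k H 1 ≠ 0 := traceIntegral_one (R := k) (H := H) ▸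
    ht.trace_antipodeSq_ne_zero
  have h := ht.semiconjBy_antipodeSq_antipodeSq x
  rw [← smul_right_injective H hne hg, SemiconjBy, one_mul, mul_one] at h
  exact h.symm

end IsHaarIntegral

end Nonvanishing

/-! ### The regular character of the dual algebra -/

section RegularCharacter

section Coalgebra

variable {R C : Type*} [CommRing R] [AddCommGroup C] [Module R C] [Coalgebra R C]
  [Module.Free R C] [Module.Finite R C]

variable (R C) in
/-- The character of the regular representation of the dual algebra `C*`, viewed as an element of
`C` through the identification of `C` with its double dual. -/
noncomputable def regularCharacter : C :=
  (Module.evalEquiv R C).symm (LinearMap.trace R C ∘ₗ contractFst)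

lemma apply_regularCharacter (p : Module.Dual R C) :
    p (regularCharacter R C) = LinearMap.trace R C (contractFst p) :=
  Module.apply_evalEquiv_symm_apply R C p _

lemma counit_regularCharacter :
    counit (R := R) (regularCharacter R C) = Module.finrank R C := by
  have h : contractFst (counit (R := R)) = (1 : Module.End R C) :=
    LinearMap.ext fun x => by rw [contractFst_eq_sum _ (ℛ R x), sum_counit_smul]; rfl
  rw [apply_regularCharacter, h, LinearMap.trace_one]

lemma contractFst_regularCharacter (p : Module.Dual R C) :
    contractFst p (regularCharacter R C) = contractSnd p (regularCharacter R C) := by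
  refine eq_of_forall_dual fun q : Module.Dual R C => ?_
  have h (p q : Module.Dual R C) : q (contractFst p (regularCharacter R C)) =
      LinearMap.trace R C (contractFst q * contractFst p) := by
    rw [← LinearMap.comp_apply, apply_regularCharacter]
    exact congr(LinearMap.trace R C $(LinearMap.ext fun x => (contractFst_contractFst q p x).symm))
  rw [h, LinearMap.trace_mul_comm, ← h, apply_contractFst]

lemma comm_comul_regularCharacter :
    TensorProduct.comm R C C (comul (regularCharacter R C)) = comul (regularCharacter R C) := by
  refine eq_of_forall_rTensor_dual fun p => (TensorProduct.lid R C).injective ?_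
  rw [← contractFst_apply, contractFst_regularCharacter, contractSnd_eq_sum p (ℛ R _)]
  simp [← (ℛ R (regularCharacter R C)).eq]

end Coalgebra

variable {R H : Type*} [CommRing R] [Ring H] [HopfAlgebra R H]

lemma twist_eq_counit_smul_one {x : H}
    (hx : TensorProduct.comm R H H (comul x) = comul x) : twist R x = counit (R := R) x • 1 := by
  rw [twist, hx]
  exact (mul_antipode_rTensor_comul_apply x).trans (Algebra.algebraMap_eq_smul_one _)

lemma trace_contractFst_comp_mulRight (p : Module.Dual R H) (x : H) :
    LinearMap.trace R H (contractFst (p ∘ₗ LinearMap.mulRight R x)) =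
      LinearMap.trace R H (contractFst p * LinearMap.mulRight R (twist R x)) := by
  have h : contractFst (p ∘ₗ LinearMap.mulRight R x) = ∑ i ∈ (ℛ R x).index,
      LinearMap.mulRight R (antipode R ((ℛ R x).right i)) *
        (contractFst p * LinearMap.mulRight R ((ℛ R x).left i)) :=
    LinearMap.ext fun y => by simp [contractFst_comp_mulRight p y (ℛ R x)]
  have htwist : LinearMap.mulRight R (twist R x) = ∑ i ∈ (ℛ R x).index,
      LinearMap.mulRight R ((ℛ R x).left i) *
        LinearMap.mulRight R (antipode R ((ℛ R x).right i)) :=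
    LinearMap.ext fun y => by simp [twist_eq_sum (ℛ R x), Finset.mul_sum, mul_assoc]
  simp only [h, htwist, Finset.mul_sum, map_sum, ← mul_assoc]
  refine Finset.sum_congr rfl fun i _ => ?_
  rw [mul_assoc, LinearMap.trace_mul_comm]

variable [Module.Free R H] [Module.Finite R H]

lemma regularCharacter_mul {x : H} (hx : TensorProduct.comm R H H (comul x) = comul x) :
    regularCharacter R H * x = counit (R := R) x • regularCharacter R H := by
  refine eq_of_forall_dual fun p : Module.Dual R H => ?_
  have h : p (regularCharacter R H * x) = (p ∘ₗ LinearMap.mulRight R x) (regularCharacter R H) :=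
    rfl
  have hmul (c : R) : LinearMap.mulRight R (c • (1 : H)) = c • 1 := by ext; simp
  rw [h, apply_regularCharacter, trace_contractFst_comp_mulRight, twist_eq_counit_smul_one hx, hmul,
    mul_smul_comm, mul_one, map_smul, map_smul, apply_regularCharacter]

lemma regularCharacter_mul_self : regularCharacter R H * regularCharacter R H =
    (Module.finrank R H : R) • regularCharacter R H := by
  rw [regularCharacter_mul (R := R) (comm_comul_regularCharacter (R := R) (C := H)),
    counit_regularCharacter]

namespace IsHaarIntegral

variable {t : H} (ht : IsHaarIntegral R t)
include ht

lemma contractFst_traceIntegral_eq_smulRight :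
    contractFst (traceIntegral R H) = (traceIntegral R H).smulRight 1 :=
  LinearMap.ext ht.contractFst_traceIntegral

lemma traceIntegral_regularCharacter_mul (x : H) :
    traceIntegral R H (regularCharacter R H * x) = traceIntegral R H (twist R x) := by
  have h : (traceIntegral R H).smulRight 1 * LinearMap.mulRight R (twist R x) =
      (traceIntegral R H ∘ₗ LinearMap.mulRight R (twist R x)).smulRight 1 := rfl
  calc
    _ = (traceIntegral R H ∘ₗ LinearMap.mulRight R x) (regularCharacter R H) := rfl
    _ = _ := by
      rw [apply_regularCharacter, trace_contractFst_comp_mulRight,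
        ht.contractFst_traceIntegral_eq_smulRight, h, LinearMap.trace_smulRight]
      simp

lemma traceIntegral_regularCharacter : traceIntegral R H (regularCharacter R H) =
    LinearMap.trace R H (antipodeSq R H).toLinearMap := by
  rw [apply_regularCharacter, ht.contractFst_traceIntegral_eq_smulRight, LinearMap.trace_smulRight,
    traceIntegral_one]

lemma antipode_contractFst_traceIntegral_comp_mulLeft (x y : H) :
    antipode R (contractFst (traceIntegral R H ∘ₗ LinearMap.mulLeft R x) y) =
      contractFst (traceIntegral R H ∘ₗ LinearMap.mulRight R y) x := by
  rw [LarsonRadford.contractFst_comp_mulRight _ x (ℛ R y), contractFst_eq_sum _ (ℛ R y)]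
  simp [ht.contractFst_traceIntegral]

lemma traceIntegral_mul_regularCharacter
    (hS : ∀ x : H, antipodeSq R H (antipodeSq R H x) = x) (x : H) :
    traceIntegral R H (x * regularCharacter R H) = traceIntegral R H (twist R x) := by
  have h : contractFst (traceIntegral R H ∘ₗ LinearMap.mulLeft R x) = ∑ i ∈ (ℛ R x).index,
      (traceIntegral R H ∘ₗ LinearMap.mulLeft R ((ℛ R x).left i)).smulRight
        (antipodeSq R H (antipode R ((ℛ R x).right i))) := LinearMap.ext fun y => by
    rw [← hS (contractFst _ y), antipodeSq_apply (contractFst _ y),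
      ht.antipode_contractFst_traceIntegral_comp_mulLeft, contractFst_eq_sum _ (ℛ R x)]
    simp [antipodeSq_apply]
  calc
    _ = (traceIntegral R H ∘ₗ LinearMap.mulLeft R x) (regularCharacter R H) := rfl
    _ = ∑ i ∈ (ℛ R x).index, traceIntegral R H
          ((ℛ R x).left i * antipodeSq R H (antipode R ((ℛ R x).right i))) := by
      rw [apply_regularCharacter, h, map_sum]
      simp only [LinearMap.trace_smulRight, LinearMap.comp_apply, LinearMap.mulLeft_apply]
    _ = _ := by
      rw [twist_eq_sum (ℛ R x), map_sum]
      exact Finset.sum_congr rfl fun i _ => by rw [traceIntegral_mul, hS]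

lemma antipodeSq_regularCharacter (hS : ∀ x : H, antipodeSq R H (antipodeSq R H x) = x) :
    antipodeSq R H (regularCharacter R H) = regularCharacter R H :=
  ht.eq_of_forall_traceIntegral_mul_eq fun x => by
    rw [← traceIntegral_mul, ht.traceIntegral_mul_regularCharacter hS,
      ht.traceIntegral_regularCharacter_mul]

end IsHaarIntegral

end RegularCharacter

/-! ### The square of the antipode is the identity -/

section Involution

lemma isIdempotentElem_half_smul_one_add {k A : Type*} [Field k] [NeZero (2 : k)] [Ring A]
    [Algebra k A] {σ : A} (hσ : σ * σ = 1) : IsIdempotentElem ((2⁻¹ : k) • (1 + σ)) := by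
  have h : (1 + σ) * (1 + σ) = (2 : k) • (1 + σ) := by
    simp only [mul_add, add_mul, hσ, one_mul, mul_one]; module
  rw [IsIdempotentElem, smul_mul_smul_comm, h, smul_smul, mul_assoc, inv_mul_cancel₀ two_ne_zero,
    mul_one]

section LinearAlgebra

variable {k V : Type*} [Field k] [AddCommGroup V] [Module k V] [FiniteDimensional k V]

lemma exists_trace_eq_natCast_of_isIdempotentElem {f : Module.End k V} (hf : IsIdempotentElem f) :
    ∃ a : ℕ, a ≤ Module.finrank k V ∧ LinearMap.trace k V f = a :=
  ⟨_, Submodule.finrank_le _, (LinearMap.IsIdempotentElem.isProj_range f hf).trace⟩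

variable [CharZero k] {σ : Module.End k V}

lemma exists_trace_mul_eq_intCast {P : Module.End k V} (hσ : σ * σ = 1) (hP : IsIdempotentElem P)
    (hc : Commute P σ) : ∃ a : ℤ, LinearMap.trace k V (P * σ) = a := by
  have hPE : IsIdempotentElem (P * (2⁻¹ : k) • (1 + σ)) :=
    hP.mul_of_commute (((Commute.one_right P).add_right hc).smul_right _)
      (isIdempotentElem_half_smul_one_add hσ)
  have h : P * σ = (2 : k) • (P * (2⁻¹ : k) • (1 + σ)) - P := by
    simp only [mul_smul_comm, mul_add, mul_one]; module
  obtain ⟨a, -, ha⟩ := exists_trace_eq_natCast_of_isIdempotentElem hPE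
  obtain ⟨b, -, hb⟩ := exists_trace_eq_natCast_of_isIdempotentElem hP
  exact ⟨2 * a - b, by rw [h, map_sub, map_smul, ha, hb]; push_cast; rfl⟩

lemma eq_one_or_eq_neg_one_of_trace_eq (hσ : σ * σ = 1) {a : ℤ}
    (h0 : LinearMap.trace k V σ ≠ 0) (h : LinearMap.trace k V σ = Module.finrank k V * a) :
    σ = 1 ∨ σ = -1 := by
  have hE := isIdempotentElem_half_smul_one_add (k := k) hσ
  obtain ⟨d, hdn, hd⟩ := exists_trace_eq_natCast_of_isIdempotentElem hE
  set E := (2⁻¹ : k) • (1 + σ) with hEσ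
  have hσE : σ = (2 : k) • E - 1 := by rw [hEσ]; module
  have htr : LinearMap.trace k V σ = 2 * d - Module.finrank k V := by
    rw [hσE, map_sub, map_smul, hd, LinearMap.trace_one, smul_eq_mul]
  rw [htr] at h h0
  have hle : (Module.finrank k V : ℤ) ≤ |2 * (d : ℤ) - Module.finrank k V| :=
    Int.le_of_dvd (abs_pos.2 (by exact_mod_cast h0))
      ((dvd_abs _ _).2 ⟨a, by exact_mod_cast h⟩)
  obtain rfl | rfl : d = Module.finrank k V ∨ d = 0 := by
    rcases le_abs.1 hle with h | h <;> lia
  · have h1E : 1 - E = 0 := (LinearMap.IsIdempotentElem.trace_eq_zero_iff hE.one_sub).1 (by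
      rw [map_sub, hd, LinearMap.trace_one, sub_self])
    exact .inl (by rw [hσE, ← sub_eq_zero.1 h1E]; module)
  · have hE0 : E = 0 := (LinearMap.IsIdempotentElem.trace_eq_zero_iff hE).1 (by simp [hd])
    exact .inr (by rw [hσE, hE0, smul_zero, zero_sub])

end LinearAlgebra

variable {k H : Type*} [Field k] [Ring H] [HopfAlgebra k H] [FiniteDimensional k H]

variable (k H) in
lemma isIdempotentElem_inv_smul_mulRight_regularCharacter (hn : (Module.finrank k H : k) ≠ 0) :
    IsIdempotentElem
      ((Module.finrank k H : k)⁻¹ • LinearMap.mulRight k (regularCharacter k H)) := by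
  have h : LinearMap.mulRight k (regularCharacter k H) * LinearMap.mulRight k (regularCharacter k H)
      = (Module.finrank k H : k) • LinearMap.mulRight k (regularCharacter k H) := by
    ext y; simp [mul_assoc, regularCharacter_mul_self]
  rw [IsIdempotentElem, smul_mul_smul_comm, h, smul_smul, mul_assoc, inv_mul_cancel₀ hn, mul_one]

namespace IsHaarIntegral

variable {t : H} (ht : IsHaarIntegral k t)
include ht

lemma trace_mulRight_regularCharacter_mul_antipodeSq :
    LinearMap.trace k H
        (LinearMap.mulRight k (regularCharacter k H) * (antipodeSq k H).toLinearMap) =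
      LinearMap.trace k H (antipodeSq k H).toLinearMap :=
  ht.traceIntegral_regularCharacter

variable [CharZero k]

lemma antipodeSq_eq_one_or_eq_neg_one : (antipodeSq k H).toLinearMap = (1 : Module.End k H) ∨
    (antipodeSq k H).toLinearMap = -(1 : Module.End k H) := by
  have hn : (Module.finrank k H : k) ≠ 0 := by
    have := ht.nontrivial
    exact Nat.cast_ne_zero.2 Module.finrank_pos.ne'
  have hσ : (antipodeSq k H).toLinearMap * (antipodeSq k H).toLinearMap = (1 : Module.End k H) :=
    LinearMap.ext ht.antipodeSq_antipodeSq
  have hc : Commute (LinearMap.mulRight k (regularCharacter k H)) (antipodeSq k H).toLinearMap := by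
    ext y; simp [ht.antipodeSq_regularCharacter ht.antipodeSq_antipodeSq]
  obtain ⟨a, ha⟩ := exists_trace_mul_eq_intCast hσ
    (isIdempotentElem_inv_smul_mulRight_regularCharacter k H hn) (hc.smul_left _)
  refine eq_one_or_eq_neg_one_of_trace_eq hσ ht.trace_antipodeSq_ne_zero (a := a) ?_
  rw [← ha, smul_mul_assoc, map_smul, ht.trace_mulRight_regularCharacter_mul_antipodeSq,
    smul_eq_mul, mul_inv_cancel_left₀ hn]

theorem antipodeSq_eq_id : (antipodeSq k H).toLinearMap = LinearMap.id := by
  refine ht.antipodeSq_eq_one_or_eq_neg_one.resolve_right fun h => ?_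
  have h1 := congr(counit (R := k) ($h 1))
  simp only [AlgHom.toLinearMap_apply, map_one, LinearMap.neg_apply, Module.End.one_apply,
    map_neg, Bialgebra.counit_one] at h1
  norm_num at h1

end IsHaarIntegral

end Involution

end LarsonRadford

theorem larson_radford_general {k H : Type*} [Field k] [CharZero k] [Ring H] [HopfAlgebra k H]
    [IsSemisimpleRing H] :
    (HopfAlgebra.antipode (R := k) (A := H)).comp (HopfAlgebra.antipode (R := k) (A := H)) =
      LinearMap.id := by
  obtain ⟨t, ht⟩ := LarsonRadford.exists_isHaarIntegral k H
  have : FiniteDimensional k H := ht.isSeparabilityIdempotent.moduleFinite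
  exact ht.antipodeSq_eq_id

/-- (Larson–Radford) The antipode of a finite-dimensional semisimple Hopf algebra over
`ℂ` is an involution: `S ∘ S` is the identity linear map of `H`. -/
theorem larson_radford (H : Type) [Ring H] [HopfAlgebra ℂ H]
    [FiniteDimensional ℂ H] [IsSemisimpleRing H] :
    (HopfAlgebra.antipode (R := ℂ) (A := H)).comp (HopfAlgebra.antipode (R := ℂ) (A := H)) =
      LinearMap.id := by
  exact larson_radford_general
end
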